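/- For all positive integers k, d, n there exists a positive integer m such that every group G generated by a set A of at most n elements, in which for every r = 1, …, m the ball B_A(r) has at most k·r^d elements, has a subgroup of index at most m that is nilpotent of class at most m. -/

import Mathlib

universe u

/-- The ball `B_A(r)` of radius `r` in a group with respect to a generating set `A`:
the set of elements expressible as products of at most `r` elements of `A ∪ A⁻¹`. -/
def wordBall {G : Type u} [Group G] (A : Set G) (r : ℕ) : Set G :=
  {g : G | ∃ l : List G, l.length ≤ r ∧ (∀ x ∈ l, x ∈ A ∨ x⁻¹ ∈ A) ∧ l.prod = g}

namespace Gro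
open scoped Pointwise
universe v

/-- Polynomial growth of degree at most `d`. -/
def PG (G : Type u) [Group G] (d : ℕ) : Prop :=
  ∀ S : Set G, S.Finite → ∃ C : ℕ, ∀ r : ℕ, (S ^ r).ncard ≤ C * (r + 1) ^ d

lemma exp_beats_poly (C d : ℕ) (b : ℝ) (hb : 1 < b) :
    ∃ N : ℕ, ∀ n ≥ N, (C : ℝ) * ((n : ℝ) + 1) ^ d < b ^ n := by
  have h := tendsto_pow_const_div_const_pow_of_one_lt d hb
  have h2 := (h.comp (Filter.tendsto_add_atTop_nat 1)).const_mul ((C : ℝ) * b)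
  rw [mul_zero] at h2
  have h3 := h2.eventually (gt_mem_nhds (zero_lt_one))
  obtain ⟨N, hN⟩ := Filter.eventually_atTop.1 h3
  refine ⟨N, fun n hn => ?_⟩
  have := hN n hn
  simp only [Function.comp] at this
  have hb0 : 0 < b := by linarith
  rw [pow_succ] at this
  push_cast at this
  have e : (C : ℝ) * b * (((n : ℝ) + 1) ^ d / (b ^ n * b)) = C * ((n : ℝ) + 1) ^ d / b ^ n := by
    field_simp
  rw [e, div_lt_one (by positivity)] at this
  exact this

section
variable {G : Type u} [Group G] {H : Type v} [Group H]

lemma fpow {S : Set G} (hS : S.Finite) (n : ℕ) : (S ^ n).Finite := by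
  induction n with
  | zero => rw [pow_zero]; exact Set.finite_one
  | succ n ih => rw [pow_succ]; exact ih.mul hS

lemma PG.of_injective {d : ℕ} (h : PG G d) (f : H →* G) (hf : Function.Injective f) : PG H d := by
  intro S hS
  obtain ⟨C, hC⟩ := h (f '' S) (hS.image f)
  refine ⟨C, fun r => ?_⟩
  rw [← Set.ncard_image_of_injective _ hf, Set.image_pow]
  exact hC r

lemma PG.subgroup {d : ℕ} (h : PG G d) (K : Subgroup G) : PG K d :=
  h.of_injective K.subtype K.subtype_injective

lemma subset_pow_of_closure {A : Set G} (hinv : A⁻¹ = A)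
    (hA : Subgroup.closure A = ⊤) (x : G) : ∃ n : ℕ, x ∈ A ^ n := by
  have hx : x ∈ Subgroup.closure A := by rw [hA]; trivial
  induction hx using Subgroup.closure_induction with
  | mem x hx => exact ⟨1, by simpa using hx⟩
  | one => exact ⟨0, by simp⟩
  | mul x y _ _ hx hy =>
    obtain ⟨n, hn⟩ := hx
    obtain ⟨m, hm⟩ := hy
    exact ⟨n + m, by rw [pow_add]; exact Set.mul_mem_mul hn hm⟩
  | inv x _ hx =>
    obtain ⟨n, hn⟩ := hx
    refine ⟨n, ?_⟩
    rw [← hinv, inv_pow]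
    simpa using hn

lemma finite_subset_pow {A : Set G} (h1 : 1 ∈ A) (hinv : A⁻¹ = A)
    (hA : Subgroup.closure A = ⊤) (S : Set G) (hS : S.Finite) : ∃ n : ℕ, S ⊆ A ^ n := by
  induction S, hS using Set.Finite.induction_on with
  | empty => exact ⟨0, by simp⟩
  | insert _ _ ih =>
    rename_i a s _ _
    obtain ⟨n, hn⟩ := ih
    obtain ⟨m, hm⟩ := subset_pow_of_closure hinv hA a
    refine ⟨max n m, Set.insert_subset ?_ ?_⟩
    · exact Set.pow_subset_pow_right h1 (le_max_right _ _) hm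
    · exact hn.trans (Set.pow_subset_pow_right h1 (le_max_left _ _))

lemma PG.of_generating {A : Set G} {d C : ℕ} (hfin : A.Finite) (h1 : 1 ∈ A) (hinv : A⁻¹ = A)
    (hA : Subgroup.closure A = ⊤) (h : ∀ r, (A ^ r).ncard ≤ C * (r + 1) ^ d) : PG G d := by
  intro S hS
  obtain ⟨n, hn⟩ := finite_subset_pow h1 hinv hA S hS
  refine ⟨C * (n + 1) ^ d, fun r => ?_⟩
  calc (S ^ r).ncard ≤ (A ^ (n * r)).ncard := by
        apply Set.ncard_le_ncard _ (fpow hfin _)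
        rw [pow_mul]
        exact Set.pow_subset_pow_left hn
    _ ≤ C * (n * r + 1) ^ d := h _
    _ ≤ C * ((n + 1) * (r + 1)) ^ d := by gcongr; nlinarith
    _ = _ := by rw [mul_pow]; ring

/-- Polynomial growth: no free semigroups (quantified). -/
lemma PG.semigroup {d : ℕ} (h : PG G d) (x y : G) :
    ∃ j : ℕ, ∃ a ∈ ({x, y} : Set G) ^ j, ∃ b ∈ ({x, y} : Set G) ^ j, a * x = b * y := by
  by_contra hcon
  push Not at hcon
  have hfin : ({x, y} : Set G).Finite := by simp
  have hcard : ∀ j : ℕ, 2 ^ j ≤ (({x, y} : Set G) ^ j).ncard := by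
    intro j
    induction j with
    | zero => rw [pow_zero, pow_zero, ← Set.singleton_one, Set.ncard_singleton]
    | succ j ih =>
      have e : ({x, y} : Set G) ^ (j + 1)
          = (fun a => a * x) '' (({x, y} : Set G) ^ j) ∪ (fun a => a * y) '' (({x, y} : Set G) ^ j) := by
        rw [pow_succ]
        ext z
        simp only [Set.mem_mul, Set.mem_union, Set.mem_image, Set.mem_insert_iff,
          Set.mem_singleton_iff]
        constructor
        · rintro ⟨a, ha, b, rfl | rfl, rfl⟩
          · exact Or.inl ⟨a, ha, rfl⟩
          · exact Or.inr ⟨a, ha, rfl⟩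
        · rintro (⟨a, ha, rfl⟩ | ⟨a, ha, rfl⟩)
          · exact ⟨a, ha, x, Or.inl rfl, rfl⟩
          · exact ⟨a, ha, y, Or.inr rfl, rfl⟩
      rw [e, Set.ncard_union_eq _ ((fpow hfin j).image _) ((fpow hfin j).image _),
        Set.ncard_image_of_injective _ (mul_left_injective x),
        Set.ncard_image_of_injective _ (mul_left_injective y), pow_succ]
      · omega
      · rw [Set.disjoint_left]
        rintro _ ⟨a, ha, rfl⟩ ⟨b, hb, hab⟩
        exact hcon j a ha b hb hab.symm
  obtain ⟨C, hC⟩ := h _ hfin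
  obtain ⟨N, hN⟩ := exp_beats_poly C d 2 (by norm_num)
  have h1 := hN N le_rfl
  have h2 : (2 : ℝ) ^ N ≤ C * (N + 1) ^ d := by exact_mod_cast (hcard N).trans (hC N)
  linarith

lemma semigroup_mem (t e : G) (j : ℕ) (a : G) (ha : a ∈ ({e * t, t} : Set G) ^ j) :
    a * (t ^ j)⁻¹ ∈ Subgroup.closure ((fun i : ℕ => t ^ i * e * (t ^ i)⁻¹) '' {i | i < j}) := by
  induction j generalizing a with
  | zero => simp at ha; simp [ha]
  | succ j ih =>
    rw [pow_succ] at ha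
    obtain ⟨b, hb, c, hc, rfl⟩ := Set.mem_mul.1 ha
    have hb' := Subgroup.closure_mono (Set.image_mono (f := fun i : ℕ => t ^ i * e * (t ^ i)⁻¹)
      (show {i | i < j} ⊆ {i | i < j + 1} from fun i (hi : i < j) => Nat.lt_succ_of_lt hi)) (ih b hb)
    rcases hc with rfl | rfl
    · have : b * (e * t) * (t ^ (j + 1))⁻¹ = (b * (t ^ j)⁻¹) * (t ^ j * e * (t ^ j)⁻¹) := by
        rw [pow_succ]; group
      rw [this]
      exact mul_mem hb' (Subgroup.subset_closure ⟨j, Nat.lt_succ_self j, rfl⟩)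
    · have : b * c * (c ^ (j + 1))⁻¹ = (b * (c ^ j)⁻¹) := by
        rw [pow_succ]; group
      rw [this]
      exact hb'

lemma PG.conj_mem {d : ℕ} (h : PG G d) (t e : G) :
    ∃ j : ℕ, t ^ j * e * (t ^ j)⁻¹ ∈
      Subgroup.closure ((fun i : ℕ => t ^ i * e * (t ^ i)⁻¹) '' {i | i < j}) := by
  obtain ⟨j, a, ha, b, hb, hab⟩ := h.semigroup (e * t) t
  refine ⟨j, ?_⟩
  have h1 := semigroup_mem t e j a ha
  have h2 := semigroup_mem t e j b hb
  have : t ^ j * e * (t ^ j)⁻¹ = (a * (t ^ j)⁻¹)⁻¹ * (b * (t ^ j)⁻¹) := by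
    have : a * e = b := by
      rw [← mul_assoc] at hab; exact mul_right_cancel hab
    rw [← this]; group
  rw [this]
  exact mul_mem (inv_mem h1) h2

lemma PG.conj_mem_all {d : ℕ} (h : PG G d) (t e : G) :
    ∃ j : ℕ, ∀ l : ℕ, t ^ l * e * (t ^ l)⁻¹ ∈
      Subgroup.closure ((fun i : ℕ => t ^ i * e * (t ^ i)⁻¹) '' {i | i < j}) := by
  obtain ⟨j, hj⟩ := h.conj_mem t e
  set K := Subgroup.closure ((fun i : ℕ => t ^ i * e * (t ^ i)⁻¹) '' {i | i < j}) with hK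
  refine ⟨j, ?_⟩
  have hstab : ∀ x ∈ K, t * x * t⁻¹ ∈ K := by
    intro x hx
    have : K ≤ K.comap (MulAut.conj t).toMonoidHom := by
      rw [hK, Subgroup.closure_le, ← hK]
      rintro _ ⟨i, hi, rfl⟩
      simp only [Subgroup.coe_comap, Set.mem_preimage, MulEquiv.toMonoidHom_eq_coe,
        MonoidHom.coe_coe, MulAut.conj_apply, SetLike.mem_coe]
      have e1 : t * (t ^ i * e * (t ^ i)⁻¹) * t⁻¹ = t ^ (i + 1) * e * (t ^ (i + 1))⁻¹ := by
        rw [pow_succ']; group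
      rw [e1]
      rcases Nat.lt_or_ge (i + 1) j with h' | h'
      · exact Subgroup.subset_closure ⟨i + 1, h', rfl⟩
      · have : i + 1 = j := le_antisymm hi h'
        rw [this]; exact hj
    simpa using this hx
  intro l
  induction l with
  | zero =>
    rcases Nat.eq_zero_or_pos j with h0 | h0
    · subst h0; exact hj
    · exact Subgroup.subset_closure ⟨0, h0, rfl⟩
  | succ l ih =>
    have := hstab _ ih
    have e1 : t * (t ^ l * e * (t ^ l)⁻¹) * t⁻¹ = t ^ (l + 1) * e * (t ^ (l + 1))⁻¹ := by
      rw [pow_succ']; group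
    rwa [e1] at this

/-- The kernel of a surjection onto `ℤ` of a f.g. group of polynomial growth is f.g. -/
lemma PG.ker_fg {d : ℕ} (h : PG G d) [hG : Group.FG G] (φ : G →* Multiplicative ℤ)
    (t : G) (ht : φ t = Multiplicative.ofAdd 1) : φ.ker.FG := by
  obtain ⟨X, hX⟩ := hG.out
  have hphi : ∀ (n : ℤ), φ (t ^ n) = Multiplicative.ofAdd n := by
    intro n; rw [map_zpow, ht, ← ofAdd_zsmul]; simp
  let e : G → G := fun x => x * (t ^ (Multiplicative.toAdd (φ x)))⁻¹
  have he : ∀ x, e x ∈ φ.ker := by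
    intro x; rw [MonoidHom.mem_ker, map_mul, map_inv, hphi]; simp
  choose j1 hj1 using fun x => h.conj_mem_all t (e x)
  choose j2 hj2 using fun x => h.conj_mem_all t⁻¹ (e x)
  let Y : Set G := ⋃ x ∈ X, ((fun i : ℕ => t ^ i * e x * (t ^ i)⁻¹) '' {i | i < j1 x}
      ∪ (fun i : ℕ => t⁻¹ ^ i * e x * (t⁻¹ ^ i)⁻¹) '' {i | i < j2 x})
  have hYfin : Y.Finite := by
    apply Set.Finite.biUnion X.finite_toSet
    intro x _
    exact ((Set.finite_lt_nat _).image _).union ((Set.finite_lt_nat _).image _)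
  set M := Subgroup.closure Y with hM
  have hMle : M ≤ φ.ker := by
    rw [hM, Subgroup.closure_le]
    intro y hy
    simp only [Y, Set.mem_iUnion] at hy
    obtain ⟨x, _, hy⟩ := hy
    rcases hy with ⟨i, _, rfl⟩ | ⟨i, _, rfl⟩
    · exact (MonoidHom.normal_ker φ).conj_mem _ (he x) _
    · exact (MonoidHom.normal_ker φ).conj_mem _ (he x) _
  have hMconj : ∀ x ∈ X, ∀ n : ℤ, t ^ n * e x * (t ^ n)⁻¹ ∈ M := by
    intro x hx n
    rcases Int.eq_nat_or_neg n with ⟨l, rfl | rfl⟩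
    · rw [zpow_natCast]
      refine Subgroup.closure_mono ?_ (hj1 x l)
      exact Set.subset_union_left.trans (Set.subset_biUnion_of_mem (u := fun x =>
        ((fun i : ℕ => t ^ i * e x * (t ^ i)⁻¹) '' {i | i < j1 x}
      ∪ (fun i : ℕ => t⁻¹ ^ i * e x * (t⁻¹ ^ i)⁻¹) '' {i | i < j2 x})) (by exact hx))
    · rw [zpow_neg, zpow_natCast, ← inv_pow]
      refine Subgroup.closure_mono ?_ (hj2 x l)
      exact Set.subset_union_right.trans (Set.subset_biUnion_of_mem (u := fun x =>
        ((fun i : ℕ => t ^ i * e x * (t ^ i)⁻¹) '' {i | i < j1 x}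
      ∪ (fun i : ℕ => t⁻¹ ^ i * e x * (t⁻¹ ^ i)⁻¹) '' {i | i < j2 x})) (by exact hx))
  -- a bigger generating set closed under conjugation by t
  set M' := Subgroup.closure {y | ∃ x ∈ X, ∃ n : ℤ, y = t ^ n * e x * (t ^ n)⁻¹} with hM'
  have hM'le : M' ≤ M := by
    rw [hM', Subgroup.closure_le]
    rintro _ ⟨x, hx, n, rfl⟩
    exact hMconj x hx n
  have hM't : ∀ (n : ℤ), ∀ y ∈ M', t ^ n * y * (t ^ n)⁻¹ ∈ M' := by
    intro n y hy
    have : M' ≤ M'.comap (MulAut.conj (t ^ n)).toMonoidHom := by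
      rw [hM', Subgroup.closure_le, ← hM']
      rintro _ ⟨x, hx, m, rfl⟩
      simp only [Subgroup.coe_comap, Set.mem_preimage, MulEquiv.toMonoidHom_eq_coe,
        MonoidHom.coe_coe, MulAut.conj_apply, SetLike.mem_coe]
      refine Subgroup.subset_closure ⟨x, hx, n + m, ?_⟩
      rw [zpow_add]; group
    exact this hy
  have hall : ∀ g : G, ∃ m ∈ M', ∃ n : ℤ, g = m * t ^ n := by
    intro g
    have hg : g ∈ Subgroup.closure (X : Set G) := by rw [hX]; trivial
    induction hg using Subgroup.closure_induction with
    | mem x hx =>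
      refine ⟨e x, Subgroup.subset_closure ⟨x, hx, 0, by simp⟩, Multiplicative.toAdd (φ x), ?_⟩
      simp [e]
    | one => exact ⟨1, one_mem _, 0, by simp⟩
    | mul x y _ _ hx hy =>
      obtain ⟨m, hm, n, rfl⟩ := hx
      obtain ⟨m', hm', n', rfl⟩ := hy
      refine ⟨m * (t ^ n * m' * (t ^ n)⁻¹), mul_mem hm (hM't n _ hm'), n + n', ?_⟩
      rw [zpow_add]; group
    | inv x _ hx =>
      obtain ⟨m, hm, n, rfl⟩ := hx
      refine ⟨t ^ (-n) * m⁻¹ * (t ^ (-n))⁻¹, hM't _ _ (inv_mem hm), -n, ?_⟩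
      group
  have : φ.ker = M := by
    apply le_antisymm _ hMle
    intro g hg
    obtain ⟨m, hm, n, rfl⟩ := hall g
    have h1 : φ m = 1 := hMle (hM'le hm)
    rw [MonoidHom.mem_ker, map_mul, h1, hphi, one_mul] at hg
    have : n = 0 := by simpa using hg
    subst this
    simpa using hM'le hm
  rw [this]
  exact ⟨hYfin.toFinset, by simp [hM]⟩

lemma PG.ker_growth {d : ℕ} (h : PG G (d + 1)) (φ : G →* Multiplicative ℤ)
    (t : G) (ht : φ t = Multiplicative.ofAdd 1) : PG φ.ker d := by
  intro S hS
  let S' : Set G := (φ.ker.subtype '' S) ∪ {1, t}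
  have hS' : S'.Finite := (hS.image _).union (by simp)
  obtain ⟨C, hC⟩ := h S' hS'
  refine ⟨C * 2 ^ (d + 1), fun r => ?_⟩
  have key : (S ^ r).ncard * (r + 1) ≤ (S' ^ (2 * r)).ncard := by
    have e : (S ^ r).ncard * (r + 1) = ((S ^ r) ×ˢ (Set.Iio (r + 1) : Set ℕ)).ncard := by
      rw [Set.ncard_prod]; congr 1
      rw [← Finset.coe_Iio, Set.ncard_coe_finset]; simp
    rw [e]
    refine Set.ncard_le_ncard_of_injOn (fun p => (p.1 : G) * t ^ p.2) ?_ ?_ (fpow hS' _)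
    · rintro ⟨x, i⟩ ⟨hx, hi⟩
      rw [two_mul, pow_add]
      refine Set.mul_mem_mul ?_ ?_
      · have : (x : G) ∈ (φ.ker.subtype '' S) ^ r := by
          rw [← Set.image_pow]; exact ⟨x, hx, rfl⟩
        exact Set.pow_subset_pow_left Set.subset_union_left this
      · have h1 : (1 : G) ∈ S' := by simp [S']
        have h2 : t ∈ S' := by simp [S']
        exact Set.pow_subset_pow_right h1 (Nat.lt_succ_iff.1 hi) (Set.pow_mem_pow h2)
    · rintro ⟨x, i⟩ _ ⟨y, j⟩ _ hxy
      simp only at hxy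
      have := congrArg φ hxy
      rw [map_mul, map_mul, x.2, y.2, map_pow, map_pow, ht, one_mul, one_mul, ← ofAdd_nsmul,
        ← ofAdd_nsmul] at this
      have hij : i = j := by simpa using this
      subst hij
      have := mul_right_cancel hxy
      simp [Subtype.ext this]
  have h3 : (S ^ r).ncard * (r + 1) ≤ C * 2 ^ (d + 1) * (r + 1) ^ d * (r + 1) := by
    calc _ ≤ C * (2 * r + 1) ^ (d + 1) := key.trans (hC _)
      _ ≤ C * (2 * (r + 1)) ^ (d + 1) := by gcongr; omega
      _ = _ := by rw [mul_pow]; ring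
  exact Nat.le_of_mul_le_mul_right h3 (Nat.succ_pos r)

end
end Gro

namespace Gro
open scoped Pointwise
universe v

section
/-- commutator -/
def cm {G : Type u} [Group G] (x y : G) : G := x * y * x⁻¹ * y⁻¹

variable {G : Type u} [Group G] {W : Type v} [NormedAddCommGroup W] [NormedSpace ℂ W]
  (ρ : G →* (W →L[ℂ] W))

lemma rho_norm_le (hρ : ∀ g v, ‖ρ g v‖ = ‖v‖) (g : G) : ‖ρ g‖ ≤ 1 :=
  ContinuousLinearMap.opNorm_le_bound _ zero_le_one (fun v => by rw [hρ, one_mul])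

lemma rho_mul_norm (hρ : ∀ g v, ‖ρ g v‖ = ‖v‖) (g : G) (a : W →L[ℂ] W) : ‖ρ g * a‖ ≤ ‖a‖ :=
  (norm_mul_le _ _).trans (mul_le_of_le_one_left (norm_nonneg _) (rho_norm_le ρ hρ g))

lemma mul_rho_norm (hρ : ∀ g v, ‖ρ g v‖ = ‖v‖) (g : G) (a : W →L[ℂ] W) : ‖a * ρ g‖ ≤ ‖a‖ :=
  (norm_mul_le _ _).trans (mul_le_of_le_one_right (norm_nonneg _) (rho_norm_le ρ hρ g))

lemma comm_norm (hρ : ∀ g v, ‖ρ g v‖ = ‖v‖) (x y : G) : ‖ρ (cm x y) - 1‖ ≤ 2 * ‖ρ x - 1‖ * ‖ρ y - 1‖ := by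
  have e : ρ (cm x y) - 1 = ((ρ x - 1) * (ρ y - 1) - (ρ y - 1) * (ρ x - 1)) * ρ (x⁻¹ * y⁻¹) := by
    have h1 : ρ y * ρ x * ρ (x⁻¹ * y⁻¹) = 1 := by
      rw [← map_mul, ← map_mul]; simp [mul_assoc]
    have h2 : ρ (cm x y) = ρ x * ρ y * ρ (x⁻¹ * y⁻¹) := by
      rw [← map_mul, ← map_mul, cm]; simp [mul_assoc]
    have h3 : ∀ a b c : W →L[ℂ] W, a * b * c - b * a * c
        = ((a - 1) * (b - 1) - (b - 1) * (a - 1)) * c := by intros; noncomm_ring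
    rw [h2, ← h3, h1]
  rw [e]
  refine (mul_rho_norm ρ hρ _ _).trans ((norm_sub_le _ _).trans ?_)
  have := norm_mul_le (ρ x - 1) (ρ y - 1)
  have := norm_mul_le (ρ y - 1) (ρ x - 1)
  nlinarith

lemma rho_mul_sub (hρ : ∀ g v, ‖ρ g v‖ = ‖v‖) (x y : G) : ‖ρ (x * y) - 1‖ ≤ ‖ρ x - 1‖ + ‖ρ y - 1‖ := by
  have e : ρ (x * y) - 1 = ρ x * (ρ y - 1) + (ρ x - 1) := by rw [map_mul]; noncomm_ring
  rw [e]
  have := norm_add_le (ρ x * (ρ y - 1)) (ρ x - 1)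
  have := rho_mul_norm ρ hρ x (ρ y - 1)
  linarith

lemma rho_pow_sub (hρ : ∀ g v, ‖ρ g v‖ = ‖v‖) (x : G) (n : ℕ) : ‖ρ (x ^ n) - 1‖ ≤ n * ‖ρ x - 1‖ := by
  induction n with
  | zero => simp
  | succ n ih =>
    rw [pow_succ]
    have := rho_mul_sub ρ hρ (x ^ n) x
    push_cast; linarith

lemma rho_pow_lower (hρ : ∀ g v, ‖ρ g v‖ = ‖v‖) (x : G) (m : ℕ) (hm : m * ‖ρ x - 1‖ ≤ 1 / 2) (n : ℕ) (hn : 1 ≤ n)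
    (hnm : n ≤ m) : ‖ρ x - 1‖ / 2 ≤ ‖ρ (x ^ n) - 1‖ := by
  set δ := ‖ρ x - 1‖ with hδ
  have hδ0 : 0 ≤ δ := norm_nonneg _
  have key : ∀ n : ℕ, n ≤ m → ‖ρ (x ^ n) - 1 - n • (ρ x - 1)‖ ≤ n * (δ / 2) := by
    intro n
    induction n with
    | zero => simp
    | succ n ih =>
      intro h
      have e : ρ (x ^ (n + 1)) - 1 - (n + 1) • (ρ x - 1)
          = (ρ (x ^ n) - 1 - n • (ρ x - 1)) + (ρ (x ^ n) - 1) * (ρ x - 1) := by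
        rw [pow_succ, map_mul, add_smul]; noncomm_ring
      rw [e]
      have h1 := norm_add_le (ρ (x ^ n) - 1 - n • (ρ x - 1)) ((ρ (x ^ n) - 1) * (ρ x - 1))
      have h2 := norm_mul_le (ρ (x ^ n) - 1) (ρ x - 1)
      have h3 := rho_pow_sub ρ hρ x n
      have h4 := ih (by omega)
      have h5 : (n : ℝ) * δ ≤ 1 / 2 := by
        refine le_trans ?_ hm
        gcongr; omega
      have h6 : ‖ρ (x ^ n) - 1‖ * ‖ρ x - 1‖ ≤ 1 / 2 * δ := by
        gcongr; linarith
      push_cast; linarith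
  have h1 := key n hnm
  have h2 : ‖n • (ρ x - 1)‖ = n * δ := by
    rw [← Nat.cast_smul_eq_nsmul ℝ, norm_smul]; simp [hδ]
  have h3 := norm_sub_norm_le (n • (ρ x - 1)) (ρ (x ^ n) - 1)
  rw [norm_sub_rev (n • (ρ x - 1))] at h3
  have h4 : (1 : ℝ) ≤ n := by exact_mod_cast hn
  nlinarith

/-- An isometry commuting with `a, x`, equal to their commutator and close to `1` is trivial. -/
lemma central_comm_trivial (hρ : ∀ g v, ‖ρ g v‖ = ‖v‖) [FiniteDimensional ℂ W] (a x : G)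
    (hc1 : Commute (ρ (cm a x)) (ρ a)) (hc2 : Commute (ρ (cm a x)) (ρ x))
    (hsmall : ‖ρ (cm a x) - 1‖ * (Module.finrank ℂ W) < 1) : ρ (cm a x) = 1 := by
  set h := (cm a x) with hh
  set f : Module.End ℂ W := (ρ h : W →ₗ[ℂ] W) with hf
  have hfv : ∀ v, f v = ρ h v := fun v => rfl
  -- eigenvalues are 1
  have heig : ∀ μ : ℂ, f.HasEigenvalue μ → μ = 1 := by
    intro μ hμ
    set E := f.eigenspace μ with hE
    have memE : ∀ v, v ∈ E ↔ ρ h v = μ • v := fun v => Module.End.mem_eigenspace_iff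
    have pres : ∀ y : G, Commute (ρ h) (ρ y) → ∀ v ∈ E, ((ρ y : W →L[ℂ] W) : W →ₗ[ℂ] W) v ∈ E := by
      intro y hy v hv
      rw [memE] at hv ⊢
      change ρ h (ρ y v) = μ • ρ y v
      have := congrArg (fun T : W →L[ℂ] W => T v) hy.eq
      simp only [mul_apply_eq_comp] at this
      rw [this, hv, map_smul]
    let A : E →ₗ[ℂ] E := ((ρ a : W →L[ℂ] W) : W →ₗ[ℂ] W).restrict (pres a hc1)
    let X : E →ₗ[ℂ] E := ((ρ x : W →L[ℂ] W) : W →ₗ[ℂ] W).restrict (pres x hc2)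
    have hAX : A * X = μ • (X * A) := by
      ext v
      change ρ a (ρ x v) = μ • ρ x (ρ a v)
      have hv2 : (ρ x (ρ a v)) ∈ E := pres x hc2 _ (pres a hc1 _ v.2)
      rw [memE] at hv2
      rw [← hv2]
      have : ρ h * (ρ x * ρ a) = ρ a * ρ x := by
        rw [← map_mul, ← map_mul, ← map_mul, hh, cm]; simp [mul_assoc]
      exact (congrArg (fun T : W →L[ℂ] W => T (v : W)) this).symm
    have hinj : ∀ y : G, ∀ v : W, ρ y v = 0 → v = 0 := by
      intro y v hv
      have := hρ y v
      rw [hv, norm_zero] at this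
      exact norm_eq_zero.1 this.symm
    have hdet : ∀ T : E →ₗ[ℂ] E, Function.Injective T → LinearMap.det T ≠ 0 := by
      intro T hT
      have := LinearMap.isUnit_det T ((Module.End.isUnit_iff T).2
        ⟨hT, (LinearMap.injective_iff_surjective).1 hT⟩)
      exact this.ne_zero
    have hA : LinearMap.det A ≠ 0 := by
      apply hdet
      rw [injective_iff_map_eq_zero]
      intro v hv
      exact Subtype.ext (hinj a v (congrArg Subtype.val hv))
    have hX : LinearMap.det X ≠ 0 := by
      apply hdet
      rw [injective_iff_map_eq_zero]
      intro v hv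
      exact Subtype.ext (hinj x v (congrArg Subtype.val hv))
    have hpow : μ ^ Module.finrank ℂ E = 1 := by
      have := congrArg LinearMap.det hAX
      rw [LinearMap.det_smul, map_mul, map_mul] at this
      have h2 : LinearMap.det X * LinearMap.det A ≠ 0 := mul_ne_zero hX hA
      have h3 : (μ ^ Module.finrank ℂ E - 1) * (LinearMap.det X * LinearMap.det A) = 0 := by
        rw [sub_mul, one_mul, ← this]; ring
      exact sub_eq_zero.1 ((mul_eq_zero.1 h3).resolve_right h2)
    obtain ⟨v, hv⟩ := hμ.exists_hasEigenvector
    have hv0 : v ≠ 0 := hv.2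
    have hvE : ρ h v = μ • v := (memE v).1 hv.1
    have hμnorm : ‖μ‖ = 1 := by
      have := hρ h v
      rw [hvE, norm_smul] at this
      have h0 : ‖v‖ ≠ 0 := norm_ne_zero_iff.2 hv0
      exact mul_right_cancel₀ h0 (by rw [this, one_mul])
    have hμ1 : ‖μ - 1‖ ≤ ‖ρ h - 1‖ := by
      have := (ρ h - 1).le_opNorm v
      rw [sub_apply, hvE, one_apply_eq_self] at this
      have e : μ • v - v = (μ - 1) • v := by rw [sub_smul, one_smul]
      rw [e, norm_smul] at this
      exact le_of_mul_le_mul_right this (norm_pos_iff.2 hv0)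
    by_contra hne
    set n := Module.finrank ℂ E with hn
    have hgeom : ∑ i ∈ Finset.range n, μ ^ i = 0 := by
      have := geom_sum_mul μ n
      rw [hpow, sub_self] at this
      exact (mul_eq_zero.1 this).resolve_right (sub_ne_zero.2 hne)
    have hle : n ≤ Module.finrank ℂ W := Submodule.finrank_le E
    have hnpos : 0 < n := by
      rw [hn, Module.finrank_pos_iff_exists_ne_zero]
      exact ⟨⟨v, hv.1⟩, fun h => hv0 (congrArg Subtype.val h)⟩
    have hpw : ∀ i : ℕ, ‖1 - μ ^ i‖ ≤ i * ‖μ - 1‖ := by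
      intro i
      induction i with
      | zero => simp
      | succ i ih =>
        have e : 1 - μ ^ (i + 1) = (1 - μ ^ i) - μ ^ i * (μ - 1) := by ring
        rw [e]
        refine (norm_sub_le _ _).trans ?_
        rw [norm_mul, norm_pow, hμnorm, one_pow, one_mul]
        push_cast; linarith
    have hsum : (n : ℂ) = ∑ i ∈ Finset.range n, (1 - μ ^ i) := by
      rw [Finset.sum_sub_distrib, hgeom]; simp
    have h1 : (n : ℝ) ≤ ∑ i ∈ Finset.range n, (‖ρ h - 1‖ * Module.finrank ℂ W) := by
      calc (n : ℝ) = ‖(n : ℂ)‖ := by simp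
        _ ≤ ∑ i ∈ Finset.range n, ‖1 - μ ^ i‖ := by rw [hsum]; exact norm_sum_le _ _
        _ ≤ _ := by
          apply Finset.sum_le_sum
          intro i hi
          refine (hpw i).trans ?_
          rw [mul_comm]
          have : (i : ℝ) ≤ Module.finrank ℂ W := by
            exact_mod_cast ((Finset.mem_range.1 hi).le.trans hle)
          gcongr
    rw [Finset.sum_const, Finset.card_range, nsmul_eq_mul] at h1
    have : (0 : ℝ) < n := by exact_mod_cast hnpos
    nlinarith
  -- semisimplicity
  have hss : ∀ v, (f - 1) ((f - 1) v) = 0 → (f - 1) v = 0 := by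
    intro v hv
    set w := (f - 1) v with hw
    have hfw : f w = w := by
      have : f w - w = 0 := hv
      exact sub_eq_zero.1 this
    have hfv' : f v = v + w := by
      rw [hw]; simp
    have hn : ∀ n : ℕ, ρ (h ^ n) v = v + n • w := by
      intro n
      induction n with
      | zero => simp
      | succ n ih =>
        rw [pow_succ', map_mul, mul_apply_eq_comp, ih, map_add, map_nsmul,
          ← hfv, ← hfv, hfw, hfv', add_smul, one_smul]
        abel
    have hb : ∀ n : ℕ, n * ‖w‖ ≤ 2 * ‖v‖ := by
      intro n
      have h1 := hρ (h ^ n) v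
      rw [hn] at h1
      have h2 : ‖n • w‖ = n * ‖w‖ := by
        rw [← Nat.cast_smul_eq_nsmul ℝ, norm_smul]; simp
      have h3 := norm_sub_le (v + n • w) v
      rw [add_sub_cancel_left, h1, h2] at h3
      linarith
    by_contra hne
    have hpos : 0 < ‖w‖ := norm_pos_iff.2 hne
    obtain ⟨n, hn⟩ := exists_nat_gt (2 * ‖v‖ / ‖w‖)
    rw [div_lt_iff₀ hpos] at hn
    have := hb n
    linarith
  have hss' : ∀ k : ℕ, ∀ v, ((f - 1) ^ (k + 1)) v = 0 → (f - 1) v = 0 := by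
    intro k
    induction k with
    | zero => intro v hv; simpa using hv
    | succ k ih =>
      intro v hv
      rw [pow_succ] at hv
      exact hss v (ih ((f - 1) v) hv)
  have htop := Module.End.iSup_maxGenEigenspace_eq_top f
  have hle : ∀ μ : ℂ, f.maxGenEigenspace μ ≤ LinearMap.ker (f - 1) := by
    intro μ v hv
    rw [Module.End.mem_maxGenEigenspace] at hv
    obtain ⟨k, hk⟩ := hv
    by_cases hμ : f.HasEigenvalue μ
    · rw [heig μ hμ, one_smul] at hk
      rw [LinearMap.mem_ker]
      rcases k with _ | k
      · have : v = 0 := by simpa using hk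
        simp [this]
      · exact hss' k v hk
    · have hinj : ∀ w, (f - μ • 1) w = 0 → w = 0 := by
        intro w hw
        by_contra hw0
        apply hμ
        apply Module.End.hasEigenvalue_of_hasEigenvector (x := w)
        refine ⟨Module.End.mem_eigenspace_iff.2 ?_, hw0⟩
        have : f w - μ • w = 0 := hw
        exact sub_eq_zero.1 this
      have : v = 0 := by
        clear htop
        induction k with
        | zero => simpa using hk
        | succ k ih =>
          rw [pow_succ'] at hk
          exact ih (hinj _ hk)
      simp [this]
  have : LinearMap.ker (f - 1) = ⊤ := top_le_iff.1 (htop ▸ iSup_le hle)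
  ext v
  have hv : v ∈ LinearMap.ker (f - 1) := by rw [this]; trivial
  have : f v - v = 0 := hv
  exact sub_eq_zero.1 this

/-- sets of products `h_s^{i_0} h_{s+1}^{i_1} ⋯`. -/
def prodSet (h : ℕ → G) (m : ℕ) : ℕ → ℕ → Set G
  | 0, _ => {1}
  | k + 1, s => ⋃ i ∈ Finset.range (m + 1), (fun p => h s ^ i * p) '' prodSet h m k (s + 1)

lemma prodSet_finite (h : ℕ → G) (m k s : ℕ) : (prodSet h m k s).Finite := by
  induction k generalizing s with
  | zero => exact Set.finite_singleton _
  | succ k ih =>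
    exact Set.Finite.biUnion (Finset.finite_toSet _) (fun i _ => (ih (s + 1)).image _)

lemma prodSet_norm (hρ : ∀ g v, ‖ρ g v‖ = ‖v‖) (h : ℕ → G) (m : ℕ) (hd : ∀ k, ‖ρ (h (k + 1)) - 1‖ ≤ ‖ρ (h k) - 1‖ / 2)
    (k s : ℕ) (p : G) (hp : p ∈ prodSet h m k s) : ‖ρ p - 1‖ ≤ 2 * m * ‖ρ (h s) - 1‖ := by
  induction k generalizing s p with
  | zero =>
    have : p = 1 := hp
    rw [this, map_one, sub_self, norm_zero]; positivity
  | succ k ih =>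
    simp only [prodSet, Set.mem_iUnion] at hp
    obtain ⟨i, hi, q, hq, rfl⟩ := hp
    have h1 := rho_mul_sub ρ hρ (h s ^ i) q
    have h2 := rho_pow_sub ρ hρ (h s) i
    have h3 := ih (s + 1) q hq
    have h4 := hd s
    have h5 : (i : ℝ) ≤ m := by
      have := Finset.mem_range.1 hi
      exact_mod_cast Nat.lt_succ_iff.1 this
    have h6 : (i : ℝ) * ‖ρ (h s) - 1‖ ≤ m * ‖ρ (h s) - 1‖ := by gcongr
    have h7 : (m : ℝ) * ‖ρ (h (s + 1)) - 1‖ ≤ m * (‖ρ (h s) - 1‖ / 2) := by gcongr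
    simp only at h1 ⊢
    linarith

lemma prodSet_card (hρ : ∀ g v, ‖ρ g v‖ = ‖v‖) (h : ℕ → G) (m : ℕ)
    (hd : ∀ k, ‖ρ (h (k + 1)) - 1‖ ≤ ‖ρ (h k) - 1‖ / 2)
    (hd' : ∀ k, 16 * m * ‖ρ (h (k + 1)) - 1‖ ≤ ‖ρ (h k) - 1‖)
    (hs : ∀ k, m * ‖ρ (h k) - 1‖ ≤ 1 / 2) (hne : ∀ k, ρ (h k) ≠ 1)
    (k s : ℕ) : (m + 1) ^ k ≤ (prodSet h m k s).ncard := by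
  induction k generalizing s with
  | zero => simp [prodSet]
  | succ k ih =>
    have hpos : 0 < ‖ρ (h s) - 1‖ := norm_pos_iff.2 (sub_ne_zero.2 (hne s))
    have key : ∀ i j : ℕ, i ≤ m → j < i → ∀ p ∈ prodSet h m k (s + 1),
        ∀ q ∈ prodSet h m k (s + 1), h s ^ i * p ≠ h s ^ j * q := by
      intro i j hi hj p hp q hq heq
      have e1 : h s ^ (i - j) * p = q := by
        have : h s ^ i = h s ^ j * h s ^ (i - j) := by rw [← pow_add]; congr 1; omega
        rw [this, mul_assoc] at heq
        exact mul_left_cancel heq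
      have h1 := rho_pow_lower ρ hρ (h s) m (hs s) (i - j) (by omega) (by omega)
      have e2 : ρ (h s ^ (i - j)) - 1 = (ρ q - 1) - ρ (h s ^ (i - j)) * (ρ p - 1) := by
        rw [← e1, map_mul]; noncomm_ring
      have h2 := norm_sub_le (ρ q - 1) (ρ (h s ^ (i - j)) * (ρ p - 1))
      rw [← e2] at h2
      have h3 := rho_mul_norm ρ hρ (h s ^ (i - j)) (ρ p - 1)
      have h4 := prodSet_norm ρ hρ h m hd k (s + 1) p hp
      have h5 := prodSet_norm ρ hρ h m hd k (s + 1) q hq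
      have h6 := hd' s
      linarith
    have hkey2 : ∀ i j : ℕ, i ≤ m → j ≤ m → i ≠ j → ∀ p ∈ prodSet h m k (s + 1),
        ∀ q ∈ prodSet h m k (s + 1), h s ^ i * p ≠ h s ^ j * q := by
      intro i j hi hj hij p hp q hq
      rcases lt_or_gt_of_ne hij with h' | h'
      · exact (key j i hj h' q hq p hp).symm
      · exact key i j hi h' p hp q hq
    have hcard : (prodSet h m (k + 1) s).ncard
        = ((Finset.range (m + 1) : Set ℕ) ×ˢ prodSet h m k (s + 1)).ncard := by
      rw [← Set.InjOn.ncard_image (f := fun x : ℕ × G => h s ^ x.1 * x.2)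
        (s := (Finset.range (m + 1) : Set ℕ) ×ˢ prodSet h m k (s + 1))]
      · congr 1
        ext z
        simp only [prodSet, Set.mem_iUnion, Set.mem_image, Set.mem_prod, Prod.exists]
        constructor
        · rintro ⟨i, hi, p, hp, rfl⟩; exact ⟨i, p, ⟨hi, hp⟩, rfl⟩
        · rintro ⟨i, p, ⟨hi, hp⟩, rfl⟩; exact ⟨i, hi, p, hp, rfl⟩
      · rintro ⟨i, p⟩ ⟨hi, hp⟩ ⟨j, q⟩ ⟨hj, hq⟩ heq
        simp only [Finset.coe_range, Set.mem_Iio] at hi hj hp hq heq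
        by_cases hij : i = j
        · subst hij
          rw [mul_left_cancel heq]
        · exact absurd heq (hkey2 i j (by omega) (by omega) hij p hp q hq)
    rw [hcard, Set.ncard_prod, Set.ncard_coe_finset, Finset.card_range, pow_succ, mul_comm]
    gcongr
    exact ih (s + 1)

lemma prodSet_subset (h : ℕ → G) (m : ℕ) (S : Set G) (h1 : 1 ∈ S) (hS : ∀ k, h k ∈ S ^ (4 ^ k))
    (k s n : ℕ) (hn : m * 4 ^ (s + k) ≤ n + m * 4 ^ s) : prodSet h m k s ⊆ S ^ n := by
  induction k generalizing s n with
  | zero =>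
    intro p hp
    have : p = 1 := hp
    rw [this]; exact Set.one_mem_pow h1
  | succ k ih =>
    intro p hp
    simp only [prodSet, Set.mem_iUnion] at hp
    obtain ⟨i, hi, q, hq, rfl⟩ := hp
    have e1 : s + (k + 1) = (s + 1) + k := by ring
    have e2 : 4 ^ s ≤ 4 ^ ((s + 1) + k) := Nat.pow_le_pow_right (by norm_num) (by omega)
    have e3 : 4 ^ (s + 1) ≤ 4 ^ ((s + 1) + k) := Nat.pow_le_pow_right (by norm_num) (by omega)
    rw [e1] at hn
    have e4 : m * 4 ^ (s + 1) ≤ m * 4 ^ ((s + 1) + k) := Nat.mul_le_mul_left _ e3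
    have e5 : m * 4 ^ (s + 1) = 4 * (m * 4 ^ s) := by rw [pow_succ]; ring
    have hq' := ih (s + 1) (n - m * 4 ^ s) (by omega) hq
    have hi' : i ≤ m := Nat.lt_succ_iff.1 (Finset.mem_range.1 hi)
    have hp' : h s ^ i ∈ S ^ (m * 4 ^ s) := by
      have := Set.pow_mem_pow (n := i) (hS s)
      rw [← pow_mul] at this
      refine Set.pow_subset_pow_right h1 ?_ this
      rw [mul_comm]; exact Nat.mul_le_mul_right _ hi'
    have : n = m * 4 ^ s + (n - m * 4 ^ s) := by omega
    rw [this, pow_add]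
    exact Set.mul_mem_mul hp' hq'

lemma growth_contra (hρ : ∀ g v, ‖ρ g v‖ = ‖v‖) {d : ℕ} (hPG : PG G d) (x y : G) (h : ℕ → G) (z : ℕ → G) (ε : ℝ)
    (h0 : h 0 = x) (hz : ∀ k, z k = x ∨ z k = y) (hh : ∀ k, h (k + 1) = cm (h k) (z k))
    (hne : ∀ k, ρ (h k) ≠ 1) (hx : ‖ρ x - 1‖ ≤ ε) (hy : ‖ρ y - 1‖ ≤ ε)
    (hε : 64 * 4 ^ d * ε ≤ 1) : False := by
  have h4 : 1 ≤ 4 ^ d := Nat.one_le_pow _ _ (by norm_num)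
  obtain ⟨m, hm⟩ : ∃ m, m + 1 = 2 * 4 ^ d := ⟨2 * 4 ^ d - 1, by omega⟩
  have hmR : (m : ℝ) ≤ 2 * 4 ^ d := by exact_mod_cast (by omega : m ≤ 2 * 4 ^ d)
  have h4R : (1 : ℝ) ≤ 4 ^ d := by exact_mod_cast h4
  have hε0 : 0 ≤ ε := (norm_nonneg _).trans hx
  have hzn : ∀ k, ‖ρ (z k) - 1‖ ≤ ε := by
    intro k; rcases hz k with h | h <;> rw [h] <;> assumption
  have hstep : ∀ k, ‖ρ (h (k + 1)) - 1‖ ≤ 2 * ε * ‖ρ (h k) - 1‖ := by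
    intro k
    rw [hh]
    refine (comm_norm ρ hρ _ _).trans ?_
    have := hzn k
    have := norm_nonneg (ρ (h k) - 1)
    nlinarith
  have hε1 : ε ≤ 1 / 64 := by nlinarith
  have hmε : m * ε ≤ 1 / 32 := by nlinarith
  have hd : ∀ k, ‖ρ (h (k + 1)) - 1‖ ≤ ‖ρ (h k) - 1‖ / 2 := by
    intro k
    have := hstep k
    have := norm_nonneg (ρ (h k) - 1)
    nlinarith
  have hd' : ∀ k, 16 * m * ‖ρ (h (k + 1)) - 1‖ ≤ ‖ρ (h k) - 1‖ := by
    intro k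
    have h1 := hstep k
    have h2 := norm_nonneg (ρ (h k) - 1)
    have h3 : (0 : ℝ) ≤ 16 * m := by positivity
    have h4 := mul_le_mul_of_nonneg_left h1 h3
    nlinarith
  have hle : ∀ k, ‖ρ (h k) - 1‖ ≤ ε := by
    intro k
    induction k with
    | zero => rw [h0]; exact hx
    | succ k ih =>
      have := hd k
      have := norm_nonneg (ρ (h k) - 1)
      linarith
  have hs : ∀ k, m * ‖ρ (h k) - 1‖ ≤ 1 / 2 := by
    intro k
    have : (m : ℝ) * ‖ρ (h k) - 1‖ ≤ m * ε := by
      gcongr; exact hle k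
    linarith
  let S : Set G := {1, x, y, x⁻¹, y⁻¹}
  have hSfin : S.Finite := by simp [S]
  have h1S : (1 : G) ∈ S := by simp [S]
  have hinvS : ∀ n : ℕ, ∀ g ∈ S ^ n, g⁻¹ ∈ S ^ n := by
    intro n g hg
    have : S⁻¹ = S := by
      ext w
      simp only [S, Set.mem_inv, Set.mem_insert_iff, Set.mem_singleton_iff, inv_eq_iff_eq_inv,
        inv_inv, inv_one]
      tauto
    rw [← this, inv_pow]
    simpa using hg
  have hzS : ∀ k, z k ∈ S := by
    intro k; rcases hz k with h | h <;> rw [h] <;> simp [S]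
  have hzS' : ∀ k, (z k)⁻¹ ∈ S := by
    intro k; rcases hz k with h | h <;> rw [h] <;> simp [S]
  have hS : ∀ k, h k ∈ S ^ (4 ^ k) := by
    intro k
    induction k with
    | zero => rw [h0]; simp [S]
    | succ k ih =>
      rw [hh, cm]
      have e : 4 ^ (k + 1) = 4 ^ k + 4 ^ k + 4 ^ k + 4 ^ k := by rw [pow_succ]; ring
      have h1 : S ⊆ S ^ (4 ^ k) := by
        have := Set.pow_subset_pow_right h1S (Nat.one_le_pow k 4 (by norm_num))
        rwa [pow_one] at this
      rw [e, pow_add, pow_add, pow_add]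
      exact Set.mul_mem_mul (Set.mul_mem_mul (Set.mul_mem_mul ih (h1 (hzS k)))
        (hinvS _ _ ih)) (h1 (hzS' k))
  obtain ⟨C, hC⟩ := hPG S hSfin
  have hk : ∀ k : ℕ, (m + 1) ^ k ≤ C * (m * 4 ^ k + 1) ^ d := by
    intro k
    refine (prodSet_card ρ hρ h m hd hd' hs hne k 0).trans (le_trans ?_ (hC (m * 4 ^ k)))
    apply Set.ncard_le_ncard _ (fpow hSfin _)
    apply prodSet_subset h m S h1S hS
    simp
  have hk2 : ∀ k : ℕ, 2 ^ k ≤ C * (m + 1) ^ d := by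
    intro k
    have h1 : (m * 4 ^ k + 1) ^ d ≤ ((m + 1) * 4 ^ k) ^ d := by
      gcongr
      have : 1 ≤ 4 ^ k := Nat.one_le_pow _ _ (by norm_num)
      nlinarith
    have h2 := (hk k).trans (Nat.mul_le_mul_left C h1)
    rw [mul_pow] at h2
    have h3 : (m + 1) ^ k = 2 ^ k * (4 ^ k) ^ d := by
      rw [hm, mul_pow, ← pow_mul, ← pow_mul, mul_comm d k]
    rw [h3, ← mul_assoc] at h2
    exact Nat.le_of_mul_le_mul_right h2 (by positivity)
  have := hk2 (C * (m + 1) ^ d)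
  have := Nat.lt_two_pow_self (n := C * (m + 1) ^ d)
  omega

/-- Elements acting close to the identity act by commuting maps. -/
lemma close_commute (hρ : ∀ g v, ‖ρ g v‖ = ‖v‖) [FiniteDimensional ℂ W] {d : ℕ} (hPG : PG G d) (ε : ℝ)
    (hε : 64 * 4 ^ d * ε ≤ 1) (hε2 : ε * (Module.finrank ℂ W) < 1)
    (x y : G) (hx : ‖ρ x - 1‖ ≤ ε) (hy : ‖ρ y - 1‖ ≤ ε) : ρ (x * y) = ρ (y * x) := by
  have hcomm_iff : ∀ a b : G, ρ (cm a b) = 1 ↔ Commute (ρ a) (ρ b) := by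
    intro a b
    have e1 : ρ (cm a b) * (ρ b * ρ a) = ρ a * ρ b := by
      rw [← map_mul, ← map_mul, ← map_mul, cm]; simp [mul_assoc]
    constructor
    · intro h; rw [h, one_mul] at e1; exact e1.symm
    · intro h
      have h1 : ρ (b * a) * ρ (b * a)⁻¹ = 1 := by rw [← map_mul]; simp
      rw [h.eq, ← map_mul] at e1
      calc ρ (cm a b) = ρ (cm a b) * (ρ (b * a) * ρ (b * a)⁻¹) := by rw [h1, mul_one]
        _ = 1 := by rw [← mul_assoc, e1, h1]
  have hε0 : 0 ≤ ε := (norm_nonneg _).trans hx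
  have h4R : (1 : ℝ) ≤ 4 ^ d := one_le_pow₀ (by norm_num)
  have hε1 : ε ≤ 1 / 64 := by nlinarith
  by_contra hne
  have hne' : ρ (cm x y) ≠ 1 := by
    rw [Ne, hcomm_iff]; intro h; apply hne; rw [map_mul, map_mul]; exact h.eq
  let K := Subgroup.closure ({x, y} : Set G)
  let P : G → Prop := fun g => g ∈ K ∧ ‖ρ g - 1‖ ≤ ε ∧ ρ g ≠ 1 ∧
    ∃ z, (z = x ∨ z = y) ∧ ρ (cm g z) ≠ 1
  have hxK : x ∈ K := Subgroup.subset_closure (by simp)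
  have hyK : y ∈ K := Subgroup.subset_closure (by simp)
  have hP0 : P x := by
    refine ⟨hxK, hx, ?_, y, Or.inr rfl, hne'⟩
    intro h
    apply hne'
    rw [hcomm_iff, h]; exact Commute.one_left _
  have hPs : ∀ g : {g // P g}, ∃ z, (z = x ∨ z = y) ∧ P (cm g.1 z) := by
    rintro ⟨g, hgK, hg1, hg2, z, hz, hgz⟩
    refine ⟨z, hz, ?_⟩
    have hzK : z ∈ K := by rcases hz with rfl | rfl <;> assumption
    have hcK : cm g z ∈ K := mul_mem (mul_mem (mul_mem hgK hzK) (inv_mem hgK)) (inv_mem hzK)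
    have hzn : ‖ρ z - 1‖ ≤ ε := by rcases hz with rfl | rfl <;> assumption
    have hcn : ‖ρ (cm g z) - 1‖ ≤ ε := by
      refine (comm_norm ρ hρ g z).trans ?_
      have := norm_nonneg (ρ g - 1)
      have := norm_nonneg (ρ z - 1)
      nlinarith
    refine ⟨hcK, hcn, hgz, ?_⟩
    by_contra hcon
    push Not at hcon
    have c1 := (hcomm_iff _ _).1 (hcon x (Or.inl rfl))
    have c2 := (hcomm_iff _ _).1 (hcon y (Or.inr rfl))
    have call : ∀ w ∈ K, Commute (ρ (cm g z)) (ρ w) := by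
      intro w hw
      induction hw using Subgroup.closure_induction with
      | mem w hw => rcases hw with rfl | rfl <;> assumption
      | one => rw [map_one]; exact Commute.one_right _
      | mul a b _ _ ha hb => rw [map_mul]; exact ha.mul_right hb
      | inv a _ ha =>
        have h1 : ρ a * ρ a⁻¹ = 1 := by rw [← map_mul]; simp
        have h2 : ρ a⁻¹ * ρ a = 1 := by rw [← map_mul]; simp
        exact Commute.units_inv_right (u := ⟨ρ a, ρ a⁻¹, h1, h2⟩) ha
    apply hgz
    apply central_comm_trivial ρ hρ g z (call g hgK) (call z hzK)
    refine lt_of_le_of_lt ?_ hε2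
    gcongr
  choose Z hZ1 hZ2 using hPs
  let h : ℕ → {g // P g} := fun n => Nat.rec ⟨x, hP0⟩ (fun _ g => ⟨cm g.1 (Z g), hZ2 g⟩) n
  exact growth_contra ρ hρ hPG x y (fun n => (h n).1) (fun n => Z (h n)) ε rfl
    (fun k => hZ1 _) (fun k => rfl) (fun k => (h k).2.2.2.1) hx hy hε

theorem rep_virtually_abelian (hρ : ∀ g v, ‖ρ g v‖ = ‖v‖) [FiniteDimensional ℂ W] {d : ℕ} (hPG : PG G d) :
    ∃ K : Subgroup G, K.FiniteIndex ∧ ∀ a ∈ K, ∀ b ∈ K, ρ (a * b) = ρ (b * a) := by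
  obtain ⟨ε, hε0, hε1, hε2⟩ : ∃ ε : ℝ, 0 < ε ∧ 64 * 4 ^ d * ε ≤ 1 ∧
      ε * (Module.finrank ℂ W) < 1 := by
    have h1 : (0 : ℝ) < 64 * 4 ^ d := by positivity
    have h2 : (0 : ℝ) < Module.finrank ℂ W + 1 := by positivity
    refine ⟨min (1 / (64 * 4 ^ d)) (1 / (Module.finrank ℂ W + 1)), by positivity, ?_, ?_⟩
    · calc _ ≤ 64 * 4 ^ d * (1 / (64 * 4 ^ d) : ℝ) := by gcongr; exact min_le_left _ _
        _ = 1 := by field_simp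
    · calc _ ≤ (1 / (Module.finrank ℂ W + 1 : ℝ)) * Module.finrank ℂ W := by
            gcongr; exact min_le_right _ _
        _ < 1 := by rw [div_mul_eq_mul_div, one_mul, div_lt_one h2]; linarith
  let X : Set G := {g | ‖ρ g - 1‖ < ε}
  refine ⟨Subgroup.closure X, ?_, ?_⟩
  · have : ProperSpace (W →L[ℂ] W) := FiniteDimensional.proper ℂ _
    have htb := (isCompact_closedBall (0 : W →L[ℂ] W) 1).totallyBounded
    obtain ⟨T, hT, hcov⟩ := Metric.totallyBounded_iff.1 htb (ε / 2) (by positivity)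
    have hex : ∀ g : G, ∃ y : T, ‖ρ g - y‖ < ε / 2 := by
      intro g
      have : ρ g ∈ Metric.closedBall (0 : W →L[ℂ] W) 1 := by
        rw [mem_closedBall_zero_iff]; exact rho_norm_le ρ hρ g
      have := hcov this
      simp only [Set.mem_iUnion, Metric.mem_ball, dist_eq_norm] at this
      obtain ⟨y, hy, h⟩ := this
      exact ⟨⟨y, hy⟩, h⟩
    choose Y hY using hex
    have : Finite T := hT
    have : Finite (G ⧸ Subgroup.closure X) := by
      apply Finite.of_injective (fun q : G ⧸ Subgroup.closure X => Y q.out)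
      intro p q hpq
      simp only at hpq
      rw [← p.out_eq', ← q.out_eq']
      rw [QuotientGroup.eq]
      apply Subgroup.subset_closure
      change ‖ρ _ - 1‖ < ε
      have e : ρ ((Quotient.out p)⁻¹ * Quotient.out q) - 1
          = ρ (Quotient.out p)⁻¹ * (ρ (Quotient.out q) - ρ (Quotient.out p)) := by
        rw [map_mul, mul_sub, ← map_mul _ _ (Quotient.out p)]; simp
      rw [e]
      refine (rho_mul_norm ρ hρ _ _).trans_lt ?_
      have h1 := hY (Quotient.out p)
      have h2 := hY (Quotient.out q)
      rw [hpq] at h1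
      have h3 := norm_sub_le (ρ (Quotient.out q) - (Y (Quotient.out q)).1)
        (ρ (Quotient.out p) - (Y (Quotient.out q)).1)
      rw [sub_sub_sub_cancel_right] at h3
      linarith
    exact Subgroup.finiteIndex_of_finite_quotient
  · have hXc : ∀ a ∈ X, ∀ b ∈ X, Commute (ρ a) (ρ b) := by
      intro a ha b hb
      have := close_commute ρ hρ hPG ε hε1 hε2 a b (le_of_lt ha) (le_of_lt hb)
      rw [map_mul, map_mul] at this
      exact this
    have hinv : ∀ a : G, ∀ c : W →L[ℂ] W, Commute c (ρ a) → Commute c (ρ a⁻¹) := by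
      intro a c ha
      have h1 : ρ a * ρ a⁻¹ = 1 := by rw [← map_mul]; simp
      have h2 : ρ a⁻¹ * ρ a = 1 := by rw [← map_mul]; simp
      exact Commute.units_inv_right (u := ⟨ρ a, ρ a⁻¹, h1, h2⟩) ha
    have hstep : ∀ c : W →L[ℂ] W, (∀ a ∈ X, Commute c (ρ a)) →
        ∀ a ∈ Subgroup.closure X, Commute c (ρ a) := by
      intro c hc a ha
      induction ha using Subgroup.closure_induction with
      | mem w hw => exact hc w hw
      | one => rw [map_one]; exact Commute.one_right _
      | mul a b _ _ ha hb => rw [map_mul]; exact ha.mul_right hb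
      | inv a _ ha => exact hinv a c ha
    intro a ha b hb
    rw [map_mul, map_mul]
    exact hstep (ρ a) (fun b hb => (hstep (ρ b) (fun a ha => hXc b hb a ha) a ha).symm) b hb

end
end Gro

namespace Gro
open scoped Pointwise
universe v

section harm
open scoped RealInnerProductSpace

variable {G : Type u} [Group G] {H : Type v} [NormedAddCommGroup H] [InnerProductSpace ℝ H]

noncomputable def avg (ρ : G →* (H →ₗ[ℝ] H)) (S : Finset G) : H →ₗ[ℝ] H :=
  (S.card : ℝ)⁻¹ • ∑ s ∈ S, ρ s

theorem avg_apply (ρ : G →* (H →ₗ[ℝ] H)) (S : Finset G) (v : H) :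
    avg ρ S v = (S.card : ℝ)⁻¹ • ∑ s ∈ S, ρ s v := by
  simp [avg, LinearMap.sum_apply]

theorem rho_norm (ρ : G →* (H →ₗ[ℝ] H)) (hρ : ∀ g u v, ⟪ρ g u, ρ g v⟫ = ⟪u, v⟫) (g : G) (u : H) :
    ‖ρ g u‖ = ‖u‖ := by
  have := hρ g u u
  rw [real_inner_self_eq_norm_sq, real_inner_self_eq_norm_sq] at this
  exact (sq_eq_sq₀ (norm_nonneg _) (norm_nonneg _)).1 this

theorem rho_mul (ρ : G →* (H →ₗ[ℝ] H)) (g h : G) (u : H) : ρ (g * h) u = ρ g (ρ h u) := by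
  rw [map_mul]; rfl

theorem rho_adj (ρ : G →* (H →ₗ[ℝ] H)) (hρ : ∀ g u v, ⟪ρ g u, ρ g v⟫ = ⟪u, v⟫) (g : G) (u v : H) :
    ⟪ρ g u, v⟫ = ⟪u, ρ g⁻¹ v⟫ := by
  rw [← hρ g u, ← rho_mul]; simp

theorem avg_adj (ρ : G →* (H →ₗ[ℝ] H)) (hρ : ∀ g u v, ⟪ρ g u, ρ g v⟫ = ⟪u, v⟫) (S : Finset G)
    (hS : ∀ s ∈ S, s⁻¹ ∈ S) (u v : H) : ⟪avg ρ S u, v⟫ = ⟪u, avg ρ S v⟫ := by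
  rw [avg_apply, avg_apply, real_inner_smul_left, real_inner_smul_right, sum_inner, inner_sum]
  congr 1
  refine Finset.sum_nbij' (fun s => s⁻¹) (fun s => s⁻¹) ?_ ?_ ?_ ?_ ?_
  · exact hS
  · exact hS
  · simp
  · simp
  · intro s hs; exact rho_adj ρ hρ s u v

theorem avg_pow_adj (ρ : G →* (H →ₗ[ℝ] H)) (hρ : ∀ g u v, ⟪ρ g u, ρ g v⟫ = ⟪u, v⟫) (S : Finset G)
    (hS : ∀ s ∈ S, s⁻¹ ∈ S) (n : ℕ) (u v : H) :
    ⟪(avg ρ S ^ n) u, v⟫ = ⟪u, (avg ρ S ^ n) v⟫ := by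
  induction n generalizing u v with
  | zero => simp
  | succ n ih =>
    rw [pow_succ, Module.End.mul_apply, ih, avg_adj ρ hρ S hS, ← Module.End.mul_apply, ← pow_succ',
      ← pow_succ]

theorem avg_sum (ρ : G →* (H →ₗ[ℝ] H)) (S : Finset G) (h1 : 1 ∈ S) (v : H) :
    ∑ s ∈ S, ρ s v = (S.card : ℝ) • avg ρ S v := by
  have hN : (S.card : ℝ) ≠ 0 := by
    have := Finset.card_pos.2 ⟨1, h1⟩
    positivity
  rw [avg_apply, smul_smul, mul_inv_cancel₀ hN, one_smul]

theorem avg_sum2 (ρ : G →* (H →ₗ[ℝ] H)) (S : Finset G) (h1 : 1 ∈ S) (v : H) :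
    ∑ s ∈ S, ∑ s' ∈ S, ρ (s * s') v = ((S.card : ℝ) ^ 2) • avg ρ S (avg ρ S v) := by
  have : ∀ s ∈ S, ∑ s' ∈ S, ρ (s * s') v = (S.card : ℝ) • ρ s (avg ρ S v) := by
    intro s hs
    simp_rw [rho_mul]
    rw [← map_sum, avg_sum ρ S h1, map_smul]
  rw [Finset.sum_congr rfl this, ← Finset.smul_sum, avg_sum ρ S h1, smul_smul, sq]

theorem energy (ρ : G →* (H →ₗ[ℝ] H)) (hρ : ∀ g u v, ⟪ρ g u, ρ g v⟫ = ⟪u, v⟫) (S : Finset G)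
    (hS : ∀ s ∈ S, s⁻¹ ∈ S) (h1 : 1 ∈ S) (v : H) :
    ∑ s ∈ S, ∑ s' ∈ S, ‖ρ (s * s') v - v‖ ^ 2
      = 2 * (S.card : ℝ) ^ 2 * (‖v‖ ^ 2 - ‖avg ρ S v‖ ^ 2) := by
  have h : ∀ g, ‖ρ g v - v‖ ^ 2 = 2 * ‖v‖ ^ 2 - 2 * ⟪ρ g v, v⟫ := by
    intro g
    rw [norm_sub_sq_real, rho_norm ρ hρ]; ring
  simp_rw [h, Finset.sum_sub_distrib, ← Finset.mul_sum, ← sum_inner]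
  rw [avg_sum2 ρ S h1, real_inner_smul_left, avg_adj ρ hρ S hS, real_inner_self_eq_norm_sq]
  simp
  ring

theorem energy_nonneg (ρ : G →* (H →ₗ[ℝ] H)) (hρ : ∀ g u v, ⟪ρ g u, ρ g v⟫ = ⟪u, v⟫) (S : Finset G)
    (hS : ∀ s ∈ S, s⁻¹ ∈ S) (h1 : 1 ∈ S) (v : H) : 0 ≤ ‖v‖ ^ 2 - ‖avg ρ S v‖ ^ 2 := by
  have hN : 0 < (S.card : ℝ) := by
    have := Finset.card_pos.2 ⟨1, h1⟩
    positivity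
  have := energy ρ hρ S hS h1 v
  have h2 : 0 ≤ ∑ s ∈ S, ∑ s' ∈ S, ‖ρ (s * s') v - v‖ ^ 2 :=
    Finset.sum_nonneg fun _ _ => Finset.sum_nonneg fun _ _ => by positivity
  rw [this] at h2
  have h3 : 0 < 2 * (S.card : ℝ) ^ 2 := by positivity
  exact nonneg_of_mul_nonneg_right h2 h3

theorem energy_le (ρ : G →* (H →ₗ[ℝ] H)) (hρ : ∀ g u v, ⟪ρ g u, ρ g v⟫ = ⟪u, v⟫) (S : Finset G)
    (hS : ∀ s ∈ S, s⁻¹ ∈ S) (h1 : 1 ∈ S) (v : H) {s s' : G} (hs : s ∈ S) (hs' : s' ∈ S) :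
    ‖ρ (s * s') v - v‖ ^ 2 ≤ 2 * (S.card : ℝ) ^ 2 * (‖v‖ ^ 2 - ‖avg ρ S v‖ ^ 2) := by
  rw [← energy ρ hρ S hS h1]
  refine le_trans ?_ (Finset.single_le_sum (f := fun s => ∑ s' ∈ S, ‖ρ (s * s') v - v‖ ^ 2)
    (fun _ _ => Finset.sum_nonneg fun _ _ => by positivity) hs)
  exact Finset.single_le_sum (f := fun s' => ‖ρ (s * s') v - v‖ ^ 2) (fun _ _ => by positivity) hs'

theorem energy_diff (ρ : G →* (H →ₗ[ℝ] H)) (hρ : ∀ g u v, ⟪ρ g u, ρ g v⟫ = ⟪u, v⟫) (S : Finset G)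
    (hS : ∀ s ∈ S, s⁻¹ ∈ S) (v : H) :
    ‖avg ρ S (avg ρ S v) - v‖ ^ 2 = (‖v‖ ^ 2 - ‖avg ρ S v‖ ^ 2) -
      (‖avg ρ S v‖ ^ 2 - ‖avg ρ S (avg ρ S v)‖ ^ 2) := by
  rw [norm_sub_sq_real, avg_adj ρ hρ S hS, real_inner_self_eq_norm_sq]; ring

theorem disp_pow (ρ : G →* (H →ₗ[ℝ] H)) (hρ : ∀ g u v, ⟪ρ g u, ρ g v⟫ = ⟪u, v⟫) (S : Finset G)
    (hS : ∀ s ∈ S, s⁻¹ ∈ S) (h1 : 1 ∈ S) (v : H) (e : ℝ) (he : 0 ≤ e)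
    (hv : ‖v‖ ^ 2 - ‖avg ρ S v‖ ^ 2 ≤ e ^ 2) (l : ℕ) (x : G)
    (hx : x ∈ (S : Set G) ^ l) : ‖ρ x v - v‖ ≤ l * (2 * S.card * e) := by
  induction l generalizing x with
  | zero =>
    simp at hx; subst hx; simp
  | succ l ih =>
    rw [pow_succ] at hx
    obtain ⟨y, hy, s, hs, rfl⟩ := hx
    have h2 : ‖ρ s v - v‖ ≤ 2 * S.card * e := by
      have := energy_le ρ hρ S hS h1 v (s := s) (s' := 1) hs h1
      rw [mul_one] at this
      refine le_of_sq_le_sq ?_ (by positivity)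
      refine this.trans ?_
      have hN : 0 ≤ 2 * (S.card : ℝ) ^ 2 := by positivity
      have := mul_le_mul_of_nonneg_left hv hN
      nlinarith [mul_nonneg (sq_nonneg (S.card : ℝ)) (sq_nonneg e)]
    have h3 : ρ (y * s) v - v = ρ y (ρ s v - v) + (ρ y v - v) := by
      rw [rho_mul, map_sub]; abel
    show ‖ρ (y * s) v - v‖ ≤ _
    rw [h3]
    refine (norm_add_le _ _).trans ?_
    rw [rho_norm ρ hρ]
    have := ih y hy
    push_cast
    linarith

theorem inner_sum_eq_one (ρ : G →* (H →ₗ[ℝ] H)) (δ : H) (hδ : Orthonormal ℝ (fun g => ρ g δ))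
    (S : Finset G) (h1 : 1 ∈ S) (X : Finset G) (n : ℕ) (g : G)
    (hg : ∀ x ∈ (S : Set G) ^ n, g * x ∈ X) :
    ⟪ρ g ((avg ρ S ^ n) δ), ∑ x ∈ X, ρ x δ⟫ = 1 := by
  classical
  have hN : (S.card : ℝ) ≠ 0 := by
    have := Finset.card_pos.2 ⟨1, h1⟩
    positivity
  induction n generalizing g with
  | zero =>
    have hg' : g ∈ X := by simpa using hg
    rw [pow_zero, Module.End.one_apply, inner_sum]
    simp_rw [orthonormal_iff_ite.1 hδ]
    simp [hg']
  | succ n ih =>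
    rw [pow_succ', Module.End.mul_apply, avg_apply, map_smul, map_sum, real_inner_smul_left, sum_inner]
    have : ∀ s ∈ S, ⟪ρ g (ρ s ((avg ρ S ^ n) δ)), ∑ x ∈ X, ρ x δ⟫ = 1 := by
      intro s hs
      rw [← rho_mul]
      apply ih
      intro x hx
      rw [mul_assoc]
      apply hg
      rw [pow_succ']
      exact Set.mul_mem_mul hs hx
    rw [Finset.sum_congr rfl this]
    simp [hN]

theorem norm_lower (ρ : G →* (H →ₗ[ℝ] H)) (δ : H) (hδ : Orthonormal ℝ (fun g => ρ g δ))
    (S : Finset G) (h1 : 1 ∈ S) (n : ℕ) :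
    1 ≤ ‖(avg ρ S ^ n) δ‖ ^ 2 * ((S : Set G) ^ n).ncard := by
  classical
  have hfin : ((S : Set G) ^ n).Finite := fpow S.finite_toSet n
  have := inner_sum_eq_one ρ δ hδ S h1 hfin.toFinset n 1 (by simp)
  rw [map_one, Module.End.one_apply] at this
  have h2 := real_inner_mul_inner_self_le ((avg ρ S ^ n) δ) (∑ x ∈ hfin.toFinset, ρ x δ)
  rw [this, real_inner_self_eq_norm_sq] at h2
  have h3 : ⟪∑ x ∈ hfin.toFinset, ρ x δ, ∑ x ∈ hfin.toFinset, ρ x δ⟫ = ((S : Set G) ^ n).ncard := by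
    rw [sum_inner]
    have : ∀ x ∈ hfin.toFinset, ⟪ρ x δ, ∑ x ∈ hfin.toFinset, ρ x δ⟫ = 1 := by
      intro x hx
      rw [inner_sum]
      simp_rw [orthonormal_iff_ite.1 hδ]
      simp at hx
      simp [hx]
    rw [Finset.sum_congr rfl this, Set.ncard_eq_toFinset_card _ hfin]
    simp
  rw [h3] at h2
  linarith

theorem ncard_pow_ge [Infinite G] (S : Finset G) (hS : ∀ s ∈ S, s⁻¹ ∈ S) (h1 : 1 ∈ S)
    (hgen : Subgroup.closure (S : Set G) = ⊤) (l : ℕ) : l + 1 ≤ ((S : Set G) ^ l).ncard := by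
  have hfin : ∀ n, ((S : Set G) ^ n).Finite := fun n => fpow S.finite_toSet n
  have hinv : (S : Set G)⁻¹ = S := by
    ext x; constructor
    · intro hx; simpa using hS _ (Set.mem_inv.1 hx)
    · intro hx; exact Set.mem_inv.2 (hS _ hx)
  induction l with
  | zero => rw [pow_zero, ← Set.singleton_one]; simp
  | succ l ih =>
    have hsub : (S : Set G) ^ l ⊆ (S : Set G) ^ (l + 1) := Set.pow_subset_pow_right (by simpa) (by omega)
    have hne : (S : Set G) ^ l ≠ (S : Set G) ^ (l + 1) := by
      intro heq
      have hall : ∀ m, (S : Set G) ^ m ⊆ (S : Set G) ^ l := by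
        intro m
        induction m with
        | zero => exact Set.pow_subset_pow_right (by simpa) (by omega)
        | succ m ihm =>
          rw [pow_succ]
          refine (Set.mul_subset_mul_right ihm).trans ?_
          rw [← pow_succ, ← heq]
      have : (Set.univ : Set G) ⊆ (S : Set G) ^ l := by
        intro x _
        obtain ⟨n, hn⟩ := subset_pow_of_closure hinv hgen x
        exact hall n hn
      exact Set.infinite_univ ((hfin l).subset this)
    have := Set.ncard_lt_ncard (hsub.ssubset_of_ne hne) (hfin _)
    omega

theorem exists_flat [Infinite G] {d : ℕ} (hPG : PG G d) (ρ : G →* (H →ₗ[ℝ] H))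
    (hρ : ∀ g u v, ⟪ρ g u, ρ g v⟫ = ⟪u, v⟫)
    (δ : H) (hδ : Orthonormal ℝ (fun g => ρ g δ)) (S : Finset G)
    (hS : ∀ s ∈ S, s⁻¹ ∈ S) (h1 : 1 ∈ S)
    (hgen : Subgroup.closure (S : Set G) = ⊤) (η : ℝ) (hη : 0 < η) (hη1 : η < 1) :
    ∃ v : H, 0 < ‖v‖ ^ 2 - ‖avg ρ S v‖ ^ 2 ∧
      ‖avg ρ S (avg ρ S v) - v‖ ^ 2 ≤ η * (‖v‖ ^ 2 - ‖avg ρ S v‖ ^ 2) := by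
  by_contra hcon
  push Not at hcon
  have hδ1 : ‖δ‖ = 1 := by
    have := hδ.1 1
    simpa using this
  set P := avg ρ S with hP
  set e : ℕ → ℝ := fun n => ‖(P ^ n) δ‖ ^ 2 - ‖P ((P ^ n) δ)‖ ^ 2 with he
  have hsucc : ∀ n, (P ^ (n+1)) δ = P ((P ^ n) δ) := fun n => by
    rw [pow_succ', Module.End.mul_apply]
  have he0 : ∀ n, 0 ≤ e n := fun n => energy_nonneg ρ hρ S hS h1 _
  have hdec : ∀ n, e (n + 1) ≤ (1 - η) * e n := by
    intro n
    have hd := energy_diff ρ hρ S hS ((P ^ n) δ)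
    have hd' : ‖P (P ((P ^ n) δ)) - (P ^ n) δ‖ ^ 2 = e n - e (n + 1) := by
      rw [he]; simp only [hsucc]; exact hd
    rcases (he0 n).eq_or_lt with h | h
    · rw [← h] at hd' ⊢
      have := sq_nonneg ‖P (P ((P ^ n) δ)) - (P ^ n) δ‖
      linarith
    · have := hcon _ h
      rw [hd'] at this
      change η * e n < _ at this
      linarith
  have hle : ∀ n, ‖(P ^ n) δ‖ ≤ 1 := by
    intro n
    induction n with
    | zero => simp [hδ1]
    | succ n ih =>
      rw [hsucc]
      have := he0 n
      refine le_trans (le_of_sq_le_sq ?_ (norm_nonneg _)) ih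
      simp only [he] at this
      linarith
  have hgeo : ∀ n, e n ≤ (1 - η) ^ n := by
    intro n
    induction n with
    | zero =>
      have : e 0 = ‖δ‖ ^ 2 - ‖P δ‖ ^ 2 := by simp [he]
      rw [this, hδ1]
      have := sq_nonneg ‖P δ‖
      simp; 
    | succ n ih =>
      rw [pow_succ']
      exact (hdec n).trans (mul_le_mul_of_nonneg_left ih (by linarith))
  obtain ⟨C, hC⟩ := hPG (S : Set G) S.finite_toSet
  obtain ⟨N, hN⟩ := exp_beats_poly (16 * S.card * C ^ 3) (3 * d) (1 - η)⁻¹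
    ((one_lt_inv₀ (by linarith)).2 (by linarith))
  have hN := hN N le_rfl
  set M : ℕ := ((S : Set G) ^ N).ncard with hM
  have hMpos : 1 ≤ M := by
    have := ncard_pow_ge S hS h1 hgen N
    omega
  have hMR : (1:ℝ) ≤ M := by exact_mod_cast hMpos
  have hM3 : (M : ℝ) ^ 3 ≤ C ^ 3 * ((N : ℝ) + 1) ^ (3 * d) := by
    have : (M : ℝ) ≤ C * ((N : ℝ) + 1) ^ d := by exact_mod_cast hC N
    calc (M : ℝ) ^ 3 ≤ (C * ((N : ℝ) + 1) ^ d) ^ 3 := by gcongr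
      _ = _ := by rw [mul_pow, ← pow_mul, mul_comm d 3]
  have h1η : 0 < (1 - η) ^ N := pow_pos (by linarith) _
  have hkey : 16 * S.card * (M : ℝ) ^ 3 * (1 - η) ^ N ≤ 1 := by
    have h5 : 16 * S.card * (M : ℝ) ^ 3 ≤ ((1 - η) ^ N)⁻¹ := by
      rw [← inv_pow]
      refine le_trans ?_ hN.le
      push_cast
      rw [mul_assoc (16 * (S.card : ℝ))]
      gcongr
    calc _ ≤ ((1 - η) ^ N)⁻¹ * (1 - η) ^ N := by gcongr
      _ = 1 := inv_mul_cancel₀ h1η.ne'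
  have hfin : ∀ n, ((S : Set G) ^ n).Finite := fun n => fpow S.finite_toSet n
  set l := 4 * M ^ 2 with hl
  set X := (hfin l).toFinset with hX
  have hXcard : l + 1 ≤ X.card := by
    rw [hX, ← Set.ncard_eq_toFinset_card _ (hfin l)]
    exact ncard_pow_ge S hS h1 hgen l
  have hinv : (S : Set G)⁻¹ = S := by
    ext x; constructor
    · intro hx; simpa using hS _ (Set.mem_inv.1 hx)
    · intro hx; exact Set.mem_inv.2 (hS _ hx)
  have hlow : (1:ℝ) / M ≤ ‖(P ^ N) δ‖ ^ 2 := by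
    rw [div_le_iff₀ (by linarith)]
    exact norm_lower ρ δ hδ S h1 N
  have hself : ⟪(P ^ (2 * N)) δ, δ⟫ = ‖(P ^ N) δ‖ ^ 2 := by
    rw [two_mul, pow_add, Module.End.mul_apply, avg_pow_adj ρ hρ S hS, real_inner_self_eq_norm_sq]
  have hbig : ∀ x ∈ X, (1:ℝ) / (2 * M) ≤ ⟪ρ x δ, (P ^ (2 * N)) δ⟫ := by
    intro x hx
    have hx' : x⁻¹ ∈ (S : Set G) ^ l := by
      rw [← Set.mem_inv, ← inv_pow, hinv]
      simpa [hX] using hx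
    have hd := disp_pow ρ hρ S hS h1 ((P ^ (2 * N)) δ) ((1 - η) ^ N) h1η.le
      (by rw [← pow_mul, mul_comm N 2]; exact hgeo (2 * N)) l x⁻¹ hx'
    have h6 : ⟪δ, ρ x⁻¹ ((P ^ (2 * N)) δ) - (P ^ (2 * N)) δ⟫ ≥
        - ‖ρ x⁻¹ ((P ^ (2 * N)) δ) - (P ^ (2 * N)) δ‖ := by
      have := abs_real_inner_le_norm δ (ρ x⁻¹ ((P ^ (2 * N)) δ) - (P ^ (2 * N)) δ)
      rw [hδ1, one_mul] at this
      exact (abs_le.1 this).1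
    rw [inner_sub_right, real_inner_comm ((P ^ (2 * N)) δ) δ, hself] at h6
    rw [rho_adj ρ hρ]
    have h7 : (l:ℝ) * (2 * S.card * (1 - η) ^ N) ≤ 1 / (2 * M) := by
      rw [le_div_iff₀ (by linarith), hl]
      push_cast
      nlinarith
    have h8 : (1:ℝ) / M = 1 / (2 * M) + 1 / (2 * M) := by field_simp; norm_num
    linarith
  have hbes := hδ.sum_inner_products_le ((P ^ (2 * N)) δ) (s := X)
  have h9 : ∑ x ∈ X, ((1:ℝ) / (2 * M)) ^ 2 ≤ ∑ x ∈ X, ‖⟪ρ x δ, (P ^ (2 * N)) δ⟫‖ ^ 2 := by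
    apply Finset.sum_le_sum
    intro x hx
    rw [Real.norm_eq_abs, sq_abs]
    have := hbig x hx
    gcongr
  have h10 : ‖(P ^ (2 * N)) δ‖ ^ 2 ≤ 1 := pow_le_one₀ (norm_nonneg _) (hle _)
  rw [Finset.sum_const, nsmul_eq_mul] at h9
  have h11 : ((l : ℝ) + 1) * ((1:ℝ) / (2 * M)) ^ 2 ≤ X.card * ((1:ℝ) / (2 * M)) ^ 2 := by
    gcongr
    exact_mod_cast hXcard
  have h12 : ((l : ℝ) + 1) * ((1:ℝ) / (2 * M)) ^ 2 = 1 + ((1:ℝ) / (2 * M)) ^ 2 := by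
    rw [hl]; push_cast; field_simp; ring
  have h13 : 0 < ((1:ℝ) / (2 * M)) ^ 2 := by positivity
  linarith

end harm
end Gro

namespace Gro
open scoped Pointwise
universe v
section harm2
open scoped RealInnerProductSpace
open Filter

variable {G : Type u} [Group G] {H : Type v} [NormedAddCommGroup H] [InnerProductSpace ℝ H]

theorem exists_harmonic_abs [Infinite G] {d : ℕ} (hPG : PG G d) (ρ : G →* (H →ₗ[ℝ] H))
    (hρ : ∀ g u v, ⟪ρ g u, ρ g v⟫ = ⟪u, v⟫)
    (δ : H) (hδ : Orthonormal ℝ (fun g => ρ g δ)) (S : Finset G)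
    (hS : ∀ s ∈ S, s⁻¹ ∈ S) (h1 : 1 ∈ S)
    (hgen : Subgroup.closure (S : Set G) = ⊤) :
    ∃ f : G → ℝ, (∀ g, ∑ s ∈ S, ∑ s' ∈ S, (f (g * (s * s')) - f g) = 0) ∧
      (∃ L, ∀ g, ∀ s ∈ S, ∀ s' ∈ S, |f (g * (s * s')) - f g| ≤ L) ∧ ∃ g, f g ≠ f 1 := by
  have hNpos : 0 < (S.card : ℝ) := by
    have := Finset.card_pos.2 ⟨1, h1⟩
    positivity
  have hη : ∀ k : ℕ, 0 < 1 / ((k : ℝ) + 2) ∧ 1 / ((k : ℝ) + 2) < 1 := by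
    intro k
    constructor
    · positivity
    · rw [div_lt_one (by positivity)]; linarith [(Nat.cast_nonneg k : (0:ℝ) ≤ k)]
  choose v hv hflat using fun k : ℕ => exists_flat hPG ρ hρ δ hδ S hS h1 hgen _ (hη k).1 (hη k).2
  set E : ℕ → ℝ := fun k => ‖v k‖ ^ 2 - ‖avg ρ S (v k)‖ ^ 2 with hE
  set w : ℕ → H := fun k => (√(E k))⁻¹ • v k with hw
  have hEpos : ∀ k, 0 < √(E k) := fun k => Real.sqrt_pos.2 (hv k)
  have hnw : ∀ k, ‖w k‖ ^ 2 - ‖avg ρ S (w k)‖ ^ 2 = 1 := by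
    intro k
    simp only [hw, map_smul, norm_smul, mul_pow]
    rw [← mul_sub]
    change _ * E k = 1
    rw [norm_inv, inv_pow, Real.norm_eq_abs, sq_abs, Real.sq_sqrt (hv k).le,
      inv_mul_cancel₀ (hv k).ne']
  have hfl : ∀ k, ‖avg ρ S (avg ρ S (w k)) - w k‖ ^ 2 ≤ 1 / ((k : ℝ) + 2) := by
    intro k
    have h := hflat k
    simp only [hw, map_smul, ← smul_sub, norm_smul, mul_pow]
    rw [norm_inv, inv_pow, Real.norm_eq_abs, sq_abs, Real.sq_sqrt (hv k).le,
      inv_mul_le_iff₀ (hv k), mul_comm (E k)]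
    exact h
  clear_value w
  set b : ℕ → G → H := fun k g => ρ g (w k) - w k with hb
  have hbd : ∀ g, ∃ C : ℝ, ∀ k, ‖b k g‖ ≤ C := by
    intro g
    have hinv : (S : Set G)⁻¹ = S := by
      ext x; constructor
      · intro hx; simpa using hS _ (Set.mem_inv.1 hx)
      · intro hx; exact Set.mem_inv.2 (hS _ hx)
    obtain ⟨n, hn⟩ := subset_pow_of_closure hinv hgen g
    exact ⟨_, fun k => disp_pow ρ hρ S hS h1 (w k) 1 zero_le_one (by rw [hnw]; norm_num) n g hn⟩
  choose C hC using hbd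
  have hC0 : ∀ g, 0 ≤ C g := fun g => (norm_nonneg _).trans (hC g 0)
  have hlim : ∀ g h, ∃ F : ℝ, Tendsto (fun k => ⟪b k g, b k h⟫) (hyperfilter ℕ) (nhds F) := by
    intro g h
    have hmem : ∀ k, ⟪b k g, b k h⟫ ∈ Set.Icc (-(C g * C h)) (C g * C h) := by
      intro k
      have := abs_real_inner_le_norm (b k g) (b k h)
      rw [Set.mem_Icc, ← abs_le]
      exact this.trans (mul_le_mul (hC g k) (hC h k) (norm_nonneg _) (hC0 g))
    obtain ⟨F, -, hF⟩ := (isCompact_Icc (a := -(C g * C h)) (b := C g * C h)).ultrafilter_le_nhds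
      ((hyperfilter ℕ).map (fun k => ⟪b k g, b k h⟫))
      (by
        rw [le_principal_iff]
        exact Filter.Eventually.of_forall (f := (hyperfilter ℕ : Filter ℕ)) hmem)
    exact ⟨F, hF⟩
  choose F hF using hlim
  -- choose h
  have hex : ∃ s ∈ S, ∃ s' ∈ S, F (s * s') (s * s') ≠ 0 := by
    by_contra hcon
    push Not at hcon
    have ht : Tendsto (fun k => ∑ s ∈ S, ∑ s' ∈ S, ⟪b k (s * s'), b k (s * s')⟫) (hyperfilter ℕ)
        (nhds (∑ s ∈ S, ∑ s' ∈ S, F (s * s') (s * s'))) :=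
      tendsto_finsetSum _ fun s _ => tendsto_finsetSum _ fun s' _ => hF _ _
    have hz : ∑ s ∈ S, ∑ s' ∈ S, F (s * s') (s * s') = 0 :=
      Finset.sum_eq_zero fun s hs => Finset.sum_eq_zero fun s' hs' => hcon s hs s' hs'
    have hc : (fun k => ∑ s ∈ S, ∑ s' ∈ S, ⟪b k (s * s'), b k (s * s')⟫)
        = fun _ => 2 * (S.card : ℝ) ^ 2 := by
      funext k
      have := energy ρ hρ S hS h1 (w k)
      rw [hnw, mul_one] at this
      simp_rw [real_inner_self_eq_norm_sq]
      exact this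
    rw [hz, hc] at ht
    have := tendsto_nhds_unique ht tendsto_const_nhds
    have h3 : 0 < 2 * (S.card : ℝ) ^ 2 := by positivity
    linarith
  obtain ⟨s₀, hs₀, s₁, hs₁, hne⟩ := hex
  set h := s₀ * s₁ with hh
  have hcoc : ∀ k g x, b k (g * x) - b k g = ρ g (b k x) := by
    intro k g x
    simp only [hb, rho_mul, map_sub]; abel
  refine ⟨fun g => F g h, ?_, ⟨2 * S.card * C h, ?_⟩, h, ?_⟩
  · intro g
    have ht : Tendsto (fun k => ∑ s ∈ S, ∑ s' ∈ S, (⟪b k (g * (s * s')), b k h⟫ - ⟪b k g, b k h⟫))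
        (hyperfilter ℕ)
        (nhds (∑ s ∈ S, ∑ s' ∈ S, (F (g * (s * s')) h - F g h))) :=
      tendsto_finsetSum _ fun s _ => tendsto_finsetSum _ fun s' _ => (hF _ _).sub (hF _ _)
    refine tendsto_nhds_unique ht ?_
    have hz : Tendsto (fun k : ℕ => (S.card : ℝ) ^ 2 * √(1 / ((k : ℝ) + 2)) * C h) (hyperfilter ℕ)
        (nhds 0) := by
      have h0 : Tendsto (fun k : ℕ => (1 / ((k : ℝ) + 2))) atTop (nhds 0) := by
        have := (tendsto_one_div_add_atTop_nhds_zero_nat (𝕜 := ℝ)).comp (tendsto_add_atTop_nat 1)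
        refine this.congr fun k => ?_
        simp only [Function.comp]
        push_cast
        ring
      have h1' := ((h0.sqrt.const_mul ((S.card : ℝ) ^ 2)).mul_const (C h))
      simp only [Real.sqrt_zero, mul_zero, zero_mul] at h1'
      refine h1'.mono_left ?_
      rw [← Nat.cofinite_eq_atTop]
      exact hyperfilter_le_cofinite
    refine squeeze_zero_norm (fun k => ?_) hz
    simp_rw [← inner_sub_left, hcoc, ← sum_inner, ← map_sum]
    have hsum : ∑ s ∈ S, ∑ s' ∈ S, b k (s * s') =
        ((S.card : ℝ) ^ 2) • (avg ρ S (avg ρ S (w k)) - w k) := by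
      simp only [hb, Finset.sum_sub_distrib]
      rw [avg_sum2 ρ S h1, smul_sub]
      congr 1
      simp only [Finset.sum_const, smul_smul, ← Nat.cast_smul_eq_nsmul ℝ]
      congr 1
      ring
    rw [hsum]
    refine (abs_real_inner_le_norm _ _).trans ?_
    rw [rho_norm ρ hρ, norm_smul]
    have h5 : ‖avg ρ S (avg ρ S (w k)) - w k‖ ≤ √(1 / ((k : ℝ) + 2)) :=
      Real.le_sqrt_of_sq_le (hfl k)
    have h6 : ‖(S.card : ℝ) ^ 2‖ = (S.card : ℝ) ^ 2 := by
      rw [Real.norm_eq_abs, abs_of_nonneg (by positivity)]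
    rw [h6]
    have h7 := hC h k
    gcongr
  · intro g s hs s' hs'
    have ht := ((hF (g * (s * s')) h).sub (hF g h)).abs
    refine le_of_tendsto ht (Eventually.of_forall fun k => ?_)
    rw [← inner_sub_left, hcoc]
    refine (abs_real_inner_le_norm _ _).trans ?_
    rw [rho_norm ρ hρ]
    have h8 : ‖b k (s * s')‖ ≤ 2 * S.card := by
      have := energy_le ρ hρ S hS h1 (w k) hs hs'
      rw [hnw] at this
      refine le_of_sq_le_sq ?_ (by positivity)
      refine this.trans ?_
      nlinarith [sq_nonneg (S.card : ℝ)]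
    exact mul_le_mul h8 (hC h k) (norm_nonneg _) (by positivity)
  · have hF1 : F 1 h = 0 := by
      have : (fun k => ⟪b k 1, b k h⟫) = fun _ => (0:ℝ) := by
        funext k; simp [hb]
      have h2 := hF 1 h
      rw [this] at h2
      exact tendsto_nhds_unique h2 tendsto_const_nhds
    simp only [hF1]
    exact hne

theorem memlp_translate (g : G) (f : G → ℝ) (hf : Memℓp f 2) : Memℓp (fun x => f (g⁻¹ * x)) 2 := by
  rw [memℓp_gen_iff (by norm_num)] at hf ⊢
  exact (Equiv.summable_iff (Equiv.mulLeft g⁻¹)).2 hf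

noncomputable def regLin (g : G) : lp (fun _ : G => ℝ) 2 →ₗ[ℝ] lp (fun _ : G => ℝ) 2 where
  toFun f := ⟨fun x => f (g⁻¹ * x), memlp_translate g f (lp.memℓp f)⟩
  map_add' f f' := by ext x; rfl
  map_smul' c f := by ext x; rfl

theorem regLin_apply (g : G) (f : lp (fun _ : G => ℝ) 2) (x : G) : regLin g f x = f (g⁻¹ * x) := rfl

noncomputable def reg : G →* (lp (fun _ : G => ℝ) 2 →ₗ[ℝ] lp (fun _ : G => ℝ) 2) where
  toFun := regLin
  map_one' := by
    ext f x
    rw [regLin_apply]; simp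
  map_mul' g h := by
    ext f x
    rw [Module.End.mul_apply, regLin_apply, regLin_apply, regLin_apply, mul_inv_rev, mul_assoc]

theorem exists_harmonic [Infinite G] {d : ℕ} (hPG : PG G d) (S : Finset G)
    (hS : ∀ s ∈ S, s⁻¹ ∈ S) (h1 : 1 ∈ S)
    (hgen : Subgroup.closure (S : Set G) = ⊤) :
    ∃ f : G → ℝ, (∀ g, ∑ s ∈ S, ∑ s' ∈ S, (f (g * (s * s')) - f g) = 0) ∧
      (∃ L, ∀ g, ∀ s ∈ S, ∀ s' ∈ S, |f (g * (s * s')) - f g| ≤ L) ∧ ∃ g, f g ≠ f 1 := by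
  classical
  refine exists_harmonic_abs hPG (reg (G := G)) ?_ (lp.single 2 1 1) ?_ S hS h1 hgen
  · intro g u v
    rw [lp.inner_eq_tsum, lp.inner_eq_tsum]
    exact (Equiv.mulLeft g⁻¹).tsum_eq (fun x => inner ℝ (u x) (v x))
  · have hsing : ∀ g : G, reg g (lp.single 2 1 (1:ℝ)) = lp.single 2 g (1:ℝ) := by
      intro g
      ext x
      change (lp.single (E := fun _ : G => ℝ) 2 1 (1:ℝ)) (g⁻¹ * x) = _
      rw [lp.single_apply, lp.single_apply]
      by_cases hx : x = g
      · subst hx; simp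
      · rw [Pi.single_eq_of_ne hx, Pi.single_eq_of_ne]
        intro h; apply hx; rw [inv_mul_eq_one] at h; exact h.symm
    simp_rw [hsing]
    rw [orthonormal_iff_ite]
    intro i j
    rw [lp.inner_single_left, lp.single_apply]
    by_cases hij : i = j
    · subst hij; simp
    · simp [hij]

end harm2
end Gro

namespace Gro
open scoped Pointwise
universe v
section la
open Matrix

theorem ev_dot {n : Type*} [Fintype n] [DecidableEq n] {N : Matrix n n ℝ} (hN : N.IsHermitian) (i j : n) :
    (⇑(hN.eigenvectorBasis i) : n → ℝ) ⬝ᵥ ⇑(hN.eigenvectorBasis j) = if i = j then 1 else 0 := by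
  have := orthonormal_iff_ite.1 hN.eigenvectorBasis.orthonormal i j
  rw [← this, EuclideanSpace.inner_eq_star_dotProduct]
  simp [dotProduct_comm]

theorem det_le_of_form {n X : Type*} [Fintype n] [DecidableEq n] [Fintype X] (N : Matrix n n ℝ)
    (hN : N.PosSemidef) (h1 : ∀ x : n → ℝ, x ⬝ᵥ N *ᵥ x ≤ x ⬝ᵥ x) {k : ℕ} (hX : Fintype.card X ≤ k)
    (η : ℝ) (hη : 0 < η) (hη1 : η ≤ 1)
    (T : (n → ℝ) →ₗ[ℝ] (X → ℝ)) (hT : ∀ x, T x = 0 → x ⬝ᵥ N *ᵥ x ≤ η * (x ⬝ᵥ x)) :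
    N.det ≤ η ^ (Fintype.card n - k) := by
  classical
  have hH := hN.1
  set lam := hH.eigenvalues with hlam
  set w : n → (n → ℝ) := fun i => ⇑(hH.eigenvectorBasis i) with hw
  have hdot : ∀ i j, w i ⬝ᵥ w j = if i = j then 1 else 0 := ev_dot hH
  have hev : ∀ i, N *ᵥ w i = lam i • w i := fun i => hH.mulVec_eigenvectorBasis i
  have h0 : ∀ i, 0 ≤ lam i := fun i => hN.eigenvalues_nonneg i
  have hle1 : ∀ i, lam i ≤ 1 := by
    intro i
    have := h1 (w i)
    rw [hev, dotProduct_smul, hdot] at this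
    simpa using this
  set I := Finset.univ.filter (fun i => η < lam i) with hI
  have hIk : I.card ≤ k := by
    by_contra hcon
    push Not at hcon
    let Φ : (I → ℝ) →ₗ[ℝ] (X → ℝ) := T ∘ₗ (Fintype.linearCombination ℝ (fun i : I => w i))
    have hker : LinearMap.ker Φ ≠ ⊥ := by
      apply LinearMap.ker_ne_bot_of_finrank_lt
      simp
      omega
    obtain ⟨c, hc, hc0⟩ := Submodule.exists_mem_ne_zero_of_ne_bot hker
    set x : n → ℝ := ∑ i : I, c i • w i with hx
    have hTx : T x = 0 := by
      have : Φ c = 0 := hc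
      rw [hx]; exact this
    have hA : x ⬝ᵥ x = ∑ i : I, c i ^ 2 := by
      rw [hx]
      simp only [sum_dotProduct, dotProduct_sum, smul_dotProduct, dotProduct_smul, hdot]
      refine Finset.sum_congr rfl fun i _ => ?_
      rw [Finset.sum_eq_single i]
      · simp [sq]
      · intro j _ hj
        have : ¬ (j : n) = i := fun h => hj (Subtype.ext h)
        rw [if_neg this]; simp
      · simp
    have hB : x ⬝ᵥ N *ᵥ x = ∑ i : I, lam i * c i ^ 2 := by
      have : N *ᵥ x = ∑ i : I, (c i * lam i) • w i := by
        rw [hx, Matrix.mulVec_sum]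
        refine Finset.sum_congr rfl fun i _ => ?_
        rw [Matrix.mulVec_smul, hev, smul_smul]
      rw [this, hx]
      simp only [sum_dotProduct, dotProduct_sum, smul_dotProduct, dotProduct_smul, hdot]
      refine Finset.sum_congr rfl fun i _ => ?_
      rw [Finset.sum_eq_single i]
      · simp; ring
      · intro j _ hj
        have : ¬ (j : n) = i := fun h => hj (Subtype.ext h)
        rw [if_neg this]; simp
      · simp
    have := hT x hTx
    rw [hA, hB, Finset.mul_sum] at this
    refine absurd this (not_le.2 ?_)
    have hlt : ∀ i : I, η < lam i := fun i => by
      exact (Finset.mem_filter.1 i.2).2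
    obtain ⟨i, hi⟩ : ∃ i, c i ≠ 0 := by
      by_contra h; push Not at h; exact hc0 (funext h)
    apply Finset.sum_lt_sum
    · intro i _
      exact mul_le_mul_of_nonneg_right (hlt i).le (sq_nonneg _)
    · exact ⟨i, Finset.mem_univ _, mul_lt_mul_of_pos_right (hlt i) (by positivity)⟩
  have hdet : N.det = ∏ i, lam i := by
    have := hH.det_eq_prod_eigenvalues
    simpa using this
  rw [hdet, ← Finset.prod_mul_prod_compl I]
  have hp1 : ∏ i ∈ I, lam i ≤ 1 := Finset.prod_le_one (fun i _ => h0 i) (fun i _ => hle1 i)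
  have hp2 : ∏ i ∈ Iᶜ, lam i ≤ η ^ (Iᶜ).card := by
    rw [← Finset.prod_const]
    apply Finset.prod_le_prod (fun i _ => h0 i)
    intro i hi
    simp [hI] at hi
    exact hi
  calc _ ≤ 1 * η ^ (Iᶜ).card := mul_le_mul hp1 hp2 (Finset.prod_nonneg fun i _ => h0 i) zero_le_one
    _ ≤ _ := by
      rw [one_mul]
      apply pow_le_pow_of_le_one hη.le hη1
      rw [Finset.card_compl]
      omega

open scoped MatrixOrder in
theorem exists_normalize {n : Type*} [Fintype n] [DecidableEq n] (Q : Matrix n n ℝ) (hQ : Q.PosDef) :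
    ∃ B : Matrix n n ℝ, Bᵀ * Q * B = 1 := by
  set C := CFC.sqrt Q with hC
  have hCC : C * C = Q := CFC.sqrt_mul_sqrt_self Q (nonneg_iff_posSemidef.2 hQ.posSemidef)
  have hCs : Cᵀ = C := by
    have : C.PosSemidef := nonneg_iff_posSemidef.1 (CFC.sqrt_nonneg Q)
    simpa using this.1.eq
  have hdet : IsUnit C.det := by
    have := hQ.det_pos
    rw [← hCC, det_mul] at this
    exact isUnit_iff_ne_zero.2 (fun h => by simp [h] at this)
  refine ⟨C⁻¹, ?_⟩
  rw [transpose_nonsing_inv, hCs, ← hCC, mul_assoc, mul_assoc, mul_nonsing_inv _ hdet, mul_one,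
    nonsing_inv_mul _ hdet]

theorem det_le_of_forms {n X : Type*} [Fintype n] [DecidableEq n] [Fintype X] (P Q : Matrix n n ℝ)
    (hP : P.PosSemidef) (hQ : Q.PosDef)
    (h1 : ∀ x : n → ℝ, x ⬝ᵥ P *ᵥ x ≤ x ⬝ᵥ Q *ᵥ x) {k : ℕ} (hX : Fintype.card X ≤ k)
    (η : ℝ) (hη : 0 < η) (hη1 : η ≤ 1)
    (T : (n → ℝ) →ₗ[ℝ] (X → ℝ)) (hT : ∀ x, T x = 0 → x ⬝ᵥ P *ᵥ x ≤ η * (x ⬝ᵥ Q *ᵥ x)) :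
    P.det ≤ η ^ (Fintype.card n - k) * Q.det := by
  obtain ⟨B, hB⟩ := exists_normalize Q hQ
  have hform : ∀ (M : Matrix n n ℝ) (x : n → ℝ), x ⬝ᵥ (Bᵀ * M * B) *ᵥ x = (B *ᵥ x) ⬝ᵥ M *ᵥ (B *ᵥ x) := by
    intro M x
    rw [← mulVec_mulVec, ← mulVec_mulVec, dotProduct_mulVec, vecMul_transpose]
  have hQ1 : ∀ x : n → ℝ, (B *ᵥ x) ⬝ᵥ Q *ᵥ (B *ᵥ x) = x ⬝ᵥ x := by
    intro x; rw [← hform, hB, one_mulVec]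
  have := det_le_of_form (Bᵀ * P * B) (by simpa using hP.conjTranspose_mul_mul_same B)
    (fun x => by rw [hform, ← hQ1]; exact h1 _) hX η hη hη1 (T ∘ₗ B.mulVecLin)
    (fun x hx => by rw [hform, ← hQ1]; exact hT _ hx)
  rw [det_mul, det_mul, det_transpose] at this
  have hd : B.det * Q.det * B.det = 1 := by
    have := congrArg det hB
    rwa [det_mul, det_mul, det_transpose, det_one] at this
  have hq := hQ.det_pos
  calc P.det = (B.det * P.det * B.det) * Q.det := by
        rw [show B.det * P.det * B.det * Q.det = P.det * (B.det * Q.det * B.det) by ring, hd, mul_one]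
    _ ≤ _ := mul_le_mul_of_nonneg_right this hq.le

end la
end Gro

namespace Gro
open scoped Pointwise
universe v
section kl

variable {G : Type u} [Group G] [DecidableEq G] {ι : Type v} [Fintype ι]

def Ba (σ : ι → G) (r : ℕ) : Finset G := (Finset.univ.image σ) ^ r

structure WS (σ : ι → G) : Prop where
  one : ∃ i, σ i = 1
  sym : ∃ τ : ι ≃ ι, ∀ i, σ (τ i) = (σ i)⁻¹

variable {σ : ι → G}

theorem Ba_mul {r s : ℕ} {a b : G} (ha : a ∈ Ba σ r) (hb : b ∈ Ba σ s) : a * b ∈ Ba σ (r + s) := by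
  rw [Ba, pow_add]; exact Finset.mul_mem_mul ha hb

theorem Ba_one (i : ι) : σ i ∈ Ba σ 1 := by
  rw [Ba, pow_one]; exact Finset.mem_image_of_mem _ (Finset.mem_univ _)

theorem WS.mono (h : WS σ) {r s : ℕ} (hrs : r ≤ s) : Ba σ r ⊆ Ba σ s := by
  obtain ⟨i, hi⟩ := h.one
  exact Finset.pow_subset_pow_right (by rw [← hi]; exact Finset.mem_image_of_mem _ (Finset.mem_univ _)) hrs

theorem WS.mul_mem (h : WS σ) {r s t : ℕ} {a b : G} (ha : a ∈ Ba σ r) (hb : b ∈ Ba σ s) (hrs : r + s ≤ t) :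
    a * b ∈ Ba σ t := h.mono hrs (Ba_mul ha hb)

theorem WS.one_mem (h : WS σ) (r : ℕ) : (1 : G) ∈ Ba σ r :=
  h.mono (Nat.zero_le r) (by simp [Ba])

theorem WS.inv_mem (h : WS σ) {r : ℕ} {a : G} (ha : a ∈ Ba σ r) : a⁻¹ ∈ Ba σ r := by
  obtain ⟨τ, hτ⟩ := h.sym
  have : (Finset.univ.image σ)⁻¹ = Finset.univ.image σ := by
    ext x
    simp only [Finset.mem_inv', Finset.mem_image, Finset.mem_univ, true_and]
    constructor
    · rintro ⟨i, hi⟩; exact ⟨τ i, by rw [hτ, hi, inv_inv]⟩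
    · rintro ⟨i, hi⟩; exact ⟨τ i, by rw [hτ, hi]⟩
  rw [← Finset.mem_inv', Ba, ← inv_pow, this]
  exact ha

noncomputable def En (σ : ι → G) (f : G → ℝ) (r : ℕ) : ℝ :=
  ∑ b ∈ Ba σ r, ∑ i, (f (b * σ i) - f b) ^ 2

noncomputable def Qn (σ : ι → G) (f : G → ℝ) (r : ℕ) : ℝ := ∑ b ∈ Ba σ r, f b ^ 2

theorem Qn_nonneg (f : G → ℝ) (r : ℕ) : 0 ≤ Qn σ f r := Finset.sum_nonneg fun _ _ => sq_nonneg _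
theorem En_nonneg (f : G → ℝ) (r : ℕ) : 0 ≤ En σ f r :=
  Finset.sum_nonneg fun _ _ => Finset.sum_nonneg fun _ _ => sq_nonneg _

theorem WS.Qn_mono (h : WS σ) (f : G → ℝ) {r s : ℕ} (hrs : r ≤ s) : Qn σ f r ≤ Qn σ f s :=
  Finset.sum_le_sum_of_subset_of_nonneg (h.mono hrs) fun _ _ _ => sq_nonneg _
theorem WS.En_mono (h : WS σ) (f : G → ℝ) {r s : ℕ} (hrs : r ≤ s) : En σ f r ≤ En σ f s :=
  Finset.sum_le_sum_of_subset_of_nonneg (h.mono hrs) fun _ _ _ => Finset.sum_nonneg fun _ _ => sq_nonneg _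

/-- injective-translate sum bound -/
theorem WS.sum_translate_le (h : WS σ) (K : G → ℝ) (hK : ∀ g, 0 ≤ K g) {r s t : ℕ} {y : G}
    (hy : y ∈ Ba σ s) (hrs : r + s ≤ t) : ∑ b ∈ Ba σ r, K (b * y) ≤ ∑ b ∈ Ba σ t, K b := by
  have : ∑ b ∈ Ba σ r, K (b * y) = ∑ b ∈ (Ba σ r).image (· * y), K b := by
    rw [Finset.sum_image]
    intro a _ b _ hab
    exact mul_right_cancel hab
  rw [this]
  refine Finset.sum_le_sum_of_subset_of_nonneg ?_ fun _ _ _ => hK _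
  intro g hg
  obtain ⟨b, hb, rfl⟩ := Finset.mem_image.1 hg
  exact h.mul_mem hb hy hrs

theorem WS.disp (h : WS σ) (f : G → ℝ) (n m R : ℕ) (hR : m + n ≤ R) (y : G) (hy : y ∈ Ba σ n) :
    ∑ b ∈ Ba σ m, (f (b * y) - f b) ^ 2 ≤ (n : ℝ) ^ 2 * En σ f R := by
  induction n generalizing y with
  | zero =>
    have : y = 1 := by simpa [Ba] using hy
    subst this; simp
  | succ n ih =>
    rw [Ba, pow_succ] at hy
    obtain ⟨z, hz, t, ht, rfl⟩ := Finset.mem_mul.1 hy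
    obtain ⟨i, -, rfl⟩ := Finset.mem_image.1 ht
    have h1 := ih (by omega) z hz
    have h2 : ∑ b ∈ Ba σ m, (f (b * z * σ i) - f (b * z)) ^ 2 ≤ En σ f R := by
      refine (h.sum_translate_le (fun g => (f (g * σ i) - f g) ^ 2) (fun _ => sq_nonneg _) hz
        (by omega : m + n ≤ R)).trans ?_
      refine Finset.sum_le_sum fun b _ => ?_
      exact Finset.single_le_sum (f := fun i => (f (b * σ i) - f b) ^ 2) (fun _ _ => sq_nonneg _) (Finset.mem_univ i)
    rcases Nat.eq_zero_or_pos n with rfl | hn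
    · have : z = 1 := by simpa [Ba] using hz
      subst this
      simpa using h2
    have hn' : (0:ℝ) < n := by exact_mod_cast hn
    have h3 : ∀ a b : ℝ, (a + b) ^ 2 ≤ (1 + 1 / (n:ℝ)) * a ^ 2 + (1 + n) * b ^ 2 := by
      intro a b
      have : (1 + 1 / (n:ℝ)) * a ^ 2 + (1 + n) * b ^ 2 - (a + b) ^ 2 = (a - n * b) ^ 2 / n := by
        field_simp; ring
      have h4 : 0 ≤ (a - n * b) ^ 2 / n := by positivity
      linarith
    calc ∑ b ∈ Ba σ m, (f (b * (z * σ i)) - f b) ^ 2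
        ≤ ∑ b ∈ Ba σ m, ((1 + 1 / (n:ℝ)) * (f (b * z) - f b) ^ 2
            + (1 + n) * (f (b * z * σ i) - f (b * z)) ^ 2) := by
          refine Finset.sum_le_sum fun b _ => ?_
          have := h3 (f (b * z) - f b) (f (b * z * σ i) - f (b * z))
          rw [← mul_assoc]
          refine le_trans (le_of_eq ?_) this
          ring
      _ = (1 + 1 / (n:ℝ)) * ∑ b ∈ Ba σ m, (f (b * z) - f b) ^ 2
            + (1 + n) * ∑ b ∈ Ba σ m, (f (b * z * σ i) - f (b * z)) ^ 2 := by
          rw [Finset.sum_add_distrib, Finset.mul_sum, Finset.mul_sum]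
      _ ≤ (1 + 1 / (n:ℝ)) * ((n:ℝ) ^ 2 * En σ f R) + (1 + n) * En σ f R := by gcongr
      _ = _ := by push_cast; field_simp; ring

theorem WS.poincare (h : WS σ) (f : G → ℝ) (r : ℕ) (hf : ∑ b ∈ Ba σ r, f b = 0) :
    ((Ba σ r).card : ℝ) * Qn σ f r ≤ ((Ba σ (2 * r)).card : ℝ) * (2 * (r:ℝ) ^ 2 * En σ f (3 * r)) := by
  have h1 : ∑ b ∈ Ba σ r, ∑ c ∈ Ba σ r, (f c - f b) ^ 2 = 2 * ((Ba σ r).card * Qn σ f r) := by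
    have : ∀ b c, (f c - f b) ^ 2 = f c ^ 2 - 2 * f b * f c + f b ^ 2 := fun b c => by ring
    simp_rw [this, Finset.sum_add_distrib, Finset.sum_sub_distrib, ← Finset.mul_sum, hf]
    simp [Qn]
    rw [← Finset.mul_sum]; ring
  have h2 : ∑ b ∈ Ba σ r, ∑ c ∈ Ba σ r, (f c - f b) ^ 2
      ≤ ∑ b ∈ Ba σ r, ∑ y ∈ Ba σ (2 * r), (f (b * y) - f b) ^ 2 := by
    refine Finset.sum_le_sum fun b hb => ?_
    have : ∑ c ∈ Ba σ r, (f c - f b) ^ 2 = ∑ y ∈ (Ba σ r).image (b⁻¹ * ·), (f (b * y) - f b) ^ 2 := by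
      rw [Finset.sum_image]
      · simp
      · intro a _ b _ hab; exact mul_left_cancel hab
    rw [this]
    refine Finset.sum_le_sum_of_subset_of_nonneg ?_ fun _ _ _ => sq_nonneg _
    intro y hy
    obtain ⟨c, hc, rfl⟩ := Finset.mem_image.1 hy
    exact h.mul_mem (h.inv_mem hb) hc (by omega)
  rw [Finset.sum_comm] at h2
  have h3 : ∑ y ∈ Ba σ (2 * r), ∑ b ∈ Ba σ r, (f (b * y) - f b) ^ 2
      ≤ ∑ y ∈ Ba σ (2 * r), ((2 * r : ℕ) : ℝ) ^ 2 * En σ f (3 * r) :=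
    Finset.sum_le_sum fun y hy => h.disp f (2 * r) r (3 * r) (by omega) y hy
  rw [Finset.sum_const, nsmul_eq_mul] at h3
  rw [Finset.sum_comm] at h2
  rw [h1] at h2
  rw [Finset.sum_comm] at h2
  have := h2.trans h3
  push_cast at this
  nlinarith

/-! Caccioppoli -/
def Har (σ : ι → G) (f : G → ℝ) : Prop := ∀ g, ∑ i, (f (g * σ i) - f g) = 0

theorem WS.har_inv (h : WS σ) {f : G → ℝ} (hf : Har σ f) (g : G) : ∑ i, (f (g * (σ i)⁻¹) - f g) = 0 := by
  obtain ⟨τ, hτ⟩ := h.sym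
  rw [← hf g, ← Equiv.sum_comp τ]
  refine Finset.sum_congr rfl fun i _ => ?_
  rw [hτ, inv_inv] 

theorem WS.reindex (h : WS σ) (K : G → ℝ) (m : ℕ) (hK : ∀ g, K g ≠ 0 → g ∈ Ba σ m) (i : ι) :
    ∑ g ∈ Ba σ (m + 1), K (g * σ i) = ∑ g ∈ Ba σ (m + 1), K g := by
  rw [← finsum_eq_sum_of_support_subset, ← finsum_eq_sum_of_support_subset]
  · exact finsum_comp_equiv (Equiv.mulRight (σ i)) (f := K)
  · intro g hg
    exact h.mono (Nat.le_succ m) (hK g hg)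
  · intro g hg
    have := h.mul_mem (hK _ hg) (h.inv_mem (Ba_one (σ := σ) i)) le_rfl
    simpa using this

theorem WS.green (h : WS σ) {f : G → ℝ} (hf : Har σ f) (w : G → ℝ) (m : ℕ)
    (hw : ∀ g, w g ≠ 0 → g ∈ Ba σ m) :
    ∑ g ∈ Ba σ (m + 1), ∑ i, (f (g * σ i) - f g) * (w (g * σ i) - w g) = 0 := by
  have h1 : ∑ g ∈ Ba σ (m + 1), ∑ i, (f (g * σ i) - f g) * w g = 0 := by
    refine Finset.sum_eq_zero fun g _ => ?_
    rw [← Finset.sum_mul, hf g, zero_mul]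
  have h2 : ∑ g ∈ Ba σ (m + 1), ∑ i, (f (g * σ i) - f g) * w (g * σ i) = 0 := by
    rw [Finset.sum_comm]
    have : ∀ i, ∑ g ∈ Ba σ (m + 1), (f (g * σ i) - f g) * w (g * σ i)
        = ∑ g ∈ Ba σ (m + 1), (f g - f (g * (σ i)⁻¹)) * w g := by
      intro i
      rw [← h.reindex (fun g => (f g - f (g * (σ i)⁻¹)) * w g) m (fun g hg => hw g (right_ne_zero_of_mul hg)) i]
      simp
    rw [Finset.sum_congr rfl fun i _ => this i, Finset.sum_comm]
    refine Finset.sum_eq_zero fun g _ => ?_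
    rw [← Finset.sum_mul]
    have h3 := h.har_inv hf g
    have : ∑ i, (f g - f (g * (σ i)⁻¹)) = 0 := by
      rw [← neg_eq_zero, ← Finset.sum_neg_distrib, ← h3]
      exact Finset.sum_congr rfl fun i _ => by ring
    rw [this, zero_mul]
  simp_rw [mul_sub, Finset.sum_sub_distrib]
  rw [h1, h2, sub_zero]

noncomputable def cut (σ : ι → G) (R : ℕ) (g : G) : ℝ :=
  (∑ j ∈ Finset.range R, if g ∈ Ba σ (R + j + 1) then (1:ℝ) else 0) / R

theorem cut_supp (h : WS σ) (R : ℕ) (g : G) (hg : cut σ R g ≠ 0) : g ∈ Ba σ (2 * R) := by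
  by_contra hcon
  apply hg
  rw [cut, Finset.sum_eq_zero, zero_div]
  intro j hj
  rw [if_neg]
  intro hmem
  exact hcon (h.mono (by have := Finset.mem_range.1 hj; omega) hmem)

theorem cut_one (h : WS σ) (R : ℕ) (hR : 0 < R) (g : G) (hg : g ∈ Ba σ (R + 1)) : cut σ R g = 1 := by
  rw [cut, Finset.sum_congr rfl fun j _ => if_pos (h.mono (by omega) hg)]
  have : (R : ℝ) ≠ 0 := by positivity
  simp [this]

theorem cut_le (h : WS σ) (R : ℕ) (hR : 0 < R) (x y : G) (hxy : ∀ j, x ∈ Ba σ j → y ∈ Ba σ (j + 1)) :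
    cut σ R x ≤ cut σ R y + 1 / R := by
  rw [cut, cut, ← add_div]
  have hR' : (0:ℝ) < R := by positivity
  apply div_le_div_of_nonneg_right _ hR'.le
  obtain ⟨R', rfl⟩ : ∃ R', R = R' + 1 := ⟨R - 1, by omega⟩
  rw [Finset.sum_range_succ]
  rw [Finset.sum_range_succ' _ R']
  have h1 : ∑ j ∈ Finset.range R', (if x ∈ Ba σ (R' + 1 + j + 1) then (1:ℝ) else 0)
      ≤ ∑ j ∈ Finset.range R', (if y ∈ Ba σ (R' + 1 + (j + 1) + 1) then (1:ℝ) else 0) := by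
    refine Finset.sum_le_sum fun j _ => ?_
    split_ifs with h1 h2
    · rfl
    · exact absurd (hxy _ h1) h2
    · norm_num
    · rfl
  have h2 : (if x ∈ Ba σ (R' + 1 + R' + 1) then (1:ℝ) else 0) ≤ 1 := by split_ifs <;> norm_num
  have h3 : (0:ℝ) ≤ (if y ∈ Ba σ (R' + 1 + 0 + 1) then (1:ℝ) else 0) := by split_ifs <;> norm_num
  linarith

theorem WS.caccioppoli (h : WS σ) {f : G → ℝ} (hf : Har σ f) (R : ℕ) (hR : 0 < R) :
    (R : ℝ) ^ 2 * En σ f R ≤ Fintype.card ι * Qn σ f (4 * R) := by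
  have hR' : (0:ℝ) < R := by positivity
  set φ := cut σ R with hφ
  set U := Ba σ (2 * R + 1) with hU
  have hlip : ∀ g i, (φ g - φ (g * σ i)) ^ 2 ≤ 1 / (R:ℝ) ^ 2 := by
    intro g i
    have h1 := cut_le h R hR g (g * σ i) (fun j hj => h.mul_mem hj (Ba_one i) le_rfl)
    have h2 := cut_le h R hR (g * σ i) g (fun j hj => by
      have := h.mul_mem hj (h.inv_mem (Ba_one i)) le_rfl
      simpa using this)
    rw [show 1 / (R:ℝ) ^ 2 = (1 / (R:ℝ)) ^ 2 by ring]
    apply sq_le_sq'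
    · linarith
    · linarith
  have hg := h.green hf (fun g => φ g ^ 2 * f g) (2 * R) (fun g hg => cut_supp h R g (by
    intro h0; apply hg; simp [hφ, h0]))
  have hid : ∀ g i, (f (g * σ i) - f g) * (φ (g * σ i) ^ 2 * f (g * σ i) - φ g ^ 2 * f g)
      = (φ (g * σ i) * f (g * σ i) - φ g * f g) ^ 2 - f g * f (g * σ i) * (φ g - φ (g * σ i)) ^ 2 := by
    intro g i; ring
  simp_rw [hid, Finset.sum_sub_distrib] at hg
  have hlow : En σ f R ≤ ∑ g ∈ U, ∑ i, (φ (g * σ i) * f (g * σ i) - φ g * f g) ^ 2 := by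
    calc En σ f R = ∑ g ∈ Ba σ R, ∑ i, (φ (g * σ i) * f (g * σ i) - φ g * f g) ^ 2 := by
          refine Finset.sum_congr rfl fun g hg => Finset.sum_congr rfl fun i _ => ?_
          rw [hφ, cut_one h R hR g (h.mono (by omega) hg), cut_one h R hR _ (h.mul_mem hg (Ba_one i) le_rfl)]
          ring
      _ ≤ _ := Finset.sum_le_sum_of_subset_of_nonneg (h.mono (by omega)) fun _ _ _ =>
            Finset.sum_nonneg fun _ _ => sq_nonneg _
  have hup : ∑ g ∈ U, ∑ i, f g * f (g * σ i) * (φ g - φ (g * σ i)) ^ 2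
      ≤ ∑ g ∈ U, ∑ i, (1 / (R:ℝ) ^ 2) * ((f g ^ 2 + f (g * σ i) ^ 2) / 2) := by
    refine Finset.sum_le_sum fun g _ => Finset.sum_le_sum fun i _ => ?_
    have h1 : f g * f (g * σ i) ≤ (f g ^ 2 + f (g * σ i) ^ 2) / 2 := by
      nlinarith [sq_nonneg (f g - f (g * σ i))]
    calc f g * f (g * σ i) * (φ g - φ (g * σ i)) ^ 2
        ≤ ((f g ^ 2 + f (g * σ i) ^ 2) / 2) * (φ g - φ (g * σ i)) ^ 2 := by gcongr
      _ ≤ ((f g ^ 2 + f (g * σ i) ^ 2) / 2) * (1 / (R:ℝ) ^ 2) := by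
          gcongr
          exact hlip g i
      _ = _ := by ring
  have hsum : ∑ g ∈ U, ∑ i, (1 / (R:ℝ) ^ 2) * ((f g ^ 2 + f (g * σ i) ^ 2) / 2)
      ≤ (1 / (R:ℝ) ^ 2) * (Fintype.card ι * Qn σ f (4 * R)) := by
    simp_rw [← Finset.mul_sum]
    gcongr
    rw [Finset.sum_comm]
    have : ∀ i, ∑ g ∈ U, (f g ^ 2 + f (g * σ i) ^ 2) / 2 ≤ Qn σ f (4 * R) := by
      intro i
      rw [← Finset.sum_div, Finset.sum_add_distrib]
      have h1 : ∑ g ∈ U, f g ^ 2 ≤ Qn σ f (4 * R) := h.Qn_mono f (by omega)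
      have h2 : ∑ g ∈ U, f (g * σ i) ^ 2 ≤ Qn σ f (4 * R) :=
        h.sum_translate_le (fun g => f g ^ 2) (fun _ => sq_nonneg _) (Ba_one i) (by omega)
      linarith
    refine (Finset.sum_le_sum fun i _ => this i).trans ?_
    simp
  have : En σ f R ≤ (1 / (R:ℝ) ^ 2) * (Fintype.card ι * Qn σ f (4 * R)) := by linarith
  calc (R:ℝ)^2 * En σ f R ≤ (R:ℝ)^2 * ((1 / (R:ℝ) ^ 2) * (Fintype.card ι * Qn σ f (4 * R))) := by gcongr
    _ = _ := by field_simp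

end kl
end Gro

namespace Gro
open scoped Pointwise
universe v
section kl2

variable {G : Type u} [Group G] [DecidableEq G] {ι : Type v} [Fintype ι] {σ : ι → G}

def Sep (σ : ι → G) (r : ℕ) (X : Finset G) : Prop :=
  ∀ x ∈ X, ∀ y ∈ X, x ≠ y → ∀ a ∈ Ba σ r, ∀ b ∈ Ba σ r, x * a ≠ y * b

theorem Sep.card_le {r : ℕ} {X : Finset G} (hX : Sep σ r X) (Y Z : Finset G) (hY : Y ⊆ X)
    (hZ : ∀ x ∈ Y, ∀ a ∈ Ba σ r, x * a ∈ Z) : Y.card * (Ba σ r).card ≤ Z.card := by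
  rw [← Finset.card_product]
  refine Finset.card_le_card_of_injOn (fun p => p.1 * p.2) ?_ ?_
  · rintro ⟨x, a⟩ hp
    have := Finset.mem_product.1 (Finset.mem_coe.1 hp)
    exact hZ x this.1 a this.2
  · rintro ⟨x, a⟩ hp ⟨y, b⟩ hq hpq
    have h1 := Finset.mem_product.1 (Finset.mem_coe.1 hp)
    have h2 := Finset.mem_product.1 (Finset.mem_coe.1 hq)
    have hxy : x = y := by
      by_contra hne
      exact hX x (hY h1.1) y (hY h2.1) hne a h1.2 b h2.2 hpq
    subst hxy
    have : a = b := mul_left_cancel hpq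
    rw [this]

theorem WS.exists_net (h : WS σ) (r R : ℕ) : ∃ X ⊆ Ba σ R, Sep σ r X ∧
    ∀ g ∈ Ba σ R, ∃ x ∈ X, ∃ b ∈ Ba σ (2 * r), x * b = g := by
  classical
  obtain ⟨X, hX, hmax⟩ := Finset.exists_max_image ((Ba σ R).powerset.filter (fun X => Sep σ r X))
    Finset.card ⟨∅, Finset.mem_filter.2 ⟨by simp, fun x hx => by simp at hx⟩⟩
  rw [Finset.mem_filter, Finset.mem_powerset] at hX
  refine ⟨X, hX.1, hX.2, fun g hg => ?_⟩
  by_contra hcon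
  push Not at hcon
  have hgX : g ∉ X := fun hgX => hcon g hgX 1 (h.one_mem _) (mul_one g)
  have key : ∀ x ∈ X, ∀ a ∈ Ba σ r, ∀ b ∈ Ba σ r, x * a ≠ g * b := by
    intro x hx a ha b hb hab
    refine hcon x hx (a * b⁻¹) (h.mul_mem ha (h.inv_mem hb) (by omega)) ?_
    rw [← mul_assoc, hab]; simp
  have hsep : Sep σ r (insert g X) := by
    intro x hx y hy hxy a ha b hb hab
    rcases Finset.mem_insert.1 hx with hx1 | hx1
    · rcases Finset.mem_insert.1 hy with hy1 | hy1
      · exact hxy (hx1.trans hy1.symm)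
      · rw [hx1] at hab; exact key y hy1 b hb a ha hab.symm
    · rcases Finset.mem_insert.1 hy with hy1 | hy1
      · rw [hy1] at hab; exact key x hx1 a ha b hb hab
      · exact hX.2 x hx1 y hy1 hxy a ha b hb hab
  have := hmax (insert g X) (by
    rw [Finset.mem_filter, Finset.mem_powerset]
    exact ⟨Finset.insert_subset hg hX.1, hsep⟩)
  rw [Finset.card_insert_of_notMem hgX] at this
  omega

theorem WS.step (h : WS σ) (r' R K k : ℕ) (hr' : 0 < r') (hR : 16 * r' ≤ R)
    (hK : (Ba σ (16 * (16 * r'))).card ≤ K * (Ba σ r').card)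
    (hk : (Ba σ (16 * R)).card ≤ k * (Ba σ r').card) :
    ∃ X : Finset G, X.card ≤ k ∧ ∀ f : G → ℝ, Har σ f →
      (∀ x ∈ X, ∑ b ∈ Ba σ (16 * r'), f (x * b) = 0) →
      Qn σ f R ≤ ((K:ℝ) ^ 2 * Fintype.card ι * ((16 * r' : ℕ):ℝ) ^ 2 / (8 * (R:ℝ) ^ 2)) * Qn σ f (16 * R) := by
  set r := 16 * r' with hr
  have hBpos : 0 < (Ba σ r').card := Finset.card_pos.2 ⟨1, h.one_mem _⟩
  have hRpos : (0:ℝ) < R := by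
    have : 0 < R := by omega
    exact_mod_cast this
  obtain ⟨X, hXR, hsep, hcov⟩ := h.exists_net r' R
  refine ⟨X, ?_, ?_⟩
  · have := hsep.card_le X (Ba σ (16 * R)) subset_rfl (fun x hx a ha => h.mul_mem (hXR hx) ha (by omega))
    exact Nat.le_of_mul_le_mul_right (this.trans hk) hBpos
  intro f hf hmean
  have h1 : Qn σ f R ≤ ∑ x ∈ X, Qn σ (fun g => f (x * g)) r := by
    choose! x hx b hb hxb using hcov
    have : Qn σ f R = ∑ p ∈ (Ba σ R).image (fun g => (x g, b g)), f (p.1 * p.2) ^ 2 := by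
      rw [Finset.sum_image]
      · exact Finset.sum_congr rfl fun g hg => by rw [hxb g hg]
      · intro g hg g' hg' hgg
        have h1 : x g = x g' := congrArg Prod.fst hgg
        have h2 : b g = b g' := congrArg Prod.snd hgg
        rw [← hxb g hg, ← hxb g' hg', h1, h2]
    rw [this]
    unfold Qn
    rw [← Finset.sum_product' X (Ba σ r) (fun x b => f (x * b) ^ 2)]
    refine Finset.sum_le_sum_of_subset_of_nonneg ?_ fun _ _ _ => sq_nonneg _
    intro p hp
    obtain ⟨g, hg, rfl⟩ := Finset.mem_image.1 hp
    exact Finset.mem_product.2 ⟨hx g hg, h.mono (by omega) (hb g hg)⟩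
  have h2 : ∀ x ∈ X, Qn σ (fun g => f (x * g)) r ≤ 2 * K * (r:ℝ) ^ 2 * En σ (fun g => f (x * g)) (3 * r) := by
    intro x hx
    have hp := h.poincare (fun g => f (x * g)) r (hmean x hx)
    have hc : ((Ba σ (2 * r)).card : ℝ) ≤ K * (Ba σ r).card := by
      have h1 : (Ba σ (2 * r)).card ≤ (Ba σ (16 * r)).card := Finset.card_le_card (h.mono (by omega))
      have h2 : (Ba σ r').card ≤ (Ba σ r).card := Finset.card_le_card (h.mono (by omega))
      have : (Ba σ (2 * r)).card ≤ K * (Ba σ r).card := h1.trans (hK.trans (Nat.mul_le_mul_left K h2))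
      exact_mod_cast this
    have hpos : (0:ℝ) < (Ba σ r).card := by exact_mod_cast Finset.card_pos.2 ⟨1, h.one_mem _⟩
    have he := En_nonneg (σ := σ) (fun g => f (x * g)) (3 * r)
    have h3 : ((Ba σ r).card : ℝ) * Qn σ (fun g => f (x * g)) r ≤
        (Ba σ r).card * (2 * K * (r:ℝ) ^ 2 * En σ (fun g => f (x * g)) (3 * r)) := by
      refine hp.trans ?_
      calc _ ≤ (K * (Ba σ r).card : ℝ) * (2 * (r:ℝ) ^ 2 * En σ (fun g => f (x * g)) (3 * r)) := by gcongr
        _ = _ := by ring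
    exact le_of_mul_le_mul_left h3 hpos
  have h3 : ∑ x ∈ X, En σ (fun g => f (x * g)) (3 * r) ≤ K * En σ f (4 * R) := by
    set e : G → ℝ := fun g => ∑ i, (f (g * σ i) - f g) ^ 2 with he
    have he0 : ∀ g, 0 ≤ e g := fun g => Finset.sum_nonneg fun _ _ => sq_nonneg _
    have h4 : ∀ x ∈ X, En σ (fun g => f (x * g)) (3 * r)
        ≤ ∑ g ∈ Ba σ (4 * R), if x⁻¹ * g ∈ Ba σ (3 * r) then e g else 0 := by
      intro x hx
      have : En σ (fun g => f (x * g)) (3 * r) = ∑ g ∈ (Ba σ (3 * r)).image (x * ·), 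
          if x⁻¹ * g ∈ Ba σ (3 * r) then e g else 0 := by
        rw [Finset.sum_image (by intro a _ b _ hab; exact mul_left_cancel hab)]
        refine Finset.sum_congr rfl fun b hb => ?_
        rw [inv_mul_cancel_left, if_pos hb, he]
        simp only [mul_assoc]
      rw [this]
      refine Finset.sum_le_sum_of_subset_of_nonneg ?_ fun g _ _ => ?_
      · intro g hg
        obtain ⟨b, hb, rfl⟩ := Finset.mem_image.1 hg
        exact h.mul_mem (hXR hx) hb (by omega)
      · split_ifs
        · exact he0 g
        · rfl
    refine (Finset.sum_le_sum h4).trans ?_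
    rw [Finset.sum_comm]
    unfold En
    rw [Finset.mul_sum]
    refine Finset.sum_le_sum fun g _ => ?_
    rw [← Finset.sum_filter, Finset.sum_const, nsmul_eq_mul]
    refine mul_le_mul_of_nonneg_right ?_ (he0 g)
    have h5 := hsep.card_le (X.filter fun x => x⁻¹ * g ∈ Ba σ (3 * r)) ((Ba σ (16 * r)).image (g * ·))
      (Finset.filter_subset _ _) (fun x hx a ha => by
        have := (Finset.mem_filter.1 hx).2
        refine Finset.mem_image.2 ⟨(x⁻¹ * g)⁻¹ * a, h.mul_mem (h.inv_mem this) ha (by omega), ?_⟩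
        simp [mul_assoc])
    have h6 : ((Ba σ (16 * r)).image (g * ·)).card ≤ K * (Ba σ r').card :=
      Finset.card_image_le.trans hK
    exact_mod_cast Nat.le_of_mul_le_mul_right (h5.trans h6) hBpos
  have h4 := h.caccioppoli hf (4 * R) (by omega)
  have h4' : 16 * (R:ℝ) ^ 2 * En σ f (4 * R) ≤ Fintype.card ι * Qn σ f (16 * R) := by
    rw [show 4 * (4 * R) = 16 * R by ring] at h4
    push_cast at h4
    linarith
  have h5 : En σ f (4 * R) ≤ Fintype.card ι * Qn σ f (16 * R) / (16 * (R:ℝ) ^ 2) := by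
    rw [le_div_iff₀ (by positivity)]
    linarith
  calc Qn σ f R ≤ ∑ x ∈ X, Qn σ (fun g => f (x * g)) r := h1
    _ ≤ ∑ x ∈ X, 2 * K * (r:ℝ) ^ 2 * En σ (fun g => f (x * g)) (3 * r) := Finset.sum_le_sum h2
    _ = 2 * K * (r:ℝ) ^ 2 * ∑ x ∈ X, En σ (fun g => f (x * g)) (3 * r) := by rw [Finset.mul_sum]
    _ ≤ 2 * K * (r:ℝ) ^ 2 * (K * (Fintype.card ι * Qn σ f (16 * R) / (16 * (R:ℝ) ^ 2))) := by
        gcongr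
        exact h3.trans (by gcongr)
    _ = _ := by field_simp; ring

end kl2
end Gro

namespace Gro
open scoped Pointwise
universe v

theorem tele (h : ℕ → ℝ) (hm : Monotone h) (h0 : ∀ j, 0 ≤ h j) (a s J : ℕ) :
    ∑ t ∈ Finset.range J, (h (a + t + s) - h (a + t)) ≤ s * h (a + J + s) := by
  induction s with
  | zero => simp
  | succ s ih =>
    have h1 : ∑ t ∈ Finset.range J, (h (a + t + (s + 1)) - h (a + t))
        = ∑ t ∈ Finset.range J, (h (a + t + s) - h (a + t))
          + ∑ t ∈ Finset.range J, (h (a + s + (t + 1)) - h (a + s + t)) := by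
      rw [← Finset.sum_add_distrib]
      refine Finset.sum_congr rfl fun t _ => ?_
      rw [show a + t + (s + 1) = a + s + (t + 1) by ring, show a + t + s = a + s + t by ring]
      ring
    rw [h1, Finset.sum_range_sub (fun t => h (a + s + t))]
    have h2 : h (a + J + s) ≤ h (a + J + (s + 1)) := hm (by omega)
    have h3 : (s:ℝ) * h (a + J + s) ≤ s * h (a + J + (s + 1)) := by gcongr
    have h4 := h0 (a + s + 0)
    have h5 : h (a + s + J) ≤ h (a + J + (s + 1)) := hm (by omega)
    push_cast
    linarith

theorem pigeon (h Δ : ℕ → ℝ) (hm : Monotone h) (h0 : ∀ j, 0 ≤ h j) (p j0 : ℕ)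
    (A B0 A2 B1 κ κ' c : ℝ) (hκ : 0 < κ) (hκ' : 0 < κ') (hc : 0 < c)
    (hκA : 8 * A ≤ κ) (hκA' : 4 * (p + 1) * A ≤ κ') (hcA : 4 * A2 ≤ c)
    (hh : ∀ j : ℕ, h j ≤ A * j + B0) (hΔ : ∀ j ≥ j0, Δ j ≤ A2 * j + B1)
    (hΔm : ∀ j ≥ j0, Δ j ≤ Δ (j + 1))
    (hgood : ∀ q ≥ j0, h (q + 2) - h q ≤ κ → h (q + (p + 1)) - h q ≤ κ' → Δ (q + p) + c ≤ Δ (q + p + 1)) :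
    False := by
  have key : ∀ q ≥ j0, 1 ≤ (h (q + 2) - h q) / κ + (h (q + (p + 1)) - h q) / κ'
      + (Δ (q + p + 1) - Δ (q + p)) / c := by
    intro q hq
    have n1 : 0 ≤ (h (q + 2) - h q) / κ := div_nonneg (sub_nonneg.2 (hm (by omega))) hκ.le
    have n2 : 0 ≤ (h (q + (p + 1)) - h q) / κ' := div_nonneg (sub_nonneg.2 (hm (by omega))) hκ'.le
    have n3 : 0 ≤ (Δ (q + p + 1) - Δ (q + p)) / c :=
      div_nonneg (sub_nonneg.2 (hΔm _ (by omega))) hc.le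
    by_cases c1 : h (q + 2) - h q ≤ κ
    · by_cases c2 : h (q + (p + 1)) - h q ≤ κ'
      · have : 1 ≤ (Δ (q + p + 1) - Δ (q + p)) / c := by
          rw [le_div_iff₀ hc]; linarith [hgood q hq c1 c2]
        linarith
      · have : 1 ≤ (h (q + (p + 1)) - h q) / κ' := by
          rw [le_div_iff₀ hκ']; linarith
        linarith
    · have : 1 ≤ (h (q + 2) - h q) / κ := by
        rw [le_div_iff₀ hκ]; linarith
      linarith
  have hA : 0 ≤ A := by
    by_contra hA
    push Not at hA
    obtain ⟨n, hn⟩ := exists_nat_gt (B0 / (-A))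
    rw [div_lt_iff₀ (by linarith)] at hn
    have := hh n
    have := h0 n
    linarith
  -- sum
  have hsum : ∀ J : ℕ, (J:ℝ) ≤ 2 * h (j0 + J + 2) / κ + (p + 1) * h (j0 + J + (p + 1)) / κ'
      + (Δ (j0 + p + J) - Δ (j0 + p)) / c := by
    intro J
    calc (J:ℝ) = ∑ t ∈ Finset.range J, (1:ℝ) := by simp
      _ ≤ ∑ t ∈ Finset.range J, ((h (j0 + t + 2) - h (j0 + t)) / κ + (h (j0 + t + (p + 1)) - h (j0 + t)) / κ'
          + (Δ (j0 + t + p + 1) - Δ (j0 + t + p)) / c) :=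
          Finset.sum_le_sum fun t _ => key (j0 + t) (by omega)
      _ = (∑ t ∈ Finset.range J, (h (j0 + t + 2) - h (j0 + t))) / κ
          + (∑ t ∈ Finset.range J, (h (j0 + t + (p + 1)) - h (j0 + t))) / κ'
          + (∑ t ∈ Finset.range J, (Δ (j0 + p + (t + 1)) - Δ (j0 + p + t))) / c := by
          rw [Finset.sum_add_distrib, Finset.sum_add_distrib, Finset.sum_div, Finset.sum_div, Finset.sum_div]
          congr 1
          refine Finset.sum_congr rfl fun t _ => ?_
          rw [show j0 + t + p + 1 = j0 + p + (t + 1) by ring, show j0 + t + p = j0 + p + t by ring]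
      _ ≤ _ := by
          rw [Finset.sum_range_sub (fun t => Δ (j0 + p + t))]
          have t1 := tele h hm h0 j0 2 J
          have t2 := tele h hm h0 j0 (p + 1) J
          push_cast at t1 t2
          gcongr
          · simp
  have hfin : ∀ J : ℕ, (J:ℝ) ≤ 3 / 4 * J + (2 * (A * (j0 + 2) + B0) / κ +
      (p + 1) * (A * (j0 + (p + 1)) + B0) / κ' + (A2 * (j0 + p) + B1 - Δ (j0 + p)) / c) := by
    intro J
    have s := hsum J
    have e1 : 2 * h (j0 + J + 2) / κ ≤ 1 / 4 * J + 2 * (A * (j0 + 2) + B0) / κ := by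
      have := hh (j0 + J + 2)
      push_cast at this
      have h2 : 2 * A / κ ≤ 1 / 4 := by rw [div_le_iff₀ hκ]; linarith
      have h3 : 2 * A / κ * J ≤ 1 / 4 * J := by gcongr
      calc 2 * h (j0 + J + 2) / κ ≤ 2 * (A * (j0 + J + 2) + B0) / κ := by gcongr
        _ = 2 * A / κ * J + 2 * (A * (j0 + 2) + B0) / κ := by ring
        _ ≤ _ := by linarith
    have e2 : (p + 1) * h (j0 + J + (p + 1)) / κ' ≤ 1 / 4 * J + (p + 1) * (A * (j0 + (p + 1)) + B0) / κ' := by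
      have := hh (j0 + J + (p + 1))
      push_cast at this
      have h2 : (p + 1) * A / κ' ≤ 1 / 4 := by rw [div_le_iff₀ hκ']; linarith
      have h3 : (p + 1) * A / κ' * J ≤ 1 / 4 * J := by gcongr
      calc (p + 1) * h (j0 + J + (p + 1)) / κ' ≤ (p + 1) * (A * (j0 + J + (p + 1)) + B0) / κ' := by gcongr
        _ = (p + 1) * A / κ' * J + (p + 1) * (A * (j0 + (p + 1)) + B0) / κ' := by ring
        _ ≤ _ := by linarith
    have e3 : (Δ (j0 + p + J) - Δ (j0 + p)) / c ≤ 1 / 4 * J + (A2 * (j0 + p) + B1 - Δ (j0 + p)) / c := by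
      have := hΔ (j0 + p + J) (by omega)
      push_cast at this
      have h2 : A2 / c ≤ 1 / 4 := by rw [div_le_iff₀ hc]; linarith
      have h3 : A2 / c * J ≤ 1 / 4 * J := by gcongr
      calc (Δ (j0 + p + J) - Δ (j0 + p)) / c ≤ ((A2 * (j0 + p + J) + B1) - Δ (j0 + p)) / c := by gcongr
        _ = A2 / c * J + (A2 * (j0 + p) + B1 - Δ (j0 + p)) / c := by ring
        _ ≤ _ := by linarith
    linarith
  obtain ⟨n, hn⟩ := exists_nat_gt (4 * (2 * (A * (j0 + 2) + B0) / κ +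
      (p + 1) * (A * (j0 + (p + 1)) + B0) / κ' + (A2 * (j0 + p) + B1 - Δ (j0 + p)) / c))
  have := hfin n
  linarith

section kl3
variable {G : Type u} [Group G] [DecidableEq G] {ι : Type v} [Fintype ι] {σ : ι → G}

open Matrix

noncomputable def lc {D : ℕ} (F : Fin D → G → ℝ) (x : Fin D → ℝ) : G → ℝ := fun g => ∑ i, x i * F i g

noncomputable def Gram (σ : ι → G) {D : ℕ} (F : Fin D → G → ℝ) (j : ℕ) : Matrix (Fin D) (Fin D) ℝ :=
  Matrix.of fun i i' => ∑ g ∈ Ba σ (16 ^ j), F i g * F i' g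

theorem Gram_form {D : ℕ} (F : Fin D → G → ℝ) (j : ℕ) (x : Fin D → ℝ) :
    x ⬝ᵥ Gram σ F j *ᵥ x = Qn σ (lc F x) (16 ^ j) := by
  simp only [dotProduct, mulVec, Gram, Qn, lc, Matrix.of_apply, sq, Finset.sum_mul, Finset.mul_sum]
  rw [Finset.sum_congr rfl fun i _ => Finset.sum_comm, Finset.sum_comm]
  refine Finset.sum_congr rfl fun g _ => ?_
  rw [Finset.sum_comm]
  refine Finset.sum_congr rfl fun i _ => Finset.sum_congr rfl fun i' _ => ?_
  ring

theorem Gram_psd {D : ℕ} (F : Fin D → G → ℝ) (j : ℕ) : (Gram σ F j).PosSemidef := by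
  refine Matrix.PosSemidef.of_dotProduct_mulVec_nonneg ?_ fun x => ?_
  · ext i i'
    simp [Gram, mul_comm]
  · rw [star_trivial, Gram_form]; exact Qn_nonneg _ _

theorem WS.Gram_posDef (h : WS σ) (hgen : ∀ g, ∃ n, g ∈ Ba σ n) {D : ℕ} (F : Fin D → G → ℝ)
    (hF : LinearIndependent ℝ F) :
    ∃ j0, ∀ j ≥ j0, (Gram σ F j).PosDef := by
  let N : ℕ → Submodule ℝ (Fin D → ℝ) := fun j =>
    { carrier := {x | ∀ g ∈ Ba σ (16 ^ j), lc F x g = 0}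
      add_mem' := by
        intro x y hx hy g hg
        have h1 := hx g hg
        have h2 := hy g hg
        simp only [lc] at h1 h2 ⊢
        simp only [Pi.add_apply, add_mul, Finset.sum_add_distrib, h1, h2, add_zero]
      zero_mem' := by intro g _; simp [lc]
      smul_mem' := by
        intro c x hx g hg
        have h1 := hx g hg
        simp only [lc] at h1 ⊢
        simp only [Pi.smul_apply, smul_eq_mul, mul_assoc, ← Finset.mul_sum, h1, mul_zero] }
  have hanti : ∀ a b, a ≤ b → N b ≤ N a := by
    intro a b hab x hx g hg
    exact hx g (h.mono (Nat.pow_le_pow_right (by norm_num) hab) hg)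
  let N' : ℕ →o (Submodule ℝ (Fin D → ℝ))ᵒᵈ := ⟨fun j => OrderDual.toDual (N j), fun a b hab => hanti a b hab⟩
  obtain ⟨j0, hj0⟩ := IsArtinian.monotone_stabilizes N'
  have hbot : N j0 = ⊥ := by
    rw [Submodule.eq_bot_iff]
    intro x hx
    have hall : lc F x = 0 := by
      funext g
      obtain ⟨n, hn⟩ := hgen g
      have h1 : N j0 = N (j0 + n) := hj0 (j0 + n) (by omega)
      rw [h1] at hx
      refine hx g (h.mono ?_ hn)
      calc n ≤ 16 ^ n := (Nat.lt_pow_self (by norm_num)).le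
        _ ≤ _ := Nat.pow_le_pow_right (by norm_num) (by omega)
    rw [Fintype.linearIndependent_iff] at hF
    funext i
    refine hF x ?_ i
    rw [← hall]
    funext g
    simp [lc, Finset.sum_apply]
  refine ⟨j0, fun j hj => Matrix.PosDef.of_dotProduct_mulVec_pos (Gram_psd F j).1 fun x hx => ?_⟩
  rw [star_trivial, Gram_form]
  refine lt_of_le_of_ne (Qn_nonneg _ _) fun h0 => hx ?_
  have hz := (Finset.sum_eq_zero_iff_of_nonneg (fun g _ => sq_nonneg (lc F x g))).1 h0.symm
  have : x ∈ N j := fun g hg => pow_eq_zero_iff (two_ne_zero) |>.1 (hz g hg)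
  have := hanti j0 j hj this
  rw [hbot] at this
  simpa using this

theorem Har.lc {D : ℕ} {F : Fin D → G → ℝ} (hF : ∀ i, Har σ (F i)) (x : Fin D → ℝ) : Har σ (lc F x) := by
  intro g
  simp only [Gro.lc, ← Finset.sum_sub_distrib, ← mul_sub]
  rw [Finset.sum_comm]
  refine Finset.sum_eq_zero fun i _ => ?_
  rw [← Finset.mul_sum, hF i g, mul_zero]

theorem WS.det_step (h : WS σ) {D : ℕ} {F : Fin D → G → ℝ} (hF : ∀ i, Har σ (F i)) (q p K k : ℕ)
    (hp : 1 ≤ p) (hpd : (Gram σ F (q + p + 1)).PosDef)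
    (hK : (Ba σ (16 ^ (q + 2))).card ≤ K * (Ba σ (16 ^ q)).card)
    (hk : (Ba σ (16 ^ (q + (p + 1)))).card ≤ k * (Ba σ (16 ^ q)).card)
    (η : ℝ) (hη : 0 < η) (hη1 : η ≤ 1)
    (hKη : (K:ℝ) ^ 2 * Fintype.card ι * 16 ^ 2 / 8 ≤ η * 16 ^ (2 * p)) :
    (Gram σ F (q + p)).det ≤ η ^ (D - k) * (Gram σ F (q + p + 1)).det := by
  obtain ⟨X, hX, hstep⟩ := h.step (16 ^ q) (16 ^ (q + p)) K k (by positivity)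
    (by rw [← pow_succ']; exact Nat.pow_le_pow_right (by norm_num) (by omega))
    (by rw [← pow_succ', ← pow_succ']; exact hK)
    (by rw [← pow_succ']; exact hk)
  have hc : ((K:ℝ) ^ 2 * Fintype.card ι * ((16 * 16 ^ q : ℕ):ℝ) ^ 2 / (8 * ((16 ^ (q + p) : ℕ):ℝ) ^ 2)) ≤ η := by
    rw [div_le_iff₀ (by positivity)]
    push_cast
    have h1 : ((16:ℝ) ^ (q + p)) ^ 2 = 16 ^ (2 * p) * (16 ^ q) ^ 2 := by ring
    rw [h1]
    have h2 : (0:ℝ) ≤ (16 ^ q) ^ 2 := by positivity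
    have h3 := mul_le_mul_of_nonneg_right hKη h2
    nlinarith
  let T : (Fin D → ℝ) →ₗ[ℝ] (X → ℝ) :=
    { toFun := fun x y => ∑ b ∈ Ba σ (16 * 16 ^ q), lc F x (y * b)
      map_add' := by
        intro x x'; funext y
        simp only [lc, Pi.add_apply, add_mul, Finset.sum_add_distrib]
      map_smul' := by
        intro c x; funext y
        simp only [lc, Pi.smul_apply, smul_eq_mul, mul_assoc, ← Finset.mul_sum, RingHom.id_apply] }
  have := det_le_of_forms (Gram σ F (q + p)) (Gram σ F (q + p + 1)) (Gram_psd F _) hpd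
    (fun x => by
      rw [Gram_form, Gram_form]
      exact h.Qn_mono _ (Nat.pow_le_pow_right (by norm_num) (by omega))) (X := X) (k := k)
    (by simpa using hX) η hη hη1 T (fun x hx => by
      rw [Gram_form, Gram_form]
      have := hstep (lc F x) (Har.lc hF x) (fun y hy => congrFun hx ⟨y, hy⟩)
      refine this.trans ?_
      rw [pow_succ' 16 (q + p)]
      exact mul_le_mul_of_nonneg_right hc (Qn_nonneg (σ := σ) _ _))
  simpa using this

theorem WS.det_mono (h : WS σ) {D : ℕ} (F : Fin D → G → ℝ) (j : ℕ) (hpd : (Gram σ F (j + 1)).PosDef) :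
    (Gram σ F j).det ≤ (Gram σ F (j + 1)).det := by
  have := det_le_of_forms (Gram σ F j) (Gram σ F (j + 1)) (Gram_psd F _) hpd
    (fun x => by
      rw [Gram_form, Gram_form]
      exact h.Qn_mono _ (Nat.pow_le_pow_right (by norm_num) (by omega))) (X := Empty) (k := 0)
    (by simp) 1 one_pos le_rfl 0 (fun x hx => by
      rw [Gram_form, Gram_form, one_mul]
      exact h.Qn_mono _ (Nat.pow_le_pow_right (by norm_num) (by omega)))
  simpa using this

theorem Gram_det_le {D : ℕ} (F : Fin D → G → ℝ) (j : ℕ) (L : ℝ)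
    (hL : ∀ i, ∀ g ∈ Ba σ (16 ^ j), |F i g| ≤ L) :
    (Gram σ F j).det ≤ D.factorial * ((Ba σ (16 ^ j)).card * L ^ 2) ^ D := by
  have := Matrix.det_le (A := Gram σ F j) (abv := IsAbsoluteValue.toAbsoluteValue (abs : ℝ → ℝ))
    (x := (Ba σ (16 ^ j)).card * L ^ 2) (fun i i' => by
      change |∑ g ∈ Ba σ (16 ^ j), F i g * F i' g| ≤ _
      refine (Finset.abs_sum_le_sum_abs _ _).trans ?_
      rw [← nsmul_eq_mul, ← Finset.sum_const]
      refine Finset.sum_le_sum fun g hg => ?_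
      rw [abs_mul, sq]
      exact mul_le_mul (hL i g hg) (hL i' g hg) (abs_nonneg _) ((abs_nonneg _).trans (hL i g hg)))
  simp only [Fintype.card_fin, nsmul_eq_mul] at this
  exact (le_abs_self _).trans this

end kl3
end Gro

namespace Gro
open scoped Pointwise
universe v
section kl4
variable {G : Type u} [Group G] [DecidableEq G] {ι : Type v} [Fintype ι] {σ : ι → G}

theorem WS.not_indep (h : WS σ) (hgen : ∀ g, ∃ n, g ∈ Ba σ n) (C d : ℕ) (hd : 1 ≤ d) (hC1 : 1 ≤ C)
    (hC : ∀ r, (Ba σ r).card ≤ C * (r + 1) ^ d) (p k : ℕ) (hp : p = Fintype.card ι + 12 * d + 9)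
    (hk : k = 16 ^ (4 * (p + 1) * d))
    (F : Fin (2 * k) → G → ℝ) (hF : ∀ i, Har σ (F i)) (c0 : ℝ) (hc0 : 1 ≤ c0)
    (hL : ∀ i r, ∀ g ∈ Ba σ r, |F i g| ≤ c0 * (1 + r)) : ¬ LinearIndependent ℝ F := by
  intro hli
  obtain ⟨j0, hj0⟩ := h.Gram_posDef hgen F hli
  have hl : 0 < Real.log 16 := Real.log_pos (by norm_num)
  have hkpos : 0 < k := by rw [hk]; positivity
  have hkR : (0:ℝ) < k := by exact_mod_cast hkpos
  have hdR : (1:ℝ) ≤ d := by exact_mod_cast hd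
  have hCR : (1:ℝ) ≤ C := by exact_mod_cast hC1
  have hBpos : ∀ r, 0 < (Ba σ r).card := fun r => Finset.card_pos.2 ⟨1, h.one_mem _⟩
  have hBR : ∀ r, (0:ℝ) < (Ba σ r).card := fun r => by exact_mod_cast hBpos r
  have hB1 : ∀ r, (1:ℝ) ≤ (Ba σ r).card := fun r => by exact_mod_cast hBpos r
  have h16 : ∀ j : ℕ, (1:ℝ) ≤ 16 ^ j := fun j => one_le_pow₀ (by norm_num)
  have hcard : ∀ j : ℕ, ((Ba σ (16 ^ j)).card : ℝ) ≤ C * 2 ^ d * 16 ^ (d * j) := by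
    intro j
    have := hC (16 ^ j)
    have h2 : ((Ba σ (16 ^ j)).card : ℝ) ≤ C * (16 ^ j + 1) ^ d := by exact_mod_cast this
    refine h2.trans ?_
    have : ((16:ℝ) ^ j + 1) ^ d ≤ (2 * 16 ^ j) ^ d :=
      pow_le_pow_left₀ (by positivity) (by linarith [h16 j]) _
    rw [mul_pow, ← pow_mul, mul_comm j d] at this
    nlinarith
  set η : ℝ := (16 ^ (8 * (d + 2)))⁻¹ with hη
  have hη0 : 0 < η := by positivity
  have hη1 : η ≤ 1 := inv_le_one_of_one_le₀ (h16 _)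
  have hlogη : Real.log η = - (8 * (d + 2) * Real.log 16) := by
    rw [hη, Real.log_inv, Real.log_pow]; push_cast; ring
  refine pigeon (fun j => Real.log (Ba σ (16 ^ j)).card) (fun j => Real.log (Gram σ F j).det)
    ?_ ?_ p j0 (d * Real.log 16) (Real.log (C * 2 ^ d)) (2 * k * (d + 2) * Real.log 16)
    (Real.log ((2 * k).factorial * ((C * 2 ^ d) * (4 * c0 ^ 2)) ^ (2 * k)))
    (8 * d * Real.log 16) (4 * (p + 1) * d * Real.log 16) (k * (8 * (d + 2) * Real.log 16))
    (by positivity) (by positivity) (by positivity) (by linarith) (by linarith) (by nlinarith)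
    ?_ ?_ ?_ ?_
  · refine monotone_nat_of_le_succ fun j => ?_
    refine Real.log_le_log (hBR _) ?_
    exact_mod_cast Finset.card_le_card (h.mono (Nat.pow_le_pow_right (by norm_num) (by omega)))
  · intro j
    exact Real.log_nonneg (hB1 _)
  · intro j
    refine (Real.log_le_log (hBR _) (hcard j)).trans ?_
    rw [Real.log_mul (by positivity) (by positivity), Real.log_pow]
    push_cast; linarith
  · intro j hj
    have h1 := Gram_det_le F j (2 * c0 * 16 ^ j) (fun i g hg => by
      refine (hL i _ g hg).trans ?_
      push_cast
      nlinarith [h16 j]) 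
    have h2 : (Gram σ F j).det ≤ (((2 * k).factorial * ((C * 2 ^ d) * (4 * c0 ^ 2)) ^ (2 * k)) *
        (16 ^ (j * (d + 2) * (2 * k))) : ℝ) := by
      refine h1.trans ?_
      rw [mul_assoc ((2 * k).factorial : ℝ)]
      refine mul_le_mul_of_nonneg_left ?_ (Nat.cast_nonneg _)
      rw [pow_mul (16 : ℝ), ← mul_pow]
      refine pow_le_pow_left₀ (by positivity) ?_ _
      have h3 := mul_le_mul_of_nonneg_right (hcard j) (show (0:ℝ) ≤ (2 * c0 * 16 ^ j) ^ 2 by positivity)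
      refine h3.trans (le_of_eq ?_)
      ring
    refine (Real.log_le_log (hj0 j hj).det_pos h2).trans ?_
    rw [Real.log_mul (by positivity) (by positivity), Real.log_pow]
    push_cast; linarith
  · intro j hj
    exact Real.log_le_log (hj0 j hj).det_pos (h.det_mono F j (hj0 _ (by omega)))
  · intro q hq h1 h2
    have ratio : ∀ a b N : ℕ, Real.log (Ba σ a).card - Real.log (Ba σ b).card ≤ N * Real.log 16 →
        (Ba σ a).card ≤ 16 ^ N * (Ba σ b).card := by
      intro a b N hab
      have : Real.log (Ba σ a).card ≤ Real.log (16 ^ N * (Ba σ b).card) := by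
        rw [Real.log_mul (by positivity) (hBR _).ne', Real.log_pow]; linarith
      have := (Real.log_le_log_iff (hBR _) (mul_pos (by positivity) (hBR _))).1 this
      exact_mod_cast this
    have hK := ratio _ _ (8 * d) (by push_cast; exact h1)
    have hk' := ratio _ _ (4 * (p + 1) * d) (by push_cast; exact h2)
    rw [← hk] at hk'
    have := h.det_step hF q p (16 ^ (8 * d)) k (by omega) (hj0 _ (by omega)) hK hk' η hη0 hη1 (by
      have e1 : η * 16 ^ (2 * p) = 16 ^ (2 * Fintype.card ι) * 16 ^ (16 * d + 2) := by
        rw [hη, hp, inv_mul_eq_iff_eq_mul₀ (by positivity)]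
        rw [← pow_add, ← pow_add]; congr 1; ring
      rw [e1]
      push_cast
      have e2 : (Fintype.card ι : ℝ) ≤ 16 ^ (2 * Fintype.card ι) := by
        have : Fintype.card ι < 16 ^ (2 * Fintype.card ι) :=
          (Nat.lt_pow_self (by norm_num : 1 < 16)).trans_le (Nat.pow_le_pow_right (by norm_num) (by omega))
        exact_mod_cast this.le
      have e3 : ((16:ℝ) ^ (8 * d)) ^ 2 * 16 ^ 2 = 16 ^ (16 * d + 2) := by
        rw [← pow_mul, ← pow_add]; congr 1; ring
      have : ((16:ℝ) ^ (8 * d)) ^ 2 * (Fintype.card ι) * 16 ^ 2 / 8 = (Fintype.card ι) * 16 ^ (16 * d + 2) / 8 := by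
        rw [← e3]; ring
      rw [this]
      have := mul_le_mul_of_nonneg_right e2 (show (0:ℝ) ≤ 16 ^ (16 * d + 2) by positivity)
      have : (0:ℝ) ≤ (Fintype.card ι) * 16 ^ (16 * d + 2) := by positivity
      linarith)
    have h3 := Real.log_le_log (hj0 _ (by omega)).det_pos this
    rw [Real.log_mul (by positivity) (hj0 _ (by omega)).det_pos.ne', Real.log_pow, hlogη,
      show 2 * k - k = k by omega] at h3
    linarith

/-- Lipschitz harmonic functions. -/
def LH (σ : ι → G) : Submodule ℝ (G → ℝ) where
  carrier := {f | Har σ f ∧ ∃ L : ℝ, ∀ g i, |f (g * σ i) - f g| ≤ L}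
  add_mem' := by
    rintro f f' ⟨hf, L, hL⟩ ⟨hf', L', hL'⟩
    refine ⟨fun g => ?_, L + L', fun g i => ?_⟩
    · have := congrArg₂ (· + ·) (hf g) (hf' g)
      simp only [add_zero, ← Finset.sum_add_distrib] at this
      rw [← this]
      refine Finset.sum_congr rfl fun i _ => ?_
      simp only [Pi.add_apply]; ring
    · have := abs_add_le (f (g * σ i) - f g) (f' (g * σ i) - f' g)
      have e : (f + f') (g * σ i) - (f + f') g = (f (g * σ i) - f g) + (f' (g * σ i) - f' g) := by
        simp only [Pi.add_apply]; ring
      rw [e]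
      linarith [hL g i, hL' g i]
  zero_mem' := ⟨fun g => by simp, 0, fun g i => by simp⟩
  smul_mem' := by
    rintro c f ⟨hf, L, hL⟩
    refine ⟨fun g => ?_, |c| * L, fun g i => ?_⟩
    · simp only [Pi.smul_apply, smul_eq_mul, ← mul_sub, ← Finset.mul_sum]
      rw [hf g, mul_zero]
    · simp only [Pi.smul_apply, smul_eq_mul, ← mul_sub, abs_mul]
      exact mul_le_mul_of_nonneg_left (hL g i) (abs_nonneg _)

theorem lip_bound {f : G → ℝ} {L : ℝ} (hL : ∀ g i, |f (g * σ i) - f g| ≤ L) (hL0 : 0 ≤ L) (r : ℕ) :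
    ∀ g ∈ Ba σ r, |f g| ≤ |f 1| + L * r := by
  induction r with
  | zero => intro g hg; simp only [Ba, pow_zero, Finset.mem_one] at hg; simp [hg]
  | succ r ih =>
    intro g hg
    rw [Ba, pow_succ, Finset.mem_mul] at hg
    obtain ⟨a, ha, b, hb, rfl⟩ := hg
    obtain ⟨i, -, rfl⟩ := Finset.mem_image.1 hb
    have h1 := ih a ha
    have h2 := hL a i
    have h3 := abs_add_le (f (a * σ i) - f a) (f a)
    rw [sub_add_cancel] at h3
    push_cast
    linarith

theorem WS.LH_finite (h : WS σ) (hgen : ∀ g, ∃ n, g ∈ Ba σ n) {d : ℕ} (hPG : PG G d) :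
    FiniteDimensional ℝ (LH σ) := by
  obtain ⟨C, hC⟩ := hPG (Finset.univ.image σ : Finset G) (Finset.finite_toSet _)
  have hC' : ∀ r, (Ba σ r).card ≤ (C + 1) * (r + 1) ^ (d + 1) := by
    intro r
    have := hC r
    rw [← Finset.coe_pow, Set.ncard_coe_finset] at this
    refine this.trans ?_
    exact Nat.mul_le_mul (by omega) (Nat.pow_le_pow_right (by omega) (by omega))
  by_contra hfin
  obtain ⟨p, hp⟩ : ∃ p, p = Fintype.card ι + 12 * (d + 1) + 9 := ⟨_, rfl⟩
  obtain ⟨k, hk⟩ : ∃ k, k = 16 ^ (4 * (p + 1) * (d + 1)) := ⟨_, rfl⟩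
  have hr : ((2 * k : ℕ) : Cardinal) ≤ Module.rank ℝ (LH σ) := by
    have : Cardinal.aleph0 ≤ Module.rank ℝ (LH σ) := by
      rw [← not_lt, Module.rank_lt_aleph0_iff]; exact hfin
    exact (Cardinal.natCast_lt_aleph0).le.trans this
  obtain ⟨s, hs, hli⟩ := exists_finset_linearIndependent_of_le_rank hr
  let e : Fin (2 * k) ≃ s := (Fintype.equivFinOfCardEq (by simpa using hs)).symm
  let F : Fin (2 * k) → G → ℝ := fun i => ((e i : LH σ) : G → ℝ)
  have hF : LinearIndependent ℝ F := by
    have h1 : LinearIndependent ℝ (fun i => ((e i : LH σ))) := hli.comp e e.injective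
    exact h1.map' (LH σ).subtype (Submodule.ker_subtype _)
  have hmem : ∀ i, F i ∈ LH σ := fun i => (e i : LH σ).2
  choose L hL using fun i => (hmem i).2
  obtain ⟨i0, hi0⟩ := h.one
  have hL0 : ∀ i, 0 ≤ L i := fun i => (abs_nonneg _).trans (hL i 1 i0)
  refine h.not_indep hgen (C + 1) (d + 1) (by omega) (by omega) hC' p k hp hk F (fun i => (hmem i).1)
    (1 + ∑ i, (|F i 1| + L i)) (by
      have : 0 ≤ ∑ i, (|F i 1| + L i) := Finset.sum_nonneg fun i _ => add_nonneg (abs_nonneg _) (hL0 i)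
      linarith) ?_ hF
  intro i r g hg
  have h1 := lip_bound (hL i) (hL0 i) r g hg
  have h2 : |F i 1| + L i ≤ ∑ i, (|F i 1| + L i) :=
    Finset.single_le_sum (f := fun i => |F i 1| + L i) (fun i _ => add_nonneg (abs_nonneg _) (hL0 i)) (Finset.mem_univ i)
  have h3 := abs_nonneg (F i 1)
  have h4 := hL0 i
  have h5 : (0:ℝ) ≤ r := Nat.cast_nonneg r
  nlinarith [mul_nonneg h3 h5]

end kl4
end Gro

namespace Gro
open scoped Pointwise
universe v
section rep
variable {G : Type u} [Group G] {ι : Type v} [Fintype ι] {σ : ι → G}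

theorem LH_translate {f : G → ℝ} (hf : f ∈ LH σ) (g : G) : (fun x => f (g * x)) ∈ LH σ := by
  obtain ⟨h1, L, h2⟩ := hf
  refine ⟨fun x => ?_, L, fun x i => ?_⟩
  · simp only [← mul_assoc]; exact h1 (g * x)
  · simp only [← mul_assoc]; exact h2 (g * x) i

/-- complex Lipschitz harmonic functions -/
def LHc (σ : ι → G) : Submodule ℂ (G → ℂ) where
  carrier := {f | (fun g => (f g).re) ∈ LH σ ∧ (fun g => (f g).im) ∈ LH σ}
  add_mem' := by
    rintro f f' ⟨h1, h2⟩ ⟨h3, h4⟩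
    exact ⟨(LH σ).add_mem h1 h3, (LH σ).add_mem h2 h4⟩
  zero_mem' := ⟨(LH σ).zero_mem, (LH σ).zero_mem⟩
  smul_mem' := by
    rintro c f ⟨h1, h2⟩
    refine ⟨?_, ?_⟩
    · have := (LH σ).sub_mem ((LH σ).smul_mem c.re h1) ((LH σ).smul_mem c.im h2)
      convert this using 1
      funext g; simp
    · have := (LH σ).add_mem ((LH σ).smul_mem c.re h2) ((LH σ).smul_mem c.im h1)
      convert this using 1
      funext g; simp

theorem LHc_finite (h : FiniteDimensional ℝ (LH σ)) : FiniteDimensional ℂ (LHc σ) := by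
  have : Module.Finite ℝ (LHc σ) := by
    let T : LHc σ →ₗ[ℝ] (LH σ) × (LH σ) :=
      { toFun := fun f => (⟨_, f.2.1⟩, ⟨_, f.2.2⟩)
        map_add' := by
          intro f g; ext x <;> simp
        map_smul' := by
          intro c f; ext x <;> simp }
    refine Module.Finite.of_injective T ?_
    intro f g hfg
    ext x
    have h1 := congrFun (congrArg (fun z : (LH σ) × (LH σ) => (z.1 : G → ℝ)) hfg) x
    have h2 := congrFun (congrArg (fun z : (LH σ) × (LH σ) => (z.2 : G → ℝ)) hfg) x
    exact Complex.ext h1 h2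
  exact Module.Finite.of_restrictScalars_finite ℝ ℂ _

theorem LHc_bound (f : LHc σ) : ∃ L : ℝ, ∀ x : G × ι, ‖(f : G → ℂ) (x.1 * σ x.2) - (f : G → ℂ) x.1‖ ≤ L := by
  obtain ⟨L1, h1⟩ := f.2.1.2
  obtain ⟨L2, h2⟩ := f.2.2.2
  refine ⟨L1 + L2, fun x => (Complex.norm_le_abs_re_add_abs_im _).trans ?_⟩
  simpa using add_le_add (h1 x.1 x.2) (h2 x.1 x.2)

theorem LHc_translate {f : G → ℂ} (hf : f ∈ LHc σ) (g : G) : (fun x => f (g * x)) ∈ LHc σ :=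
  ⟨LH_translate hf.1 g, LH_translate hf.2 g⟩

variable [TopologicalSpace G] [DiscreteTopology G] [TopologicalSpace ι] [DiscreteTopology ι]
open BoundedContinuousFunction

noncomputable def grad (σ : ι → G) : LHc σ →ₗ[ℂ] BoundedContinuousFunction (G × ι) ℂ where
  toFun f := BoundedContinuousFunction.ofNormedAddCommGroupDiscrete
    (fun x : G × ι => (f : G → ℂ) (x.1 * σ x.2) - (f : G → ℂ) x.1) _ (LHc_bound f).choose_spec
  map_add' := by
    intro f g; ext x; simp; ring
  map_smul' := by
    intro c f; ext x; simp; ring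

@[simp] theorem grad_apply (f : LHc σ) (x : G × ι) :
    grad σ f x = (f : G → ℂ) (x.1 * σ x.2) - (f : G → ℂ) x.1 := rfl

noncomputable def trans (g : G) : BoundedContinuousFunction (G × ι) ℂ →ₗ[ℂ] BoundedContinuousFunction (G × ι) ℂ where
  toFun u := u.compContinuous ⟨fun x => (g⁻¹ * x.1, x.2), continuous_of_discreteTopology⟩
  map_add' := by intro u v; ext x; simp
  map_smul' := by intro u v; ext x; simp

@[simp] theorem trans_apply (g : G) (u : BoundedContinuousFunction (G × ι) ℂ) (x : G × ι) :
    trans g u x = u (g⁻¹ * x.1, x.2) := rfl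

theorem trans_mem (g : G) (u) (hu : u ∈ LinearMap.range (grad σ)) : trans g u ∈ LinearMap.range (grad σ) := by
  obtain ⟨f, rfl⟩ := hu
  refine ⟨⟨_, LHc_translate f.2 g⁻¹⟩, ?_⟩
  ext x
  simp [mul_assoc]

theorem norm_trans (g : G) (u : BoundedContinuousFunction (G × ι) ℂ) : ‖trans g u‖ = ‖u‖ := by
  have key : ∀ (g : G) (u : BoundedContinuousFunction (G × ι) ℂ), ‖trans g u‖ ≤ ‖u‖ := by
    intro g u
    rw [BoundedContinuousFunction.norm_le (norm_nonneg _)]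
    intro x
    exact u.norm_coe_le_norm _
  refine le_antisymm (key g u) ?_
  have := key g⁻¹ (trans g u)
  have e : trans g⁻¹ (trans g u) = u := by ext x; simp
  rwa [e] at this

noncomputable def gradRep (σ : ι → G) [FiniteDimensional ℂ (LHc σ)] :
    G →* (LinearMap.range (grad σ) →L[ℂ] LinearMap.range (grad σ)) where
  toFun g := LinearMap.toContinuousLinearMap ((trans g).restrict (trans_mem g))
  map_one' := by
    ext u x; simp
  map_mul' := by
    intro g h
    ext u x
    simp [mul_assoc]

theorem gradRep_apply [FiniteDimensional ℂ (LHc σ)] (g : G) (u) : 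
   ((gradRep σ g u : LinearMap.range (grad σ)) : BoundedContinuousFunction (G × ι) ℂ) = trans g u := rfl

theorem exists_fi_rep [FiniteDimensional ℂ (LHc σ)] {d : ℕ} (hPG : PG G d) :
    ∃ K : Subgroup G, K.FiniteIndex ∧ ∀ a ∈ K, ∀ b ∈ K, gradRep σ (a * b) = gradRep σ (b * a) := by
  refine rep_virtually_abelian (gradRep σ) ?_ hPG
  intro g v
  exact norm_trans g v.1

/-- kernel element acts by shifting by constants. -/
theorem gradRep_one [FiniteDimensional ℂ (LHc σ)] (hgen : ∀ P : G → Prop, P 1 → (∀ g i, P g → P (g * σ i)) → ∀ g, P g)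
    {g : G} (hg : gradRep σ g = 1) {f : G → ℝ} (hf : f ∈ LH σ) (x : G) : f (g⁻¹ * x) - f x = f g⁻¹ - f 1 := by
  have hfc : (fun g => (f g : ℂ)) ∈ LHc σ := by
    refine ⟨by simpa using hf, ?_⟩
    exact (LH σ).zero_mem
  have hstep : ∀ x i, f (g⁻¹ * x * σ i) - f (g⁻¹ * x) = f (x * σ i) - f x := by
    intro x i
    have h1 := gradRep_apply g ⟨grad σ ⟨_, hfc⟩, ⟨_, rfl⟩⟩
    rw [hg] at h1
    have h2 := DFunLike.congr_fun h1 (x, i)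
    simp at h2
    rw [← Complex.ofReal_sub, ← Complex.ofReal_sub, Complex.ofReal_inj] at h2
    exact h2.symm
  refine hgen (fun x => f (g⁻¹ * x) - f x = f g⁻¹ - f 1) (by simp) ?_ x
  intro x i hx
  have := hstep x i
  rw [← mul_assoc]
  linarith

end rep
end Gro

namespace Gro
open scoped Pointwise
universe v
section surj
variable {G : Type u} [Group G]

theorem exists_sym_gen [hfg : Group.FG G] [DecidableEq G] : ∃ S : Finset G, (∀ s ∈ S, s⁻¹ ∈ S) ∧ 1 ∈ S ∧
    Subgroup.closure (S : Set G) = ⊤ := by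
  obtain ⟨S, hS⟩ := (Group.fg_def.1 hfg)
  refine ⟨insert 1 (S ∪ S⁻¹), ?_, by simp, ?_⟩
  · intro s hs
    simp only [Finset.mem_insert, Finset.mem_union, Finset.mem_inv'] at hs ⊢
    rcases hs with rfl | hs | hs
    · simp
    · simp [hs]
    · simp [hs]
  · rw [eq_top_iff, ← hS]
    refine Subgroup.closure_mono ?_
    intro x hx
    simp [Finset.mem_coe.1 hx]

theorem commutator_le_ker_aux {K M : Type*} [Group K] [Monoid M] (ρ : K →* M) (h : ∀ a b, ρ (a * b) = ρ (b * a)) :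
    commutator K ≤ ρ.ker := by
  rw [commutator_eq_closure, Subgroup.closure_le]
  rintro x ⟨a, b, rfl⟩
  rw [SetLike.mem_coe, MonoidHom.mem_ker, commutatorElement_def, mul_assoc (a * b), map_mul, h a b, ← map_mul]
  simp

theorem finite_range_of_fi {K M : Type*} [Group K] [Group M] (ρ : K →* M) (h : ρ.ker.FiniteIndex) :
    Finite ρ.range := by
  have := h
  exact Finite.of_equiv _ (QuotientGroup.quotientKerEquivRange ρ).toEquiv

theorem harmonic_const {ι : Type*} [Fintype ι] {σ : ι → G}
    (hgen : ∀ P : G → Prop, P 1 → (∀ g i, P g → P (g * σ i)) → ∀ g, P g) (hsym : ∀ i, ∃ j, σ j = (σ i)⁻¹)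
    {f : G → ℝ} (hf : Har σ f) (hfin : (Set.range f).Finite) (g : G) : f g = f 1 := by
  obtain ⟨m, ⟨g0, rfl⟩, hm⟩ := hfin.exists_maximal (Set.range_nonempty f)
  have hmax : ∀ x, f x ≤ f g0 := by
    intro x
    rcases le_total (f x) (f g0) with h | h
    · exact h
    · exact hm ⟨x, rfl⟩ h
  have hstep : ∀ x i, f x = f g0 → f (x * σ i) = f g0 := by
    intro x i hx
    have h1 := hf x
    have h2 := (Finset.sum_eq_zero_iff_of_nonpos (fun i _ => by
      rw [hx]; linarith [hmax (x * σ i)])).1 h1 i (Finset.mem_univ _)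
    linarith
  have hall : ∀ x, f (g0 * x) = f g0 := by
    refine hgen _ (by simp) ?_
    intro x i hx
    rw [← mul_assoc]; exact hstep _ _ hx
  have e1 := hall (g0⁻¹ * g)
  have e2 := hall g0⁻¹
  simp at e1 e2
  rw [e1, e2]

theorem exists_infinite_ab [Infinite G] [Group.FG G] {d : ℕ} (hPG : PG G d) :
    ∃ H : Subgroup G, H.FiniteIndex ∧ ¬ (commutator H).FiniteIndex := by
  classical
  obtain ⟨S, hinv, h1, hgenS⟩ := exists_sym_gen (G := G)
  obtain ⟨f, hf, ⟨L, hL⟩, g1, hg1⟩ := exists_harmonic hPG S hinv h1 hgenS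
  let σ : ↥S × ↥S → G := fun s => s.1 * s.2
  have hsymm : ∀ i : ↥S × ↥S, σ (⟨_, hinv _ i.2.2⟩, ⟨_, hinv _ i.1.2⟩) = (σ i)⁻¹ := by
    intro i; simp [σ]
  have hWS : WS σ := by
    refine ⟨⟨(⟨1, h1⟩, ⟨1, h1⟩), by simp [σ]⟩, ?_⟩
    refine ⟨⟨fun i => (⟨_, hinv _ i.2.2⟩, ⟨_, hinv _ i.1.2⟩), fun i => (⟨_, hinv _ i.2.2⟩, ⟨_, hinv _ i.1.2⟩), ?_, ?_⟩, hsymm⟩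
    · intro i; simp
    · intro i; simp
  have hgenB : ∀ g, ∃ n, g ∈ Ba σ n := by
    intro g
    obtain ⟨n, hn⟩ := subset_pow_of_closure (A := (S : Set G)) (by
      ext x; exact ⟨fun h => by simpa using hinv _ h, fun h => hinv _ h⟩) hgenS g
    refine ⟨n, ?_⟩
    rw [← Finset.coe_pow, Finset.mem_coe] at hn
    refine Finset.pow_subset_pow_left ?_ hn
    intro s hs
    exact Finset.mem_image.2 ⟨(⟨s, hs⟩, ⟨1, h1⟩), Finset.mem_univ _, by simp [σ]⟩
  have hgen : ∀ P : G → Prop, P 1 → (∀ g i, P g → P (g * σ i)) → ∀ g, P g := by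
    intro P hP1 hP g
    obtain ⟨n, hn⟩ := hgenB g
    induction n generalizing g with
    | zero => simp only [Ba, pow_zero, Finset.mem_one] at hn; rwa [hn]
    | succ n ih =>
      rw [Ba, pow_succ, Finset.mem_mul] at hn
      obtain ⟨a, ha, b, hb, rfl⟩ := hn
      obtain ⟨i, -, rfl⟩ := Finset.mem_image.1 hb
      exact hP _ _ (ih _ ha)
  have hfLH : f ∈ LH σ := by
    refine ⟨fun g => ?_, L, fun g i => hL g _ i.1.2 _ i.2.2⟩
    have := hf g
    rw [← Finset.sum_coe_sort] at this
    simp_rw [← Finset.sum_coe_sort S] at this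
    rw [Fintype.sum_prod_type]
    exact this
  have hfd := LHc_finite (hWS.LH_finite hgenB hPG)
  letI : TopologicalSpace G := ⊥
  have : DiscreteTopology G := ⟨rfl⟩
  letI : TopologicalSpace (↥S × ↥S) := ⊥
  have : DiscreteTopology (↥S × ↥S) := ⟨rfl⟩
  obtain ⟨K, hK, hab⟩ := exists_fi_rep (σ := σ) hPG
  by_contra hcon
  push Not at hcon
  -- kernel on K
  let ρK := (gradRep σ).comp K.subtype
  have hkerK : ρK.ker.FiniteIndex := by
    have h1 : commutator K ≤ ρK.ker := commutator_le_ker_aux ρK fun a b => hab a a.2 b b.2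
    have := hcon K hK
    exact Subgroup.finiteIndex_of_le h1
  let K2 : Subgroup G := ρK.ker.map K.subtype
  have hK2 : K2.FiniteIndex := by
    refine ⟨?_⟩
    rw [Subgroup.index_map_subtype]
    exact mul_ne_zero hkerK.index_ne_zero hK.index_ne_zero
  have hK2mem : ∀ g ∈ K2, gradRep σ g = 1 := by
    rintro g ⟨x, hx, rfl⟩
    exact hx
  have hshift : ∀ g ∈ K2, ∀ x, f (g * x) - f x = f g - f 1 := by
    intro g hg x
    have := gradRep_one hgen (hK2mem _ (K2.inv_mem hg)) hfLH x
    simpa using this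
  let lam : K2 →* Multiplicative ℝ :=
    { toFun := fun g => Multiplicative.ofAdd (f g - f 1)
      map_one' := by simp
      map_mul' := by
        intro a b
        rw [← ofAdd_add]
        congr 1
        have := hshift a a.2 b
        simp only [Subgroup.coe_mul]
        linarith }
  have hlk : lam.ker.FiniteIndex := by
    have h1 : commutator K2 ≤ lam.ker := commutator_le_ker_aux lam fun a b => by
      rw [map_mul, map_mul, mul_comm]
    have := hcon K2 hK2
    exact Subgroup.finiteIndex_of_le h1
  have hlr := finite_range_of_fi lam hlk
  have hzero : ∀ g ∈ K2, f g = f 1 := by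
    intro g hg
    have h1 : IsOfFinOrder (⟨lam ⟨g, hg⟩, ⟨⟨g, hg⟩, rfl⟩⟩ : lam.range) := isOfFinOrder_of_finite _
    obtain ⟨n, hn, h2⟩ := isOfFinOrder_iff_pow_eq_one.1 h1
    have h3 : lam ⟨g, hg⟩ ^ n = 1 := congrArg Subtype.val h2
    have h4 : n • (f g - f 1) = 0 := congrArg Multiplicative.toAdd h3
    rw [nsmul_eq_mul] at h4
    rcases mul_eq_zero.1 h4 with h | h
    · rw [Nat.cast_eq_zero] at h; omega
    · linarith
  have hinvar : ∀ g ∈ K2, ∀ x, f (g * x) = f x := by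
    intro g hg x
    linarith [hshift g hg x, hzero g hg]
  have hfin : (Set.range f).Finite := by
    have hq : Finite (G ⧸ K2) := Subgroup.finite_quotient_of_finiteIndex
    let F : G ⧸ K2 → ℝ := Quotient.lift (fun x => f x⁻¹) (by
      intro a b hab
      have hab' := QuotientGroup.leftRel_apply.1 hab
      have := hinvar _ hab' b⁻¹
      simpa using this)
    refine (Set.finite_range F).subset ?_
    rintro _ ⟨x, rfl⟩
    exact ⟨QuotientGroup.mk x⁻¹, by simp [F, QuotientGroup.mk]⟩
  exact hg1 (harmonic_const hgen (fun i => ⟨_, hsymm i⟩) hfLH.1 hfin g1)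

theorem exists_int_hom (H : Type*) [Group H] [Group.FG H] (h : ¬ (commutator H).FiniteIndex) :
    ∃ φ : H →* Multiplicative ℤ, ∃ t, φ t = Multiplicative.ofAdd 1 := by
  have hfg : AddGroup.FG (Additive (Abelianization H)) := by
    have : Group.FG (Abelianization H) := by
      unfold Abelianization; infer_instance
    infer_instance
  obtain ⟨n, ι, hι, p, hp, e, ⟨E⟩⟩ := AddCommGroup.equiv_free_prod_directSum_zmod (Additive (Abelianization H))
  have hn : 0 < n := by
    rw [Nat.pos_iff_ne_zero]
    rintro rfl
    apply h
    have : ∀ i, NeZero (p i ^ e i) := fun i => ⟨pow_ne_zero _ (hp i).ne_zero⟩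
    have : Finite (DirectSum ι fun i => ZMod (p i ^ e i)) := by
      classical
      exact Finite.of_equiv _ (DirectSum.addEquivProd (fun i => ZMod (p i ^ e i))).symm.toEquiv
    have : Finite (Additive (Abelianization H)) := Finite.of_equiv _ E.symm.toEquiv
    have : Finite (H ⧸ commutator H) := this
    exact Subgroup.finiteIndex_of_finite_quotient
  let pr : (Fin n →₀ ℤ) × (DirectSum ι fun i => ZMod (p i ^ e i)) →+ ℤ :=
    (Finsupp.applyAddHom ⟨0, hn⟩).comp (AddMonoidHom.fst _ _)
  let φ0 : Additive (Abelianization H) →+ ℤ := pr.comp E.toAddMonoidHom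
  let φ : H →* Multiplicative ℤ := (AddMonoidHom.toMultiplicativeLeft φ0).comp Abelianization.of
  obtain ⟨t, ht⟩ := (QuotientGroup.mk_surjective : Function.Surjective (QuotientGroup.mk (s := commutator H)))
    (Additive.toMul (E.symm (Finsupp.single ⟨0, hn⟩ 1, 0)))
  refine ⟨φ, t, ?_⟩
  have : φ t = Multiplicative.ofAdd (φ0 (Additive.ofMul (Abelianization.of t))) := rfl
  rw [this]
  congr 1
  have e2 : Additive.ofMul (Abelianization.of t) = E.symm (Finsupp.single ⟨0, hn⟩ 1, 0) := ht
  rw [e2]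
  simp [φ0, pr]

theorem exists_surj [Infinite G] [Group.FG G] {d : ℕ} (hPG : PG G d) :
    ∃ H : Subgroup G, H.FiniteIndex ∧ Group.FG H ∧ ∃ φ : H →* Multiplicative ℤ, ∃ t, φ t = Multiplicative.ofAdd 1 := by
  obtain ⟨H, hH, hc⟩ := exists_infinite_ab hPG
  have : Group.FG H := inferInstance
  exact ⟨H, hH, this, exists_int_hom H hc⟩

end surj
end Gro

namespace Gro
open scoped Pointwise
universe v
section noexp
variable {G : Type u} [Group G]

theorem PG.of_surjective {H : Type v} [Group H] {d : ℕ} (h : PG G d) (f : G →* H) (hf : Function.Surjective f) :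
    PG H d := by
  intro S hS
  classical
  choose s hs using hf
  obtain ⟨C, hC⟩ := h (s '' S) (hS.image _)
  refine ⟨C, fun r => ?_⟩
  have e : S ^ r = f '' ((s '' S) ^ r) := by
    rw [Set.image_pow]
    congr 1
    rw [Set.image_image]
    simp [hs]
  rw [e]
  exact (Set.ncard_image_le (fpow (hS.image _) r)).trans (hC r)

theorem no_expand3 {d : ℕ} (hPG : PG G d) (A : Subgroup G) (τ : G) (hτ : ∀ a ∈ A, τ * a * τ⁻¹ ∈ A)
    (ψ : Additive A →+ ℂ) (μ : ℂ) (hμ : 3 ≤ ‖μ‖)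
    (hψ : ∀ a : A, ψ (Additive.ofMul ⟨τ * a * τ⁻¹, hτ a a.2⟩) = μ * ψ (Additive.ofMul a)) : ψ = 0 := by
  have hpow : ∀ (j : ℕ) (a : A), ∃ h : τ ^ j * a * (τ ^ j)⁻¹ ∈ A, ψ (Additive.ofMul ⟨_, h⟩) = μ ^ j * ψ (Additive.ofMul a) := by
    intro j
    induction j with
    | zero => intro a; exact ⟨by simp, by simp⟩
    | succ j ih =>
      intro a
      obtain ⟨h, e⟩ := ih a
      have h2 := hψ ⟨_, h⟩
      have e2 : τ * (τ ^ j * a * (τ ^ j)⁻¹) * τ⁻¹ = τ ^ (j + 1) * a * (τ ^ (j + 1))⁻¹ := by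
        rw [pow_succ']; group
      refine ⟨by rw [← e2]; exact hτ _ h, ?_⟩
      have e3 : (⟨τ * (τ ^ j * a * (τ ^ j)⁻¹) * τ⁻¹, hτ _ h⟩ : A) = ⟨τ ^ (j + 1) * a * (τ ^ (j + 1))⁻¹, by rw [← e2]; exact hτ _ h⟩ :=
        Subtype.ext e2
      rw [← e3, h2, e]; ring
  by_contra hne
  have : ∃ e : A, ψ (Additive.ofMul e) ≠ 0 := by
    by_contra hcon
    push Not at hcon
    exact hne (AddMonoidHom.ext fun x => hcon x.toMul)
  obtain ⟨e, he⟩ := this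
  have key : ∀ (j : ℕ) (w : G), w ∈ ({(e:G) * τ, τ} : Set G) ^ j →
      ∃ h : w * (τ ^ j)⁻¹ ∈ A, ∃ z : ℂ, ψ (Additive.ofMul ⟨_, h⟩) = z * ψ (Additive.ofMul e) ∧ ‖z‖ ≤ (‖μ‖ ^ j - 1) / 2 := by
    intro j
    induction j with
    | zero =>
      intro w hw
      rw [pow_zero, Set.mem_one] at hw
      subst hw
      refine ⟨by simp, 0, ?_, by simp⟩
      have : (⟨1 * (τ ^ 0)⁻¹, by simp⟩ : A) = 1 := Subtype.ext (by simp)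
      rw [this]; simp
    | succ j ih =>
      intro w hw
      rw [pow_succ, Set.mem_mul] at hw
      obtain ⟨w', hw', y, hy, rfl⟩ := hw
      obtain ⟨h, z, hz, hzn⟩ := ih w' hw'
      have hm : (0:ℝ) ≤ ‖μ‖ ^ j := by positivity
      rcases hy with rfl | hy
      · obtain ⟨h', e'⟩ := hpow j e
        have e2 : w' * (e * τ) * (τ ^ (j + 1))⁻¹ = (w' * (τ ^ j)⁻¹) * (τ ^ j * e * (τ ^ j)⁻¹) := by
          rw [pow_succ']
          have : τ * τ ^ j = τ ^ j * τ := (pow_succ' τ j).symm.trans (pow_succ τ j)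
          rw [this]; group
        refine ⟨by rw [e2]; exact A.mul_mem h h', z + μ ^ j, ?_, ?_⟩
        · have e3 : (⟨w' * (e * τ) * (τ ^ (j + 1))⁻¹, by rw [e2]; exact A.mul_mem h h'⟩ : A) = ⟨_, h⟩ * ⟨_, h'⟩ := Subtype.ext e2
          rw [e3, ofMul_mul, map_add, hz, e']; ring
        · refine (norm_add_le _ _).trans ?_
          rw [norm_pow, pow_succ]
          nlinarith
      · rw [Set.mem_singleton_iff] at hy
        subst hy
        have e2 : w' * y * (y ^ (j + 1))⁻¹ = w' * (y ^ j)⁻¹ := by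
          rw [pow_succ]; group
        refine ⟨by rw [e2]; exact h, z, ?_, ?_⟩
        · have e3 : (⟨w' * y * (y ^ (j + 1))⁻¹, by rw [e2]; exact h⟩ : A) = ⟨_, h⟩ := Subtype.ext e2
          rw [e3, hz]
        · rw [pow_succ]
          nlinarith
  obtain ⟨j, a, ha, b, hb, hab⟩ := hPG.semigroup ((e:G) * τ) τ
  obtain ⟨h1, z1, e1, n1⟩ := key j a ha
  obtain ⟨h2, z2, e2, n2⟩ := key j b hb
  obtain ⟨h3, e3⟩ := hpow j e
  have hb' : b = a * e := by
    rw [← mul_assoc] at hab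
    exact (mul_right_cancel hab).symm
  have e4 : (⟨_, h2⟩ : A) = ⟨_, h1⟩ * ⟨_, h3⟩ := by
    apply Subtype.ext
    simp only [Subgroup.coe_mul]
    rw [hb']; group
  rw [e4, ofMul_mul, map_add, e1, e3, ← add_mul] at e2
  have e5 := mul_right_cancel₀ he e2
  have : μ ^ j = z2 - z1 := by rw [← e5]; ring
  have h6 : ‖μ‖ ^ j ≤ ‖z2‖ + ‖z1‖ := by
    rw [← norm_pow, this]; exact norm_sub_le _ _
  linarith

theorem no_expand {d : ℕ} (hPG : PG G d) (A : Subgroup G) (τ : G) (hτ : ∀ a ∈ A, τ * a * τ⁻¹ ∈ A)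
    (ψ : Additive A →+ ℂ) (μ : ℂ) (hμ : 1 < ‖μ‖)
    (hψ : ∀ a : A, ψ (Additive.ofMul ⟨τ * a * τ⁻¹, hτ a a.2⟩) = μ * ψ (Additive.ofMul a)) : ψ = 0 := by
  have hpow : ∀ (j : ℕ) (a : A), ∃ h : τ ^ j * a * (τ ^ j)⁻¹ ∈ A, ψ (Additive.ofMul ⟨_, h⟩) = μ ^ j * ψ (Additive.ofMul a) := by
    intro j
    induction j with
    | zero => intro a; exact ⟨by simp, by simp⟩
    | succ j ih =>
      intro a
      obtain ⟨h, e⟩ := ih a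
      have h2 := hψ ⟨_, h⟩
      have e2 : τ * (τ ^ j * a * (τ ^ j)⁻¹) * τ⁻¹ = τ ^ (j + 1) * a * (τ ^ (j + 1))⁻¹ := by
        rw [pow_succ']; group
      refine ⟨by rw [← e2]; exact hτ _ h, ?_⟩
      have e3 : (⟨τ * (τ ^ j * a * (τ ^ j)⁻¹) * τ⁻¹, hτ _ h⟩ : A) = ⟨τ ^ (j + 1) * a * (τ ^ (j + 1))⁻¹, by rw [← e2]; exact hτ _ h⟩ :=
        Subtype.ext e2
      rw [← e3, h2, e]; ring
  obtain ⟨p, hp⟩ := pow_unbounded_of_one_lt 3 hμ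
  refine no_expand3 hPG A (τ ^ p) (fun a ha => (hpow p ⟨a, ha⟩).1) ψ (μ ^ p) (by rw [norm_pow]; exact hp.le) ?_
  intro a
  exact (hpow p a).2

end noexp

section la
open Polynomial

theorem kron (q : ℤ[X]) (hq : q.Monic) (h1 : ∀ z ∈ (q.map (Int.castRingHom ℂ)).roots, ‖z‖ ≤ 1 ∧ z ≠ 0) :
    ∃ m, 0 < m ∧ q ∣ (X ^ m - 1) ^ q.natDegree := by
  have hqC : (q.map (Int.castRingHom ℂ)).Monic := hq.map _
  have hM : (q.map (Int.castRingHom ℂ)).mahlerMeasure = 1 := by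
    rw [mahlerMeasure_eq_leadingCoeff_mul_prod_roots, hqC.leadingCoeff]
    rw [norm_one, one_mul]
    refine Multiset.prod_eq_one ?_
    intro x hx
    obtain ⟨z, hz, rfl⟩ := Multiset.mem_map.1 hx
    exact max_eq_left (h1 z hz).1
  have hroots : ∀ z, ∃ n, 0 < n ∧ (z ∈ (q.map (Int.castRingHom ℂ)).roots → z ^ n = 1) := by
    intro z
    by_cases hz : z ∈ (q.map (Int.castRingHom ℂ)).roots
    · obtain ⟨n, hn, h⟩ := pow_eq_one_of_mahlerMeasure_eq_one hM (h1 z hz).2 hz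
      exact ⟨n, hn, fun _ => h⟩
    · exact ⟨1, one_pos, fun h => absurd h hz⟩
  choose n hn hz using hroots
  refine ⟨∏ z ∈ (q.map (Int.castRingHom ℂ)).roots.toFinset, n z, Finset.prod_pos fun z _ => hn z, ?_⟩
  set m := ∏ z ∈ (q.map (Int.castRingHom ℂ)).roots.toFinset, n z
  have hzm : ∀ z ∈ (q.map (Int.castRingHom ℂ)).roots, z ^ m = 1 := by
    intro z hzr
    have hdvd : n z ∣ m := Finset.dvd_prod_of_mem _ (Multiset.mem_toFinset.2 hzr)
    obtain ⟨k, hk⟩ := hdvd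
    rw [hk, pow_mul, hz z hzr, one_pow]
  have hd : q.map (Int.castRingHom ℂ) ∣ ((X ^ m - 1) ^ q.natDegree : ℤ[X]).map (Int.castRingHom ℂ) := by
    have hsp := IsAlgClosed.splits (q.map (Int.castRingHom ℂ))
    have hcard := hsp.natDegree_eq_card_roots
    rw [hq.natDegree_map] at hcard
    rw [hsp.eq_prod_roots_of_monic hqC]
    have : ((X ^ m - 1) ^ q.natDegree : ℤ[X]).map (Int.castRingHom ℂ) =
        ((q.map (Int.castRingHom ℂ)).roots.map fun _ => (X ^ m - 1 : ℂ[X])).prod := by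
      rw [Multiset.map_const', Multiset.prod_replicate, ← hcard]
      simp
    rw [this]
    have aux : ∀ s : Multiset ℂ, (∀ z ∈ s, z ^ m = 1) →
        (s.map fun a => X - C a).prod ∣ (s.map fun _ => (X ^ m - 1 : ℂ[X])).prod := by
      intro s
      induction s using Multiset.induction_on with
      | empty => intro _; simp
      | cons a s ih =>
        intro h
        rw [Multiset.map_cons, Multiset.map_cons, Multiset.prod_cons, Multiset.prod_cons]
        refine mul_dvd_mul ?_ (ih fun z hz => h z (Multiset.mem_cons_of_mem hz))
        rw [dvd_iff_isRoot]
        simp [h a (Multiset.mem_cons_self _ _)]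
    exact aux _ hzm
  exact (map_dvd_map (Int.castRingHom ℂ) Int.cast_injective hq).1 hd

end la
end Gro

namespace Gro
open scoped Pointwise
universe v
section la
open Polynomial

theorem exists_eig {F : Type*} [AddCommGroup F] [Module.Finite ℤ F] [Module.Free ℤ F] (f : Module.End ℤ F) (z : ℂ)
    (hz : z ∈ (f.charpoly.map (Int.castRingHom ℂ)).roots) :
    ∃ ψ : F →+ ℂ, ψ ≠ 0 ∧ ∀ x, ψ (f x) = z * ψ x := by
  classical
  let b := Module.Free.chooseBasis ℤ F
  let M := LinearMap.toMatrix b b f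
  have hM : f.charpoly = M.charpoly := (LinearMap.charpoly_toMatrix f b).symm
  have hroot : (M.map (Int.castRingHom ℂ)).charpoly.eval z = 0 := by
    rw [Matrix.charpoly_map, ← hM]
    exact (mem_roots'.1 hz).2
  rw [Matrix.eval_charpoly] at hroot
  obtain ⟨v, hv, hv2⟩ := Matrix.exists_vecMul_eq_zero_iff.2 hroot
  have hv3 : ∀ j, ∑ i, v i * ((M i j : ℤ) : ℂ) = z * v j := by
    intro j
    have := congrFun hv2 j
    rw [Matrix.vecMul_sub] at this
    simp [Matrix.vecMul, dotProduct, Matrix.scalar_apply, Matrix.diagonal_apply] at this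
    rw [sub_eq_zero] at this
    rw [← this, mul_comm]
  let ψ : F →+ ℂ := ∑ i, ((AddMonoidHom.mulLeft (v i)).comp (Int.castAddHom ℂ)).comp (b.coord i).toAddMonoidHom
  have hψ : ∀ x, ψ x = ∑ i, v i * ((b.repr x i : ℤ) : ℂ) := by
    intro x; simp [ψ]
  have hψb : ∀ j, ψ (b j) = v j := by
    intro j
    rw [hψ]
    simp [Finsupp.single_apply]
  refine ⟨ψ, ?_, ?_⟩
  · intro h0
    apply hv
    funext j
    rw [← hψb, h0]; rfl
  · intro x
    have key : ψ.toIntLinearMap ∘ₗ f = ((AddMonoidHom.mulLeft z).comp ψ).toIntLinearMap := by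
      refine b.ext fun j => ?_
      simp only [LinearMap.comp_apply, AddMonoidHom.coe_toIntLinearMap, AddMonoidHom.comp_apply, AddMonoidHom.coe_mulLeft]
      rw [hψb, hψ, ← hv3]
      simp only [M, LinearMap.toMatrix_apply]
    exact congrArg (fun h => h x) key

theorem unip {A : Type*} [AddCommGroup A] [Module.Finite ℤ A] (α : A ≃ₗ[ℤ] A)
    (hexp : ∀ (ψ : A →+ ℂ) (z : ℂ), 1 < ‖z‖ → (∀ a, ψ (α a) = z * ψ a) → ψ = 0) :
    ∃ m, 0 < m ∧ ∃ l : ℕ, ∀ k : ℕ, ∀ x, (((α : Module.End ℤ A) ^ (m * k) - 1) ^ l) x = 0 := by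
  let β : Module.End ℤ A := α
  let T := Submodule.torsion ℤ A
  have hT : ∀ x ∈ T, β x ∈ T := by
    intro x hx
    obtain ⟨a, ha⟩ := hx
    refine ⟨a, ?_⟩
    have := congrArg β ha
    rw [map_zero] at this
    rw [← this]
    exact (map_smul β (a : ℤ) x).symm
  let γ : Module.End ℤ (A ⧸ T) := T.mapQ T β hT
  have hγ : ∀ x, γ (T.mkQ x) = T.mkQ (β x) := fun x => rfl
  have : Module.Finite ℤ (A ⧸ T) := inferInstance
  have : Module.IsTorsionFree ℤ (A ⧸ T) := inferInstance
  have : Module.Free ℤ (A ⧸ T) := inferInstance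
  obtain ⟨m, hm, hdvd⟩ := kron γ.charpoly γ.charpoly_monic (by
    intro z hz
    obtain ⟨ψ, hψ0, hψ⟩ := exists_eig γ z hz
    have hψ1 : ψ.comp T.mkQ.toAddMonoidHom ≠ 0 := by
      intro h0
      apply hψ0
      ext x
      obtain ⟨y, rfl⟩ := T.mkQ_surjective x
      exact DFunLike.congr_fun h0 y
    have hψ2 : ∀ a, ψ.comp T.mkQ.toAddMonoidHom (α a) = z * ψ.comp T.mkQ.toAddMonoidHom a := by
      intro a
      exact hψ (T.mkQ a)
    refine ⟨?_, ?_⟩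
    · by_contra hcon
      push Not at hcon
      exact hψ1 (hexp _ z hcon hψ2)
    · rintro rfl
      apply hψ1
      ext x
      have := hψ2 (α.symm x)
      rw [LinearEquiv.apply_symm_apply, zero_mul] at this
      exact this)
  set n := γ.charpoly.natDegree
  have hfin : Finite T := by
    have : Module.Finite ℤ T := inferInstance
    exact Module.finite_of_fg_torsion T (Submodule.torsion_isTorsion)
  let e : Equiv.Perm T := Equiv.ofBijective (fun x => (⟨β x, hT x x.2⟩ : T)) (by
    rw [← Finite.injective_iff_bijective]
    intro x y hxy
    have := congrArg Subtype.val hxy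
    exact Subtype.ext (α.injective this))
  obtain ⟨m', hm', he⟩ := isOfFinOrder_iff_pow_eq_one.1 (isOfFinOrder_of_finite e)
  have hTm : ∀ k : ℕ, ∀ x ∈ T, (β ^ (m' * k)) x = x := by
    have h1 : ∀ n : ℕ, ∀ x : T, (((e ^ n) x : T) : A) = (β ^ n) x := by
      intro n
      induction n with
      | zero => intro x; simp
      | succ n ih =>
        intro x
        rw [pow_succ', pow_succ', Equiv.Perm.mul_apply, Module.End.mul_apply, ← ih]
        rfl
    intro k x hx
    have := h1 (m' * k) ⟨x, hx⟩
    rw [pow_mul, he, one_pow] at this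
    exact this.symm
  refine ⟨m * m', Nat.mul_pos hm hm', n + 1, fun k x => ?_⟩
  change ((β ^ (m * m' * k) - 1) ^ (n + 1)) x = 0
  have hq : γ.charpoly ∣ (X ^ (m * m' * k) - 1) ^ n := by
    refine hdvd.trans (pow_dvd_pow_of_dvd ?_ _)
    rw [mul_assoc, pow_mul]
    exact sub_one_dvd_pow_sub_one _ _
  have h0 : (γ ^ (m * m' * k) - 1) ^ n = 0 := by
    obtain ⟨r, hr⟩ := hq
    have := congrArg (aeval γ) hr
    rw [map_mul, LinearMap.aeval_self_charpoly, zero_mul] at this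
    simpa using this
  have hee : m * m' * k = m' * (m * k) := by ring
  have hmem : ((β ^ (m * m' * k) - 1) ^ n) x ∈ T := by
    have c1 : (γ ^ (m * m' * k) - 1) ∘ₗ T.mkQ = T.mkQ ∘ₗ (β ^ (m * m' * k) - 1) := by
      have := Module.End.commute_pow_left_of_commute (f := T.mkQ) (g := β) (g₂ := γ) (by ext x; rfl) (m * m' * k)
      rw [LinearMap.sub_comp, LinearMap.comp_sub, this]
      rfl
    have c2 := Module.End.commute_pow_left_of_commute c1 n
    rw [h0] at c2
    have := LinearMap.congr_fun c2 x
    rw [LinearMap.comp_apply, LinearMap.comp_apply, LinearMap.zero_apply, Submodule.mkQ_apply] at this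
    exact (Submodule.Quotient.mk_eq_zero _).1 this.symm
  rw [pow_succ', Module.End.mul_apply, LinearMap.sub_apply, sub_eq_zero]
  have h9 := hTm (m * k) _ hmem
  rw [← hee] at h9
  exact h9

end la
end Gro

namespace Gro
open scoped Pointwise
universe v
section nil
variable {G : Type u} [Group G]

def cj (s x : G) : G := s * x * s⁻¹ * x⁻¹

theorem map_cj {H : Type v} [Group H] (f : G →* H) (s x : G) (l : ℕ) : f ((cj s)^[l] x) = (cj (f s))^[l] (f x) := by
  induction l generalizing x with
  | zero => rfl
  | succ l ih =>
    rw [Function.iterate_succ_apply, Function.iterate_succ_apply, ih]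
    simp [cj]

theorem sec_abelian {d : ℕ} (hPG : PG G d) (A : Subgroup G) [A.Normal] (hc : ∀ a ∈ A, ∀ b ∈ A, a * b = b * a)
    (hfg : A.FG) (t : G) : ∃ m, 0 < m ∧ ∃ l : ℕ, ∀ k : ℕ, ∀ x ∈ A, (cj (t ^ (m * k)))^[l] x = 1 := by
  letI : CommGroup A := { (inferInstance : Group A) with
    mul_comm := fun a b => Subtype.ext (hc a a.2 b b.2) }
  have hFG : AddGroup.FG (Additive A) := by
    have : Group.FG A := (Group.fg_iff_subgroup_fg A).2 hfg
    infer_instance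
  have : Module.Finite ℤ (Additive A) := Module.Finite.iff_addGroup_fg.2 hFG
  let α : Additive A ≃ₗ[ℤ] Additive A := (MulEquiv.toAdditive (MulAut.conjNormal (H := A) t)).toIntLinearEquiv
  have hα : ∀ a : A, (((α (Additive.ofMul a)).toMul : A) : G) = t * a * t⁻¹ := fun a => rfl
  obtain ⟨m, hm, l, hl⟩ := unip α (by
    intro ψ z hz h
    refine no_expand hPG A t (fun a ha => Subgroup.Normal.conj_mem ‹_› a ha t) ψ z hz ?_
    intro a
    rw [← h]
    rfl)
  refine ⟨m, hm, l, fun k x hx => ?_⟩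
  have hpow : ∀ (N : ℕ) (a : A), (((((α : Module.End ℤ (Additive A)) ^ N) (Additive.ofMul a)).toMul : A) : G)
      = t ^ N * a * (t ^ N)⁻¹ := by
    intro N
    induction N with
    | zero => intro a; simp
    | succ N ih =>
      intro a
      rw [pow_succ, Module.End.mul_apply]
      have := ih ((α (Additive.ofMul a)).toMul)
      rw [hα] at this
      refine this.trans ?_
      rw [pow_succ]; group
  have hit : ∀ (N l : ℕ) (a : A), ((((((α : Module.End ℤ (Additive A)) ^ N - 1) ^ l) (Additive.ofMul a)).toMul : A) : G)
      = (cj (t ^ N))^[l] a := by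
    intro N l
    induction l with
    | zero => intro a; simp
    | succ l ih =>
      intro a
      rw [pow_succ', Module.End.mul_apply, Function.iterate_succ_apply', ← ih a]
      set y := (((α : Module.End ℤ (Additive A)) ^ N - 1) ^ l) (Additive.ofMul a)
      rw [LinearMap.sub_apply, toMul_sub]
      rw [div_eq_mul_inv, Subgroup.coe_mul]
      have := hpow N y.toMul
      rw [ofMul_toMul] at this
      rw [this]
      rfl
  have := hit (m * k) l ⟨x, hx⟩
  rw [hl k] at this
  exact this.symm

theorem sec_gen {d : ℕ} (hPG : PG G d) (A B : Subgroup G) [A.Normal] [B.Normal]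
    (hc : ∀ a ∈ A, ∀ b ∈ A, cj a b ∈ B)
    (hfg : A.FG) (t : G) : ∃ m, 0 < m ∧ ∃ l : ℕ, ∀ k : ℕ, ∀ x ∈ A, (cj (t ^ (m * k)))^[l] x ∈ B := by
  have hs := QuotientGroup.mk'_surjective B
  have : (A.map (QuotientGroup.mk' B)).Normal := Subgroup.Normal.map ‹_› _ hs
  obtain ⟨m, hm, l, hl⟩ := sec_abelian (hPG.of_surjective (QuotientGroup.mk' B) hs) (A.map (QuotientGroup.mk' B))
    (by
      rintro _ ⟨a, ha, rfl⟩ _ ⟨b, hb, rfl⟩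
      have h1 : QuotientGroup.mk' B (cj a b) = 1 := (QuotientGroup.eq_one_iff _).2 (hc a ha b hb)
      simp only [cj, map_mul, map_inv] at h1
      rw [mul_inv_eq_one, mul_inv_eq_iff_eq_mul] at h1
      exact h1)
    (by
      classical
      obtain ⟨S, hS⟩ := hfg
      exact ⟨S.image (QuotientGroup.mk' B), by rw [← hS, MonoidHom.map_closure, Finset.coe_image]⟩)
    (QuotientGroup.mk' B t)
  refine ⟨m, hm, l, fun k x hx => ?_⟩
  have := hl k _ ⟨x, hx, rfl⟩
  rw [← map_pow, ← map_cj] at this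
  exact (QuotientGroup.eq_one_iff _).1 this

theorem commut_closure (Z : Subgroup G) [Z.Normal] (x : G) : ∃ C : Subgroup G, ∀ g, g ∈ C ↔ cj g x ∈ Z := by
  refine ⟨(Subgroup.centralizer {QuotientGroup.mk' Z x}).comap (QuotientGroup.mk' Z), fun g => ?_⟩
  rw [Subgroup.mem_comap, Subgroup.mem_centralizer_singleton_iff, ← QuotientGroup.eq_one_iff]
  change _ ↔ QuotientGroup.mk' Z _ = 1
  simp only [cj, map_mul, map_inv]
  rw [mul_inv_eq_one, mul_inv_eq_iff_eq_mul]

theorem mem_upper_of_gen (M : Subgroup G) (s : G) (hgen : M ⊔ Subgroup.zpowers s = ⊤) (n : ℕ) (x : G)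
    (h1 : ∀ g ∈ M, cj g x ∈ Subgroup.upperCentralSeries G n) (h2 : cj s x ∈ Subgroup.upperCentralSeries G n) :
    x ∈ Subgroup.upperCentralSeries G (n + 1) := by
  obtain ⟨C, hC⟩ := commut_closure (Subgroup.upperCentralSeries G n) x
  have : C = ⊤ := by
    rw [eq_top_iff, ← hgen, sup_le_iff, Subgroup.zpowers_le]
    exact ⟨fun g hg => (hC g).2 (h1 g hg), (hC s).2 h2⟩
  rw [Subgroup.mem_upperCentralSeries_succ_iff]
  intro y
  have h3 := (hC y).1 (this ▸ Subgroup.mem_top y)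
  have h4 := Subgroup.inv_mem _ h3
  have e : (cj y x)⁻¹ = x * y * x⁻¹ * y⁻¹ := by simp [cj, mul_assoc]
  rw [e] at h4
  exact h4

theorem nilp_gen (M : Subgroup G) [hM : M.Normal] (s : G) (hgen : M ⊔ Subgroup.zpowers s = ⊤)
    (L : ℕ → Subgroup G) (c l : ℕ) (hL0 : L 0 = M) (hLc : L c = ⊥) (hLn : ∀ i, (L i).Normal)
    (hLM : ∀ i, ∀ x ∈ L i, ∀ g ∈ M, cj g x ∈ L (i + 1)) (hLs : ∀ i, ∀ x ∈ L i, (cj s)^[l] x ∈ L (i + 1)) :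
    Group.IsNilpotent G := by
  have hmono := Subgroup.upperCentralSeries_mono G
  have step : ∀ i n, L (i + 1) ≤ Subgroup.upperCentralSeries G n →
      ∀ j, ∀ x ∈ L i, (cj s)^[j] x ∈ L (i + 1) → x ∈ Subgroup.upperCentralSeries G (n + j) := by
    intro i n hin j
    induction j with
    | zero => intro x _ hx; exact hin hx
    | succ j ih =>
      intro x hx hxs
      refine mem_upper_of_gen M s hgen (n + j) x (fun g hg => hmono (by omega) (hin (hLM i x hx g hg))) ?_
      refine ih _ ?_ ?_
      · exact (L i).mul_mem ((hLn i).conj_mem x hx s) ((L i).inv_mem hx)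
      · rwa [Function.iterate_succ_apply] at hxs
  have hall : ∀ i ≤ c, L (c - i) ≤ Subgroup.upperCentralSeries G (i * l) := by
    intro i
    induction i with
    | zero => intro _; rw [Nat.sub_zero, hLc]; exact bot_le
    | succ i ih =>
      intro hi x hx
      have h1 := ih (by omega)
      rw [show c - i = c - (i + 1) + 1 by omega] at h1
      have := step _ _ h1 l x hx (hLs _ x hx)
      rwa [Nat.succ_mul]
  have hM1 : M ≤ Subgroup.upperCentralSeries G (c * l) := by
    have := hall c le_rfl
    rwa [Nat.sub_self, hL0] at this
  refine ⟨c * l + 1, ?_⟩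
  rw [eq_top_iff, ← hgen, sup_le_iff, Subgroup.zpowers_le]
  refine ⟨hM1.trans (hmono (by omega)), ?_⟩
  refine mem_upper_of_gen M s hgen _ s (fun g hg => hM1 ?_) ?_
  · have : cj g s = g * (s * g⁻¹ * s⁻¹) := by simp [cj, mul_assoc]
    rw [this]
    exact M.mul_mem hg (hM.conj_mem _ (M.inv_mem hg) s)
  · simp [cj]

theorem lcs_normal (M : Subgroup G) [M.Normal] (i : ℕ) : (M.lowerCentralSeries i).Normal := by
  induction i with
  | zero => simpa
  | succ i ih => rw [Subgroup.lowerCentralSeries_succ]; infer_instance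

theorem cj_iter_mem (B : Subgroup G) [hB : B.Normal] (s x : G) (hx : x ∈ B) (l : ℕ) : (cj s)^[l] x ∈ B := by
  induction l with
  | zero => exact hx
  | succ l ih =>
    rw [Function.iterate_succ_apply']
    exact B.mul_mem (hB.conj_mem _ ih s) (B.inv_mem ih)

theorem ext_nilp {d : ℕ} (hPG : PG G d) (M : Subgroup G) [M.Normal] (hnil : Group.IsNilpotent M)
    (hfg : ∀ K ≤ M, K.FG) (t : G) :
    ∃ m, 0 < m ∧ Group.IsNilpotent ↥(M ⊔ Subgroup.zpowers (t ^ m)) := by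
  have hn := lcs_normal M
  have hle : ∀ i, M.lowerCentralSeries i ≤ M := fun i => M.lowerCentralSeries_antitone (Nat.zero_le i)
  have hLM : ∀ i, ∀ x ∈ M.lowerCentralSeries i, ∀ g ∈ M, cj g x ∈ M.lowerCentralSeries (i + 1) := by
    intro i x hx g hg
    have := Subgroup.commutator_mem_commutator hx hg
    have h2 := Subgroup.inv_mem _ this
    rw [commutatorElement_inv, commutatorElement_def] at h2
    exact h2
  have hsec := fun i => sec_gen hPG (M.lowerCentralSeries i) (M.lowerCentralSeries (i + 1))
    (fun a ha b hb => hLM i b hb a (hle i ha)) (hfg _ (hle i)) t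
  choose m hm l hl using hsec
  obtain ⟨c, hc⟩ := (Subgroup.isNilpotent_iff_lowerCentralSeries M).1 hnil
  set m0 := ∏ i ∈ Finset.range c, m i with hm0
  set l0 := ∑ i ∈ Finset.range c, l i with hl0
  refine ⟨m0, Finset.prod_pos fun i _ => hm i, ?_⟩
  set P := M ⊔ Subgroup.zpowers (t ^ m0) with hP
  have hMP : M ≤ P := le_sup_left
  have hsP : t ^ m0 ∈ P := (le_sup_right : Subgroup.zpowers (t ^ m0) ≤ P) (Subgroup.mem_zpowers _)
  have hit : ∀ l (x : P), (((cj (⟨t ^ m0, hsP⟩ : P))^[l] x : P) : G) = (cj (t ^ m0))^[l] x := by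
    intro l x
    exact map_cj P.subtype _ _ _
  refine nilp_gen (G := P) (M.subgroupOf P) ⟨t ^ m0, hsP⟩ ?_ (fun i => (M.lowerCentralSeries i).subgroupOf P) c l0 rfl ?_ ?_ ?_ ?_
  · have e : Subgroup.zpowers (⟨t ^ m0, hsP⟩ : P) = (Subgroup.zpowers (t ^ m0)).subgroupOf P := by
      apply Subgroup.map_injective P.subtype_injective
      rw [MonoidHom.map_zpowers, Subgroup.map_subgroupOf_eq_of_le le_sup_right]
      rfl
    rw [e, ← Subgroup.subgroupOf_sup le_sup_left le_sup_right, Subgroup.subgroupOf_self]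
  · simp [hc]
  · intro i
    exact Subgroup.normal_subgroupOf
  · intro i x hx g hg
    exact hLM i x hx g hg
  · intro i x hx
    rw [Subgroup.mem_subgroupOf, hit]
    rw [Subgroup.mem_subgroupOf] at hx
    by_cases hi : i < c
    · obtain ⟨k, hk⟩ : m i ∣ m0 := Finset.dvd_prod_of_mem _ (Finset.mem_range.2 hi)
      have h1 := hl i k x hx
      rw [← hk] at h1
      have h2 : l i ≤ l0 := Finset.single_le_sum (f := l) (fun _ _ => Nat.zero_le _) (Finset.mem_range.2 hi)
      obtain ⟨r, hr⟩ := Nat.exists_eq_add_of_le h2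
      rw [hr, add_comm (l i) r, Function.iterate_add_apply]
      exact cj_iter_mem _ _ _ h1 _
    · have : (x : G) ∈ M.lowerCentralSeries c := M.lowerCentralSeries_antitone (by omega) hx
      rw [hc, Subgroup.mem_bot] at this
      rw [this]
      exact cj_iter_mem _ _ _ (Subgroup.one_mem _) _

end nil
end Gro

namespace Gro
open scoped Pointwise
universe v
section main
variable {G : Type u} [Group G]

theorem fg_of_fi (H : Subgroup G) [H.FiniteIndex] (K : Subgroup G) (h : (K ⊓ H).FG) : K.FG := by
  classical
  obtain ⟨S, hS⟩ := h
  have : Finite (K ⧸ H.subgroupOf K) := inferInstance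
  have := Fintype.ofFinite (K ⧸ H.subgroupOf K)
  refine ⟨S ∪ Finset.univ.image (fun q : K ⧸ H.subgroupOf K => (q.out : G)), ?_⟩
  apply le_antisymm
  · rw [Subgroup.closure_le]
    intro x hx
    simp only [Finset.coe_union, Finset.coe_image, Finset.coe_univ, Set.image_univ, Set.mem_union,
      Set.mem_range] at hx
    rcases hx with hx | ⟨q, rfl⟩
    · have : x ∈ K ⊓ H := hS ▸ Subgroup.subset_closure hx
      exact this.1
    · exact q.out.2
  · intro x hx
    set q : K ⧸ H.subgroupOf K := QuotientGroup.mk ⟨x, hx⟩ with hq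
    have h1 : q.out⁻¹ * ⟨x, hx⟩ ∈ H.subgroupOf K := by
      rw [← QuotientGroup.eq, QuotientGroup.out_eq']
    have h2 : (q.out : G)⁻¹ * x ∈ K ⊓ H := ⟨K.mul_mem (K.inv_mem q.out.2) hx, h1⟩
    have e : x = q.out * ((q.out : G)⁻¹ * x) := by group
    rw [e]
    refine Subgroup.mul_mem _ (Subgroup.subset_closure ?_) ?_
    · simp
    · rw [← hS] at h2
      exact Subgroup.closure_mono (by simp) h2

theorem fg_of_ext (φ : G →* Multiplicative ℤ) (K : Subgroup G) (h : (K ⊓ φ.ker).FG) : K.FG := by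
  classical
  obtain ⟨S, hS⟩ := h
  obtain ⟨⟨_, k, hk, rfl⟩, hg⟩ := (inferInstance : IsCyclic (K.map φ)).exists_generator
  refine ⟨insert k S, ?_⟩
  apply le_antisymm
  · rw [Subgroup.closure_le]
    intro x hx
    simp only [Finset.coe_insert, Set.mem_insert_iff] at hx
    rcases hx with rfl | hx
    · exact hk
    · have : x ∈ K ⊓ φ.ker := hS ▸ Subgroup.subset_closure hx
      exact this.1
  · intro x hx
    obtain ⟨n, hn⟩ := hg ⟨φ x, x, hx, rfl⟩
    have hn' : φ k ^ n = φ x := congrArg Subtype.val hn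
    have h2 : (k ^ n)⁻¹ * x ∈ K ⊓ φ.ker := by
      refine ⟨K.mul_mem (K.inv_mem (K.zpow_mem hk n)) hx, ?_⟩
      change φ _ = 1
      rw [map_mul, map_inv, map_zpow, hn', inv_mul_cancel]
    have e : x = k ^ n * ((k ^ n)⁻¹ * x) := by group
    rw [e]
    refine Subgroup.mul_mem _ (Subgroup.zpow_mem _ (Subgroup.subset_closure (by simp)) _) ?_
    rw [← hS] at h2
    exact Subgroup.closure_mono (by simp) h2

theorem fg_sub_map {H : Subgroup G} {K : Subgroup G} (hK : K ≤ H) (h : (K.subgroupOf H).FG) : K.FG := by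
  classical
  obtain ⟨S, hS⟩ := h
  refine ⟨S.image H.subtype, ?_⟩
  rw [Finset.coe_image, ← MonoidHom.map_closure, hS, Subgroup.map_subgroupOf_eq_of_le hK]

theorem finite_hom [hG : Group.FG G] (F : Type v) [Group F] [Finite F] : Finite (G →* F) := by
  obtain ⟨S, hS⟩ := Group.fg_def.1 hG
  refine Finite.of_injective (fun (f : G →* F) (s : S) => f s) ?_
  intro f g h
  refine MonoidHom.eq_of_eqOn_dense hS ?_
  intro x hx
  exact congrFun h ⟨x, hx⟩

theorem exists_char [Group.FG G] (N : Subgroup G) [N.FiniteIndex] :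
    ∃ M : Subgroup G, M.Characteristic ∧ M.FiniteIndex ∧ M ≤ N := by
  have : Finite (G ⧸ N) := inferInstance
  have := finite_hom (G := G) (Equiv.Perm (G ⧸ N))
  refine ⟨⨅ f : G →* Equiv.Perm (G ⧸ N), f.ker, ?_, ?_, ?_⟩
  · rw [Subgroup.characteristic_iff_comap_le]
    intro ϕ x hx
    rw [Subgroup.mem_comap, Subgroup.mem_iInf] at hx
    rw [Subgroup.mem_iInf]
    intro f
    have := hx (f.comp ϕ.symm.toMonoidHom)
    simpa [MonoidHom.mem_ker] using this
  · exact Subgroup.finiteIndex_iInf fun f => inferInstance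
  · refine (iInf_le _ (MulAction.toPermHom G (G ⧸ N))).trans ?_
    rw [← Subgroup.normalCore_eq_ker]
    exact N.normalCore_le

theorem nilp_map {H : Type v} [Group H] (f : G →* H) (K : Subgroup G) (h : Group.IsNilpotent K) : Group.IsNilpotent (K.map f) := by
  rw [Subgroup.isNilpotent_iff_lowerCentralSeries] at h ⊢
  obtain ⟨n, hn⟩ := h
  exact ⟨n, by rw [← Subgroup.map_lowerCentralSeries, hn, Subgroup.map_bot]⟩

theorem nilp_le {K L : Subgroup G} (hKL : K ≤ L) (h : Group.IsNilpotent L) : Group.IsNilpotent K := by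
  rw [Subgroup.isNilpotent_iff_lowerCentralSeries] at h ⊢
  obtain ⟨n, hn⟩ := h
  exact ⟨n, le_bot_iff.1 (hn ▸ Subgroup.lowerCentralSeries_mono n hKL)⟩

theorem index_P (φ : G →* Multiplicative ℤ) (t : G) (ht : φ t = Multiplicative.ofAdd 1) (M : Subgroup φ.ker) [M.FiniteIndex]
    [hN : (M.map φ.ker.subtype).Normal] (m : ℕ) (hm : 0 < m) :
    ((M.map φ.ker.subtype) ⊔ Subgroup.zpowers (t ^ m)).FiniteIndex := by
  set P := (M.map φ.ker.subtype) ⊔ Subgroup.zpowers (t ^ m) with hP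
  have : Finite (φ.ker ⧸ M) := inferInstance
  have : Finite (G ⧸ P) := by
    refine Finite.of_surjective (fun p : (φ.ker ⧸ M) × Fin m => (QuotientGroup.mk ((p.1.out : G) * t ^ (p.2 : ℕ)) : G ⧸ P)) ?_
    intro y
    obtain ⟨h, rfl⟩ := QuotientGroup.mk_surjective y
    set k : ℤ := Multiplicative.toAdd (φ h) with hk
    have hn : h * (t ^ k)⁻¹ ∈ φ.ker := by
      rw [MonoidHom.mem_ker, map_mul, map_inv, map_zpow, ht, mul_inv_eq_one, ← ofAdd_zsmul]
      simp [hk]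
    set q : φ.ker ⧸ M := QuotientGroup.mk ⟨_, hn⟩ with hq
    have h1 : q.out⁻¹ * ⟨_, hn⟩ ∈ M := by
      rw [← QuotientGroup.eq, QuotientGroup.out_eq']
    have h2 : (q.out : G)⁻¹ * (h * (t ^ k)⁻¹) ∈ M.map φ.ker.subtype := ⟨_, h1, rfl⟩
    have hmz : (m : ℤ) ≠ 0 := by exact_mod_cast hm.ne'
    have hr0 := Int.emod_nonneg k hmz
    have hr1 := Int.emod_lt_of_pos k (by exact_mod_cast hm : (0:ℤ) < m)
    refine ⟨(q, ⟨(k % m).toNat, by omega⟩), ?_⟩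
    rw [QuotientGroup.eq]
    simp only
    have e1 : t ^ (k % m).toNat = t ^ (k % m) := by
      rw [← zpow_natCast, Int.toNat_of_nonneg hr0]
    rw [e1]
    set μ := (q.out : G)⁻¹ * (h * (t ^ k)⁻¹) with hμ
    have e2 : t ^ k = t ^ (k % m) * (t ^ m) ^ (k / m) := by
      rw [← zpow_natCast, ← zpow_mul, ← zpow_add, Int.emod_add_mul_ediv]
    have e3 : (q.out * t ^ (k % m) : G)⁻¹ * h = ((t ^ (k % m))⁻¹ * μ * ((t ^ (k % m))⁻¹)⁻¹) * (t ^ m) ^ (k / m) := by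
      have : h = q.out * μ * t ^ k := by rw [hμ]; group
      rw [this, e2]
      simp only [mul_inv_rev, mul_assoc, inv_inv, inv_mul_cancel_left]
    rw [e3]
    refine P.mul_mem ((le_sup_left : _ ≤ P) (hN.conj_mem _ h2 _)) ?_
    exact P.zpow_mem ((le_sup_right : _ ≤ P) (Subgroup.mem_zpowers _)) _
  exact Subgroup.finiteIndex_of_finite_quotient

theorem finite_of_PG0 [Group.FG G] (h : PG G 0) : Finite G := by
  classical
  by_contra hinf
  rw [not_finite_iff_infinite] at hinf
  obtain ⟨S, hinv, h1, hgen⟩ := exists_sym_gen (G := G)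
  obtain ⟨C, hC⟩ := h S S.finite_toSet
  obtain ⟨T, hT⟩ := Infinite.exists_subset_card_eq G (C + 1)
  obtain ⟨n, hn⟩ := finite_subset_pow (A := (S : Set G)) (by exact_mod_cast h1) (by
    ext x; simp only [Set.mem_inv, Finset.mem_coe]
    exact ⟨fun hx => by simpa using hinv _ hx, fun hx => hinv _ hx⟩) hgen _ T.finite_toSet
  have := Set.ncard_le_ncard hn (fpow S.finite_toSet n)
  rw [Set.ncard_coe_finset] at this
  have := hC n
  simp at this
  omega

theorem gromov (d : ℕ) : ∀ (G : Type u) [Group G] [Group.FG G], PG G d →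
    (∃ H : Subgroup G, H.FiniteIndex ∧ Group.IsNilpotent H) ∧ ∀ K : Subgroup G, K.FG := by
  have hfinite : ∀ (G : Type u) [Group G], Finite G →
      (∃ H : Subgroup G, H.FiniteIndex ∧ Group.IsNilpotent H) ∧ ∀ K : Subgroup G, K.FG := by
    intro G _ _
    refine ⟨⟨⊥, inferInstance, inferInstance⟩, fun K => ?_⟩
    rw [← Group.fg_iff_subgroup_fg]
    infer_instance
  induction d with
  | zero => intro G _ _ h; exact hfinite G (finite_of_PG0 h)
  | succ d ih =>
    intro G _ _ hPG
    by_cases hfin : Finite G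
    · exact hfinite G hfin
    rw [not_finite_iff_infinite] at hfin
    obtain ⟨H, hHfi, hHfg, φ, t, ht⟩ := exists_surj hPG
    have hPH : PG H (d + 1) := hPG.subgroup H
    have hNfg : Group.FG φ.ker := (Group.fg_iff_subgroup_fg _).2 (hPH.ker_fg φ t ht)
    obtain ⟨⟨N1, hN1fi, hN1⟩, hNoeth⟩ := ih φ.ker (hPH.ker_growth φ t ht)
    obtain ⟨M, hMc, hMfi, hMN⟩ := exists_char N1
    have hMnil := nilp_le hMN hN1
    have hsub : ∀ K ≤ φ.ker, K.FG := fun K hK => fg_sub_map hK (hNoeth _)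
    have hMle : M.map φ.ker.subtype ≤ φ.ker := Subgroup.map_subtype_le M
    have hnorm : (M.map φ.ker.subtype).Normal := ConjAct.normal_of_characteristic_of_normal
    obtain ⟨m, hm, hPn⟩ := ext_nilp hPH (M.map φ.ker.subtype) (nilp_map _ _ hMnil)
      (fun K hK => hsub K (hK.trans hMle)) t
    have hPfi := index_P φ t ht M m hm
    refine ⟨⟨Subgroup.map H.subtype (M.map φ.ker.subtype ⊔ Subgroup.zpowers (t ^ m)), ⟨?_⟩, nilp_map _ _ hPn⟩, fun K => ?_⟩
    · rw [Subgroup.index_map_subtype]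
      exact mul_ne_zero hPfi.index_ne_zero hHfi.index_ne_zero
    · apply fg_of_fi H
      apply fg_sub_map (H := H) inf_le_right
      exact fg_of_ext φ _ (hsub _ inf_le_right)
end main
end Gro

namespace Gro
open scoped Pointwise
universe v
section compact
variable {G : Type u} [Group G]

def Cset (T : Set G) : ℕ → Set G
  | 0 => T
  | i + 1 => Set.image2 (fun t x => cj t x) T (Cset T i)

theorem Cset_finite {T : Set G} (hT : T.Finite) (i : ℕ) : (Cset T i).Finite := by
  induction i with
  | zero => exact hT
  | succ i ih => exact hT.image2 _ ih

theorem Cset_lcs (T : Set G) (i : ℕ) : Cset T i ⊆ ((⊤ : Subgroup G).lowerCentralSeries i : Set G) := by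
  induction i with
  | zero => intro x _; simp
  | succ i ih =>
    rintro _ ⟨t, _, x, hx, rfl⟩
    have := Subgroup.commutator_mem_commutator (ih hx) (Subgroup.mem_top t)
    have h2 := Subgroup.inv_mem _ this
    rw [commutatorElement_inv, commutatorElement_def] at h2
    exact h2

theorem upper_of_Cset {Q : Type v} [Group Q] (T : Set G) (hT : Subgroup.closure T = ⊤) (φ : G →* Q)
    (hφ : Function.Surjective φ) (c : ℕ) (h : ∀ x ∈ Cset T c, φ x = 1) : Subgroup.upperCentralSeries Q c = ⊤ := by
  have key : ∀ j ≤ c, ∀ x ∈ Cset T (c - j), φ x ∈ Subgroup.upperCentralSeries Q j := by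
    intro j
    induction j with
    | zero => intro _ x hx; rw [h x hx]; exact Subgroup.one_mem _
    | succ j ih =>
      intro hj x hx
      obtain ⟨C, hC⟩ := commut_closure (Subgroup.upperCentralSeries Q j) (φ x)
      have hCt : C = ⊤ := by
        have : C.comap φ = ⊤ := by
          rw [eq_top_iff, ← hT, Subgroup.closure_le]
          intro t ht
          change φ t ∈ C
          rw [hC]
          have := ih (by omega) (cj t x) (by
            rw [show c - j = c - (j + 1) + 1 by omega]
            exact ⟨t, ht, x, hx, rfl⟩)
          simpa [cj] using this
        rw [eq_top_iff]
        intro q _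
        obtain ⟨g, rfl⟩ := hφ q
        have : g ∈ C.comap φ := this ▸ Subgroup.mem_top g
        exact this
      rw [Subgroup.mem_upperCentralSeries_succ_iff]
      intro y
      have h3 := (hC y).1 (hCt ▸ Subgroup.mem_top y)
      have h4 := Subgroup.inv_mem _ h3
      have e : (cj y (φ x))⁻¹ = φ x * y * (φ x)⁻¹ * y⁻¹ := by simp [cj, mul_assoc]
      rw [e] at h4
      exact h4
  have h0 := key c le_rfl
  rw [Nat.sub_self] at h0
  have : (Subgroup.upperCentralSeries Q c).comap φ = ⊤ := by
    rw [eq_top_iff, ← hT, Subgroup.closure_le]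
    exact fun t ht => h0 t ht
  rw [eq_top_iff]
  intro q _
  obtain ⟨g, rfl⟩ := hφ q
  have : g ∈ (Subgroup.upperCentralSeries Q c).comap φ := this ▸ Subgroup.mem_top g
  exact this

theorem lcs_of_upper {Q : Type v} [Group Q] (c : ℕ) (h : Subgroup.upperCentralSeries Q c = ⊤) :
    (⊤ : Subgroup Q).lowerCentralSeries c = ⊥ := by
  have hnil : Group.IsNilpotent Q := ⟨c, h⟩
  rw [Subgroup.lowerCentralSeries_eq_bot_iff_nilpotencyClass_le, ← Subgroup.upperCentralSeries_eq_top_iff_nilpotencyClass_le]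
  exact h

theorem lcs_range {Q : Type v} [Group Q] (T : Set G) (hT : Subgroup.closure T = ⊤) (φ : G →* Q)
    (c : ℕ) (h : ∀ x ∈ Cset T c, φ x = 1) : φ.range.lowerCentralSeries c = ⊥ := by
  have h1 := lcs_of_upper c (upper_of_Cset T hT φ.rangeRestrict φ.rangeRestrict_surjective c
    (fun x hx => Subtype.ext (h x hx)))
  have h2 := Subgroup.map_lowerCentralSeries (S := (⊤ : Subgroup φ.range)) φ.range.subtype c
  rw [h1, Subgroup.map_bot, ← MonoidHom.range_eq_map, Subgroup.range_subtype] at h2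
  exact h2.symm

def ballSet (A : Set G) : Set G := insert 1 (A ∪ A⁻¹)

theorem ballSet_finite {A : Set G} (hA : A.Finite) : (ballSet A).Finite :=
  (hA.union hA.inv).insert 1

theorem ballSet_inv (A : Set G) : (ballSet A)⁻¹ = ballSet A := by
  ext x
  simp only [ballSet, Set.mem_inv, Set.mem_insert_iff, Set.mem_union, inv_eq_one, inv_inv]
  tauto

theorem pow_subset_wordBall (A : Set G) (r : ℕ) : ballSet A ^ r ⊆ wordBall A r := by
  induction r with
  | zero => rw [pow_zero, Set.one_subset]; exact ⟨[], by simp⟩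
  | succ r ih =>
    rw [pow_succ']
    rintro _ ⟨a, ha, b, hb, rfl⟩
    obtain ⟨l, hl, hl2, rfl⟩ := ih hb
    rcases ha with rfl | ha
    · exact ⟨l, by omega, hl2, by simp⟩
    · refine ⟨a :: l, by simpa using hl, ?_, by simp⟩
      intro x hx
      rcases List.mem_cons.1 hx with rfl | hx
      · exact ha
      · exact hl2 x hx

theorem wordBall_subset_pow (A : Set G) (r : ℕ) : wordBall A r ⊆ ballSet A ^ r := by
  rintro _ ⟨l, hl, hl2, rfl⟩
  have h1 : (1 : G) ∈ ballSet A := Set.mem_insert _ _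
  refine Set.pow_subset_pow_right h1 hl ?_
  clear hl
  induction l with
  | nil => simp
  | cons a l ih =>
    rw [List.length_cons, pow_succ', List.prod_cons]
    refine Set.mul_mem_mul (Or.inr (hl2 a (by simp))) (ih fun x hx => hl2 x (by simp [hx]))

theorem exists_param (n : ℕ) (A : Finset G) (hA : A.card ≤ n) :
    ∃ a : Fin n → G, (∀ i, a i ∈ A ∨ a i = 1) ∧ ∀ x ∈ A, ∃ i, a i = x := by
  classical
  refine ⟨fun i => if h : (i : ℕ) < A.card then (A.equivFin.symm ⟨i, h⟩ : G) else 1, ?_, ?_⟩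
  · intro i
    by_cases h : (i : ℕ) < A.card
    · left; simp [h]
    · right; simp [h]
  · intro x hx
    refine ⟨⟨A.equivFin ⟨x, hx⟩, (A.equivFin ⟨x, hx⟩).2.trans_le hA⟩, ?_⟩
    simp

def limKer {F : Type v} [Group F] (U : Filter ℕ) (Γ : ℕ → Type u) [∀ m, Group (Γ m)] (f : ∀ m, F →* Γ m) : Subgroup F where
  carrier := {w | ∀ᶠ m in U, f m w = 1}
  one_mem' := by simp
  mul_mem' := by
    intro a b ha hb
    filter_upwards [ha, hb] with m h1 h2
    rw [map_mul, h1, h2, one_mul]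
  inv_mem' := by
    intro a ha
    filter_upwards [ha] with m h1
    rw [map_inv, h1, inv_one]

theorem limKer_normal {F : Type v} [Group F] (U : Filter ℕ) (Γ : ℕ → Type u) [∀ m, Group (Γ m)] (f : ∀ m, F →* Γ m) :
    (limKer U Γ f).Normal := by
  constructor
  intro a ha g
  change ∀ᶠ m in U, _
  filter_upwards [show ∀ᶠ m in U, f m a = 1 from ha] with m h1
  rw [map_mul, map_mul, h1, mul_one, map_inv, mul_inv_cancel]

theorem mem_limKer {F : Type v} [Group F] (U : Filter ℕ) (Γ : ℕ → Type u) [∀ m, Group (Γ m)] (f : ∀ m, F →* Γ m) (w : F) :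
    w ∈ limKer U Γ f ↔ ∀ᶠ m in U, f m w = 1 := Iff.rfl

theorem compactness (k d n : ℕ) (Γ : ℕ → Type u) [∀ m, Group (Γ m)] (A : ∀ m, Finset (Γ m))
    (hcard : ∀ m, (A m).card ≤ n) (hgen : ∀ m, Subgroup.closure (A m : Set (Γ m)) = ⊤)
    (hball : ∀ m r, 1 ≤ r → r ≤ m → Nat.card (wordBall (A m : Set (Γ m)) r) ≤ k * r ^ d) :
    ∃ m, ∃ K : Subgroup (Γ m), 0 < K.index ∧ K.index ≤ m ∧ K.lowerCentralSeries m = ⊥ := by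
  classical
  choose a ha1 ha2 using fun m => exists_param n (A m) (hcard m)
  let F := FreeGroup (Fin n)
  let f : ∀ m, F →* Γ m := fun m => FreeGroup.lift (a m)
  have hf : ∀ m i, f m (FreeGroup.of i) = a m i := fun m i => FreeGroup.lift_apply_of
  have hsurj : ∀ m, Function.Surjective (f m) := by
    intro m
    rw [← MonoidHom.range_eq_top, eq_top_iff, ← hgen m, Subgroup.closure_le]
    intro x hx
    obtain ⟨i, hi⟩ := ha2 m x hx
    exact ⟨FreeGroup.of i, (hf m i).trans hi⟩
  let U : Ultrafilter ℕ := Filter.hyperfilter ℕ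
  have hlarge : ∀ N, ∀ᶠ m in (U : Filter ℕ), N ≤ m := by
    intro N
    apply Filter.hyperfilter_le_cofinite
    rw [Nat.cofinite_eq_atTop]
    exact Filter.eventually_ge_atTop N
  let R := limKer (U : Filter ℕ) Γ f
  have hR : R.Normal := limKer_normal _ _ _
  let π : F →* F ⧸ R := QuotientGroup.mk' R
  have hπ : Function.Surjective π := QuotientGroup.mk'_surjective R
  let E : Set F := ballSet (Set.range FreeGroup.of)
  have hEfin : E.Finite := ballSet_finite (Set.finite_range _)
  have hEgen : Subgroup.closure E = ⊤ := by
    rw [eq_top_iff, ← FreeGroup.closure_range_of]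
    exact Subgroup.closure_mono (fun x hx => Or.inr (Or.inl hx))
  have hfE : ∀ m, f m '' E ⊆ ballSet (A m : Set (Γ m)) := by
    intro m
    rintro _ ⟨x, hx, rfl⟩
    rcases hx with rfl | ⟨i, rfl⟩ | ⟨i, hi⟩
    · rw [map_one]; exact Set.mem_insert _ _
    · rw [hf]
      rcases ha1 m i with h | h
      · exact Or.inr (Or.inl h)
      · exact Or.inl h
    · have hx : x = (FreeGroup.of i)⁻¹ := by rw [hi, inv_inv]
      rw [hx, map_inv, hf]
      rcases ha1 m i with h | h
      · exact Or.inr (Or.inr (by simpa using h))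
      · exact Or.inl (by rw [h, inv_one])
  have hPG : PG (F ⧸ R) d := by
    refine PG.of_generating (A := π '' E) (C := k + 1) (hEfin.image _) ⟨1, Set.mem_insert _ _, map_one _⟩ ?_ ?_ ?_
    · rw [← Set.image_inv, ballSet_inv]
    · rw [← MonoidHom.map_closure, hEgen, ← MonoidHom.range_eq_map, MonoidHom.range_eq_top.2 hπ]
    · intro r
      rcases Nat.eq_zero_or_pos r with rfl | hr
      · rw [pow_zero, ← Set.singleton_one, Set.ncard_singleton]; simp
      rw [← Set.image_pow]
      obtain ⟨W, hW1, hW2⟩ := Set.SurjOn.exists_bijOn_subset (Set.surjOn_image π (E ^ r))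
      have hWfin : W.Finite := (fpow hEfin r).subset hW1
      have hinj : ∀ᶠ m in (U : Filter ℕ), ∀ w ∈ W, ∀ w' ∈ W, w ≠ w' → f m w ≠ f m w' := by
        rw [Filter.eventually_all_finite hWfin]
        intro w hw
        rw [Filter.eventually_all_finite hWfin]
        intro w' hw'
        by_cases hne : w = w'
        · simp [hne]
        have h1 : w⁻¹ * w' ∉ R := by
          intro h
          exact hne (hW2.injOn hw hw' (QuotientGroup.eq.2 h))
        have h2 : ∀ᶠ m in (U : Filter ℕ), ¬ f m (w⁻¹ * w') = 1 := Ultrafilter.eventually_not.2 h1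
        filter_upwards [h2] with m hm _ h
        apply hm
        rw [map_mul, map_inv, h, inv_mul_cancel]
      obtain ⟨m, hm1, hm2⟩ := (hinj.and (hlarge r)).exists
      have hcardW : (π '' (E ^ r)).ncard = W.ncard := by
        rw [← hW2.image_eq, hW2.injOn.ncard_image]
      have hcardW2 : (f m '' W).ncard = W.ncard := by
        apply Set.InjOn.ncard_image
        intro w hw w' hw' h
        by_contra hne
        exact hm1 w hw w' hw' hne h
      have hsub : f m '' W ⊆ wordBall (A m : Set (Γ m)) r := by
        refine (Set.image_mono hW1).trans ?_
        rw [Set.image_pow]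
        exact (Set.pow_subset_pow_left (hfE m)).trans (pow_subset_wordBall _ _)
      have hfinB : (wordBall (A m : Set (Γ m)) r).Finite :=
        (fpow (ballSet_finite (A m).finite_toSet) r).subset (wordBall_subset_pow _ _)
      have h3 := Set.ncard_le_ncard hsub hfinB
      have h4 := hball m r hr hm2
      rw [Nat.card_coe_set_eq] at h4
      rw [hcardW, ← hcardW2]
      refine (h3.trans h4).trans (Nat.mul_le_mul (by omega) (Nat.pow_le_pow_left (by omega) d))
  have hFG : Group.FG (F ⧸ R) := inferInstance
  obtain ⟨⟨H', hH'fi, hH'n⟩, -⟩ := gromov d (F ⧸ R) hPG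
  obtain ⟨c, hc⟩ := (Subgroup.isNilpotent_iff_lowerCentralSeries H').1 hH'n
  let H := H'.comap π
  have hHfi : H.FiniteIndex := ⟨by
    rw [Subgroup.index_comap_of_surjective _ hπ]; exact hH'fi.index_ne_zero⟩
  have hHfg : Group.FG H := inferInstance
  obtain ⟨T, hT⟩ := Group.fg_def.1 hHfg
  have hTR : ∀ x ∈ Cset (T : Set H) c, (x : F) ∈ R := by
    intro x hx
    have h1 := Cset_lcs _ _ hx
    have h2 : (π.comp H.subtype) x ∈ ((⊤ : Subgroup H).lowerCentralSeries c).map (π.comp H.subtype) := ⟨x, h1, rfl⟩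
    rw [Subgroup.map_lowerCentralSeries] at h2
    have h3 : (⊤ : Subgroup H).map (π.comp H.subtype) ≤ H' := by
      rintro _ ⟨y, _, rfl⟩
      exact y.2
    have h4 : _ ∈ H'.lowerCentralSeries c := Subgroup.lowerCentralSeries_mono c h3 h2
    rw [hc, Subgroup.mem_bot] at h4
    exact (QuotientGroup.eq_one_iff _).1 h4
  have hev : ∀ᶠ m in (U : Filter ℕ), ∀ x ∈ Cset (T : Set H) c, f m (x : F) = 1 := by
    rw [Filter.eventually_all_finite (Cset_finite T.finite_toSet c)]
    exact hTR
  obtain ⟨m, hm1, hm2⟩ := (hev.and (hlarge (H.index + c))).exists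
  have hdvd : (H.map (f m)).index ∣ H.index := Subgroup.index_map_dvd _ (hsurj m)
  have hpos : 0 < H.index := Nat.pos_of_ne_zero hHfi.index_ne_zero
  refine ⟨m, H.map (f m), Nat.pos_of_dvd_of_pos hdvd hpos, (Nat.le_of_dvd hpos hdvd).trans (by omega), ?_⟩
  have h5 := lcs_range (T : Set H) hT ((f m).comp H.subtype) c hm1
  rw [MonoidHom.range_comp, Subgroup.range_subtype] at h5
  exact le_bot_iff.1 (h5 ▸ Subgroup.lowerCentralSeries_antitone _ (by omega : c ≤ m))

end compact
end Gro

/-- **Gromov's theorem, bounded version.** For all positive integers `k, d, n` there exists a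
positive integer `m` such that every group generated by at most `n` elements, in which the
ball of radius `r` has at most `k·r^d` elements for every `r = 1, …, m`, has a subgroup of
index at most `m` that is nilpotent of class at most `m`. -/
theorem gromov_polynomial_growth_bounded (k d n : ℕ) (hk : 0 < k) (hd : 0 < d) (hn : 0 < n) :
    ∃ m : ℕ, 0 < m ∧
      ∀ (G : Type u) (_ : Group G) (A : Finset G),
        A.card ≤ n → Subgroup.closure (A : Set G) = ⊤ →
        (∀ r : ℕ, 1 ≤ r → r ≤ m → Nat.card (wordBall (A : Set G) r) ≤ k * r ^ d) →
        ∃ H : Subgroup G, 0 < H.index ∧ H.index ≤ m ∧ lowerCentralSeries H m = ⊥ := by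
  by_contra hcon
  push Not at hcon
  choose Γ hΓ A hcard hgen hball hno using fun m : ℕ => hcon (m + 1) (Nat.succ_pos m)
  obtain ⟨m, K, h1, h2, h3⟩ := Gro.compactness k d n Γ A hcard hgen
    (fun m r hr hrm => hball m r hr (by omega))
  exact hno m K h1 (by omega) (le_bot_iff.1 (h3 ▸ Subgroup.lowerCentralSeries_antitone _ (Nat.le_succ m)))
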